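/- (Lochak–Marco) Define 𝓕_* = Φ^{½(I₁²+I₂²) + cos(2πθ₁)} : 𝔸² → 𝔸². For σ > 0, let q_σ be the smallest positive integer with ⌊ln(q_σ)/(4πσ) + 1⌋ = 1, and for q ≥ q_σ set ν(q, σ) = 2⌊ln(q)/(4πσ) + 1⌋ (an even integer ≥ 2) and f_q(θ₁, θ₂) = (sin πθ₁)^{ν(q,σ)} · (−π^{−1}(2 + sin 2π(θ₂ + 6^{−1}))). Define 𝓕_q = Φ^{q^{−1}f_q} ∘ 𝓕_* : 𝔸² → 𝔸², and for k ∈ ℤ let ξ_{q,k} ∈ 𝔸² be the point with coordinates θ₁ = 1/2, I₁ = 2, θ₂ = 0, I₂ = q^{−1}(k+1). Then there exist a width σ > 0, an integer q₀ and a constant 0 < d < 1 such that for every q ≥ q₀, the diffeomorphism 𝓕_q has a point ζ_q ∈ 𝔸² satisfying |𝓕_q^{kq}(ζ_q) − ξ_{q,k}| ≤ d^{ν(q,σ)} for every k ∈ ℤ. In particular the orbit of ζ_q is wandering, and |𝓕_q^{3q²}(ζ_q) − ζ_q| ≥ 3 − 2d^{ν(q,σ)} ≥ 1. -/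

import Mathlib

open scoped BigOperators
open Real

noncomputable section

/-- The circle `𝕋 = ℝ/ℤ`. -/
abbrev T1 := AddCircle (1 : ℝ)

instance : Fact ((0 : ℝ) < 1) := ⟨one_pos⟩

/-- The annulus `𝔸^N = 𝕋^N × ℝ^N` with angle-action coordinates. -/
abbrev Ann (N : ℕ) := (Fin N → T1) × (Fin N → ℝ)

/-- Projection of the universal cover `ℝ^N × ℝ^N` onto the annulus `𝔸^N`. -/
noncomputable def projAnn (N : ℕ) : ((Fin N → ℝ) × (Fin N → ℝ)) → Ann N :=
  fun x => (fun i => (x.1 i : T1), x.2)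

/-- `Φ` is the complete flow of the Hamiltonian `H` on the annulus `𝔸^N`: it is a
one-parameter family of maps whose orbits lift to curves on the universal cover solving
Hamilton's equations `θ' = ∂H/∂I`, `I' = −∂H/∂θ`.  `Φ 1` is the time-one map `Φ^H`. -/
def IsHamFlow (N : ℕ) (H : Ann N → ℝ) (Φ : ℝ → Ann N → Ann N) : Prop :=
  (∀ x, Φ 0 x = x) ∧ (∀ s t : ℝ, ∀ x, Φ (s + t) x = Φ s (Φ t x)) ∧
    ∀ x : Ann N, ∃ c : ℝ → (Fin N → ℝ) × (Fin N → ℝ),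
      (∀ t, projAnn N (c t) = Φ t x) ∧
      ∀ t : ℝ, ∀ i : Fin N,
        HasDerivAt (fun s => (c s).1 i)
          (fderiv ℝ (H ∘ projAnn N) (c t) ((0 : Fin N → ℝ), Pi.single i 1)) t ∧
        HasDerivAt (fun s => (c s).2 i)
          (-(fderiv ℝ (H ∘ projAnn N) (c t) (Pi.single i 1, (0 : Fin N → ℝ)))) t

/-- The canonical representative in `[0,1)` of a point of the circle. -/
noncomputable def rep (θ : T1) : ℝ := ((AddCircle.equivIco 1 0) θ).1

/-- The function `θ ↦ cos (2πθ)` on the circle. -/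
noncomputable def cosC (θ : T1) : ℝ := Real.cos (2 * Real.pi * rep θ)

/-- The value `sin(πθ)` computed from the canonical representative; its even powers are
well-defined `1`-periodic functions of `θ`. -/
noncomputable def sinHalf (θ : T1) : ℝ := Real.sin (Real.pi * rep θ)

/-- The function `θ ↦ sin (2πθ)` on the circle. -/
noncomputable def sin2C (θ : T1) : ℝ := Real.sin (2 * Real.pi * rep θ)

/-- The a priori unstable Hamiltonian `½(I₁² + I₂²) + cos(2πθ₁)` on `𝔸²`. -/
noncomputable def Hstar : Ann 2 → ℝ :=
  fun z => (1 / 2) * ((z.2 0) ^ 2 + (z.2 1) ^ 2) + cosC (z.1 0)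

/-- The even exponent `ν(q, σ) = 2⌊ln(q)/(4πσ) + 1⌋`. -/
noncomputable def nuExp (σ : ℝ) (q : ℕ) : ℕ :=
  2 * ⌊Real.log q / (4 * Real.pi * σ) + 1⌋₊

/-- The coupling function
`f_q(θ₁, θ₂) = (sin πθ₁)^{ν(q,σ)} · (−π⁻¹(2 + sin 2π(θ₂ + 6⁻¹)))` on `𝔸²`. -/
noncomputable def fqFun (σ : ℝ) (q : ℕ) : Ann 2 → ℝ :=
  fun z => (sinHalf (z.1 0)) ^ (nuExp σ q) *
    (-(Real.pi)⁻¹ * (2 + sin2C (z.1 1 + (((6 : ℝ)⁻¹ : ℝ) : T1))))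

/-- The wandering reference points `ξ_{q,k} = (θ₁ = 1/2, I₁ = 2, θ₂ = 0, I₂ = (k+1)/q)`. -/
noncomputable def xiPt (q : ℕ) (k : ℤ) : Ann 2 :=
  (fun i => if i = 0 then (((1 : ℝ) / 2 : ℝ) : T1) else ((0 : ℝ) : T1),
   fun i => if i = 0 then (2 : ℝ) else (q : ℝ)⁻¹ * ((k : ℝ) + 1))

/-!
Lift everything to the universal cover. In each cycle of `q` iterates the pseudo-orbit follows one
turn of the pendulum separatrix, with `θ₁ = 1/2`, `I₁ = 2`, `θ₂ = 0` and `I₂ = (k + 1) / q` just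
after the kick at the middle of cycle `k`. At all other integer times `|sin πθ₁| ≤ 1/8`, so the
factor `(sin πθ₁)^ν` makes the coupling negligible. At the middle of the cycle the phase `1/6` makes
the kick shift `I₂` by exactly `1/q`, after which `q` steps turn `θ₂` by `k + 1`, an integer. The
pseudo-orbit is thus an orbit up to the neglected kicks and the jump between consecutive turns of
the separatrix, which is exponentially small in `q`.

The linearised dynamics along the pseudo-orbit splits into a pendulum block, where the kick shears
apart the solutions of the variational equation which decay forward and backward, and a rotator
block, where one cycle has multipliers `μ, μ⁻¹` with `|μ| ≤ 1/4`. Weighting the stable and unstable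
vectors linearly along the cycle spreads this hyperbolicity over all its steps: in frames of size
polynomial in `q`, every step is hyperbolic with rate `1 - 1 / (2 * q)`. The width `σ` is chosen so
that the errors, bounded by `2 ^ (-ν) ≤ q ^ (-20)` up to small powers of `q`, are dominated by these
rates, and a contraction argument yields a true orbit within `q⁻¹ / 2 ≤ d ^ ν` of the pseudo-orbit.
-/

namespace LochakMarco

/-! ### Shadowing along a hyperbolic splitting -/

section Shadowing

variable {S U X : Type*} [NormedAddCommGroup S] [NormedSpace ℝ S]
  [NormedAddCommGroup U] [NormedSpace ℝ U] [NormedAddCommGroup X] [NormedSpace ℝ X]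

/-- The implicit form of the recursion `z (n + 1) = (A n × B n) (z n) + N n (z n)`, where `C n` is a
right inverse of `B n`: the stable component is propagated forward and the unstable one backward in
time, so both are contracted. -/
def implicitStep (A : ℤ → S →L[ℝ] S) (C : ℤ → U →L[ℝ] U) (N : ℤ → S × U → S × U)
    (z : ℤ → S × U) (n : ℤ) : S × U :=
  (A (n - 1) (z (n - 1)).1 + (N (n - 1) (z (n - 1))).1, C n ((z (n + 1)).2 - (N n (z n)).2))

variable {A : ℤ → S →L[ℝ] S} {B C : ℤ → U →L[ℝ] U} {N : ℤ → S × U → S × U} {θ ε r δ : ℝ}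

lemma implicitStep_fixed (hBC : ∀ n u, B n (C n u) = u) {z : ℤ → S × U}
    (hz : implicitStep A C N z = z) (n : ℤ) :
    z (n + 1) = (A n).prodMap (B n) (z n) + N n (z n) := by
  have hs := congrArg Prod.fst (congrFun hz (n + 1))
  have hu := congrArg Prod.snd (congrFun hz n)
  simp only [implicitStep, add_sub_cancel_right] at hs hu
  refine Prod.ext hs.symm ?_
  change (z (n + 1)).2 = B n (z n).2 + (N n (z n)).2
  rw [← hu, hBC, sub_add_cancel]

lemma norm_implicitStep_sub_le (hA : ∀ n, ‖A n‖ ≤ θ) (hC : ∀ n, ‖C n‖ ≤ θ) (hθ : θ ≤ 1)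
    (hε : 0 ≤ ε) (hN : ∀ n z z', ‖z‖ ≤ r → ‖z'‖ ≤ r → ‖N n z - N n z'‖ ≤ ε * ‖z - z'‖)
    {z z' : ℤ → S × U} (hz : ∀ n, ‖z n‖ ≤ r) (hz' : ∀ n, ‖z' n‖ ≤ r) {D : ℝ}
    (hD : ∀ n, ‖z n - z' n‖ ≤ D) (n : ℤ) :
    ‖implicitStep A C N z n - implicitStep A C N z' n‖ ≤ (θ + ε) * D := by
  have hD0 : 0 ≤ D := (norm_nonneg _).trans (hD 0)
  have hND (n : ℤ) : ‖N n (z n) - N n (z' n)‖ ≤ ε * D :=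
    (hN n _ _ (hz n) (hz' n)).trans (by gcongr; exact hD n)
  refine max_le ?_ ?_
  · calc ‖A (n - 1) (z (n - 1)).1 + (N (n - 1) (z (n - 1))).1
          - (A (n - 1) (z' (n - 1)).1 + (N (n - 1) (z' (n - 1))).1)‖
        = ‖A (n - 1) (z (n - 1) - z' (n - 1)).1
            + (N (n - 1) (z (n - 1)) - N (n - 1) (z' (n - 1))).1‖ := by
          rw [Prod.fst_sub, Prod.fst_sub, map_sub]; congr 1; abel
      _ ≤ θ * D + ε * D := (norm_add_le _ _).trans (add_le_add
          ((A _).le_of_opNorm_le_of_le (hA _) ((norm_fst_le _).trans (hD _)))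
          ((norm_fst_le _).trans (hND _)))
      _ = (θ + ε) * D := by ring
  · calc ‖C n ((z (n + 1)).2 - (N n (z n)).2) - C n ((z' (n + 1)).2 - (N n (z' n)).2)‖
        = ‖C n ((z (n + 1) - z' (n + 1)).2 - (N n (z n) - N n (z' n)).2)‖ := by
          rw [← map_sub, Prod.snd_sub, Prod.snd_sub]; congr 2; abel
      _ ≤ θ * (D + ε * D) := (C n).le_of_opNorm_le_of_le (hC n) <| (norm_sub_le _ _).trans
          (add_le_add ((norm_snd_le _).trans (hD _)) ((norm_snd_le _).trans (hND _)))
      _ ≤ (θ + ε) * D := by nlinarith [mul_nonneg hε hD0]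

lemma norm_implicitStep_zero_le (hC : ∀ n, ‖C n‖ ≤ θ) (hθ : θ ≤ 1) (hN0 : ∀ n, ‖N n 0‖ ≤ δ)
    (n : ℤ) : ‖implicitStep A C N 0 n‖ ≤ δ := by
  refine max_le ?_ ?_
  · simpa [implicitStep] using (norm_fst_le _).trans (hN0 (n - 1))
  · have hle := (C n).le_of_opNorm_le_of_le ((hC n).trans hθ) ((norm_snd_le _).trans (hN0 n))
    simpa [implicitStep] using hle

lemma norm_implicitStep_le (hA : ∀ n, ‖A n‖ ≤ θ) (hC : ∀ n, ‖C n‖ ≤ θ) (hθ : θ ≤ 1)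
    (hε : 0 ≤ ε) (hr : 0 ≤ r)
    (hN : ∀ n z z', ‖z‖ ≤ r → ‖z'‖ ≤ r → ‖N n z - N n z'‖ ≤ ε * ‖z - z'‖)
    (hN0 : ∀ n, ‖N n 0‖ ≤ δ) (hδr : δ ≤ (1 - θ - ε) * r)
    {z : ℤ → S × U} (hz : ∀ n, ‖z n‖ ≤ r) (n : ℤ) : ‖implicitStep A C N z n‖ ≤ r := by
  have hlip := norm_implicitStep_sub_le hA hC hθ hε hN hz (z' := 0) (by simpa using hr)
    (D := r) (by simpa using hz) n
  calc ‖implicitStep A C N z n‖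
      ≤ ‖implicitStep A C N z n - implicitStep A C N 0 n‖ + ‖implicitStep A C N 0 n‖ := by
        simpa using norm_add_le (implicitStep A C N z n - implicitStep A C N 0 n)
          (implicitStep A C N 0 n)
    _ ≤ (θ + ε) * r + δ := add_le_add hlip (norm_implicitStep_zero_le hC hθ hN0 n)
    _ ≤ r := by linarith

variable [CompleteSpace S] [CompleteSpace U]

theorem exists_implicitStep_fixed (hA : ∀ n, ‖A n‖ ≤ θ) (hC : ∀ n, ‖C n‖ ≤ θ) (hε : 0 ≤ ε)
    (hr : 0 ≤ r) (hN : ∀ n z z', ‖z‖ ≤ r → ‖z'‖ ≤ r → ‖N n z - N n z'‖ ≤ ε * ‖z - z'‖)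
    (hN0 : ∀ n, ‖N n 0‖ ≤ δ) (hθε : θ + ε < 1) (hδr : δ ≤ (1 - θ - ε) * r) :
    ∃ z : ℤ → S × U, (∀ n, ‖z n‖ ≤ r) ∧ implicitStep A C N z = z := by
  have hθ0 : 0 ≤ θ := (norm_nonneg _).trans (hA 0)
  have hθ : θ ≤ 1 := by linarith
  let Ball := Metric.closedBall (0 : BoundedContinuousFunction ℤ (S × U)) r
  have hBall (f : Ball) (n : ℤ) : ‖f.1 n‖ ≤ r :=
    (f.1.norm_coe_le_norm n).trans (mem_closedBall_zero_iff.1 f.2)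
  have hstep (f : Ball) := norm_implicitStep_le hA hC hθ hε hr hN hN0 hδr (hBall f)
  have : CompleteSpace Ball := Metric.isClosed_closedBall.completeSpace_coe
  have : Nonempty Ball := ⟨⟨0, by simpa [Ball] using hr⟩⟩
  let T : Ball → Ball := fun f =>
    ⟨BoundedContinuousFunction.ofNormedAddCommGroupDiscrete (implicitStep A C N f.1) r (hstep f),
      mem_closedBall_zero_iff.2 ((BoundedContinuousFunction.norm_le hr).2 (hstep f))⟩
  have hT : ContractingWith ⟨θ + ε, by positivity⟩ T := by
    refine ⟨by exact_mod_cast hθε, LipschitzWith.of_dist_le_mul fun f g => ?_⟩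
    change dist (T f).1 (T g).1 ≤ (θ + ε) * dist f.1 g.1
    refine (BoundedContinuousFunction.dist_le (by positivity)).2 fun n => ?_
    rw [dist_eq_norm]
    refine norm_implicitStep_sub_le hA hC hθ hε hN (hBall f) (hBall g) (fun n => ?_) n
    rw [← dist_eq_norm]
    exact BoundedContinuousFunction.dist_coe_le_dist n
  exact ⟨(hT.fixedPoint T).1, hBall _,
    congrArg (fun f : Ball => (f.1 : ℤ → S × U)) hT.fixedPoint_isFixedPt⟩

theorem exists_shadowing_frames {F : ℤ → X → X} {b : ℤ → X} {M : ℤ → (S × U) ≃L[ℝ] X} {m η : ℝ}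
    (hA : ∀ n, ‖A n‖ ≤ θ) (hBC : ∀ n u, B n (C n u) = u) (hC : ∀ n, ‖C n‖ ≤ θ)
    (hM : ∀ n v, ‖(M n).symm v‖ ≤ m * ‖v‖) (hm : 0 ≤ m) (hη : 0 ≤ η) (hr : 0 ≤ r)
    (hF : ∀ n z z', ‖z‖ ≤ r → ‖z'‖ ≤ r → ‖F n (b n + M n z) - F n (b n + M n z')
      - M (n + 1) ((A n).prodMap (B n) (z - z'))‖ ≤ η * ‖z - z'‖)
    (hb : ∀ n, ‖F n (b n) - b (n + 1)‖ ≤ δ)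
    (hθη : θ + m * η < 1) (hδr : m * δ ≤ (1 - θ - m * η) * r) :
    ∃ z : ℤ → S × U, (∀ n, ‖z n‖ ≤ r) ∧
      ∀ n, F n (b n + M n (z n)) = b (n + 1) + M (n + 1) (z (n + 1)) := by
  let N : ℤ → S × U → S × U := fun n z =>
    (M (n + 1)).symm (F n (b n + M n z) - b (n + 1)) - (A n).prodMap (B n) z
  have hN (n : ℤ) (z z' : S × U) (hz : ‖z‖ ≤ r) (hz' : ‖z'‖ ≤ r) :
      ‖N n z - N n z'‖ ≤ m * η * ‖z - z'‖ := by
    have hsub : N n z - N n z' = (M (n + 1)).symm (F n (b n + M n z) - F n (b n + M n z')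
        - M (n + 1) ((A n).prodMap (B n) (z - z'))) := by
      simp only [N, map_sub, ContinuousLinearEquiv.symm_apply_apply]
      abel
    rw [hsub, mul_assoc]
    exact (hM _ _).trans (by gcongr; exact hF n z z' hz hz')
  have hN0 (n : ℤ) : ‖N n 0‖ ≤ m * δ := by
    simp only [N, map_zero, add_zero, sub_zero]
    exact (hM _ _).trans (by gcongr; exact hb n)
  obtain ⟨z, hz, hfix⟩ :=
    exists_implicitStep_fixed hA hC (mul_nonneg hm hη) hr hN hN0 hθη hδr
  refine ⟨z, hz, fun n => ?_⟩
  rw [implicitStep_fixed hBC hfix n]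
  simp [N]

theorem exists_shadowing {F : ℤ → X → X} {b : ℤ → X} {L : ℤ → X →L[ℝ] X}
    {M : ℤ → (S × U) ≃L[ℝ] X} {m K η₁ η₂ : ℝ}
    (hA : ∀ n, ‖A n‖ ≤ θ) (hBC : ∀ n u, B n (C n u) = u) (hC : ∀ n, ‖C n‖ ≤ θ)
    (hMsymm : ∀ n v, ‖(M n).symm v‖ ≤ m * ‖v‖) (hM : ∀ n z, ‖M n z‖ ≤ K * ‖z‖)
    (hm : 0 ≤ m) (hK : 0 ≤ K) (hη₁ : 0 ≤ η₁) (hη₂ : 0 ≤ η₂) (hr : 0 ≤ r)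
    (hF : ∀ n v v', ‖v‖ ≤ K * r → ‖v'‖ ≤ K * r →
      ‖F n (b n + v) - F n (b n + v') - L n (v - v')‖ ≤ η₁ * ‖v - v'‖)
    (hL : ∀ n z, ‖L n (M n z) - M (n + 1) ((A n).prodMap (B n) z)‖ ≤ η₂ * ‖z‖)
    (hb : ∀ n, ‖F n (b n) - b (n + 1)‖ ≤ δ)
    (hθη : θ + m * (η₁ * K + η₂) < 1) (hδr : m * δ ≤ (1 - θ - m * (η₁ * K + η₂)) * r) :
    ∃ z : ℤ → S × U, (∀ n, ‖z n‖ ≤ r) ∧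
      ∀ n, F n (b n + M n (z n)) = b (n + 1) + M (n + 1) (z (n + 1)) := by
  refine exists_shadowing_frames hA hBC hC hMsymm hm (by positivity) hr
    (fun n z z' hz hz' => ?_) hb hθη hδr
  have hMr (z : S × U) (hz : ‖z‖ ≤ r) : ‖M n z‖ ≤ K * r := (hM n z).trans (by gcongr)
  have hnonlin := hF n _ _ (hMr z hz) (hMr z' hz')
  have hlin := hL n (z - z')
  rw [← map_sub] at hnonlin
  calc _ ≤ _ := norm_sub_le_norm_sub_add_norm_sub _ (L n (M n (z - z'))) _
    _ ≤ η₁ * (K * ‖z - z'‖) + η₂ * ‖z - z'‖ :=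
      add_le_add (hnonlin.trans (by gcongr; exact hM n _)) hlin
    _ = (η₁ * K + η₂) * ‖z - z'‖ := by ring

end Shadowing

/-! ### Global flows of Lipschitz vector fields -/

section Flow

open scoped Manifold NNReal

variable {E F : Type*} [NormedAddCommGroup E] [NormedSpace ℝ E] [NormedAddCommGroup F]
  [NormedSpace ℝ F]

lemma norm_sub_sub_le_of_lipschitz_fderiv {f : E → F} {f' : E → E →L[ℝ] F} {Λ : ℝ≥0} {ρ : ℝ}
    (hf : ∀ x, HasFDerivAt f (f' x) x) (hΛ : LipschitzWith Λ f') {x₀ x y : E}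
    (hx : ‖x - x₀‖ ≤ ρ) (hy : ‖y - x₀‖ ≤ ρ) :
    ‖f x - f y - f' x₀ (x - y)‖ ≤ Λ * ρ * ‖x - y‖ := by
  refine (convex_closedBall x₀ ρ).norm_image_sub_le_of_norm_hasFDerivWithin_le'
    (fun z _ => (hf z).hasFDerivWithinAt) (fun z hz => ?_)
    (mem_closedBall_iff_norm.2 hy) (mem_closedBall_iff_norm.2 hx)
  exact (hΛ.norm_sub_le z x₀).trans (by gcongr; exact mem_closedBall_iff_norm.1 hz)

lemma gronwallBound_zero_mul (c K ε x : ℝ) :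
    gronwallBound 0 K (c * ε) x = c * gronwallBound 0 K ε x := by
  unfold gronwallBound
  split_ifs <;> ring

/-- `φ` is the complete flow of the autonomous vector field `v`. -/
structure IsGlobalFlow (v : E → E) (φ : ℝ → E → E) : Prop where
  map_zero : ∀ x, φ 0 x = x
  hasDerivAt : ∀ x t, HasDerivAt (fun t => φ t x) (v (φ t x)) t

variable {v : E → E} {K : ℝ≥0} {φ : ℝ → E → E}

/-- On the ball of radius `‖v x‖ + 1` about `x` the field is bounded by `(K + 1) (‖v x‖ + 1)`,
so the existence time `1 / (K + 1)` does not depend on `x`. -/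
lemma exists_integralCurve_uniform_time [CompleteSpace E] (hK : LipschitzWith K v) (x : E) :
    ∃ γ : ℝ → E, γ 0 = x ∧
      ∀ t ∈ Set.Ioo (-((K : ℝ) + 1)⁻¹) ((K : ℝ) + 1)⁻¹, HasDerivAt γ (v (γ t)) t := by
  set τ : ℝ := ((K : ℝ) + 1)⁻¹ with hτ
  have hτ0 : 0 < τ := by positivity
  have hPL : IsPicardLindelof (fun _ => v) (tmin := -τ) (tmax := τ) ⟨0, by simp [hτ0.le]⟩ x
      (‖v x‖₊ + 1) 0 ((K + 1) * (‖v x‖₊ + 1)) K := by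
    refine IsPicardLindelof.of_time_independent (fun y hy => ?_) hK.lipschitzOnWith ?_
    · have hyx : ‖y - x‖ ≤ ‖v x‖ + 1 := mem_closedBall_iff_norm.1 hy
      calc ‖v y‖ ≤ ‖v y - v x‖ + ‖v x‖ := by simpa using norm_add_le (v y - v x) (v x)
        _ ≤ K * (‖v x‖ + 1) + ‖v x‖ := by
          gcongr
          exact (hK.norm_sub_le y x).trans (by gcongr)
        _ ≤ (K + 1) * (‖v x‖ + 1) := by linarith
    · push_cast
      rw [sub_zero, zero_sub, neg_neg, max_self, sub_zero, mul_right_comm, hτ,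
        mul_inv_cancel₀ (by positivity), one_mul]
  obtain ⟨γ, hγ0, hγ⟩ := hPL.exists_eq_forall_mem_Icc_hasDerivWithinAt₀
  exact ⟨γ, hγ0, fun t ht =>
    (hγ t (Set.Ioo_subset_Icc_self ht)).hasDerivAt (Icc_mem_nhds ht.1 ht.2)⟩

theorem exists_isGlobalFlow [CompleteSpace E] (hv : ContDiff ℝ 1 v) (hK : LipschitzWith K v) :
    ∃ φ, IsGlobalFlow v φ := by
  have hcurve (x : E) : ∃ γ : ℝ → E, γ 0 = x ∧ ∀ t, HasDerivAt γ (v (γ t)) t := by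
    obtain ⟨γ, hγ0, hγ⟩ := exists_isMIntegralCurve_of_isMIntegralCurveOn (I := 𝓘(ℝ, E)) (v := v)
      (contMDiff_vectorSpace_iff_contDiff.2 hv) (ε := ((K : ℝ) + 1)⁻¹) (by positivity)
      (fun x => by
        obtain ⟨γ, hγ0, hγ⟩ := exists_integralCurve_uniform_time hK x
        exact ⟨γ, hγ0, fun t ht => (hγ t ht).hasFDerivAt.hasMFDerivAt.hasMFDerivWithinAt⟩) x
    exact ⟨γ, hγ0, fun t => (hγ t).hasFDerivAt⟩
  choose γ hγ0 hγ using hcurve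
  exact ⟨fun t x => γ x t, hγ0, hγ⟩

namespace IsGlobalFlow

lemma eq_flow (hφ : IsGlobalFlow v φ) (hK : LipschitzWith K v) {γ : ℝ → E}
    (hγ : ∀ t, HasDerivAt γ (v (γ t)) t) (t : ℝ) : γ t = φ t (γ 0) :=
  congrFun (ODE_solution_unique_univ (v := fun _ => v) (s := fun _ => Set.univ) (t₀ := 0)
    (fun _ => hK.lipschitzOnWith) (fun t => ⟨hγ t, trivial⟩)
    (fun t => ⟨hφ.hasDerivAt (γ 0) t, trivial⟩) (hφ.map_zero _).symm) t

lemma map_add (hφ : IsGlobalFlow v φ) (hK : LipschitzWith K v) (s t : ℝ) (x : E) :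
    φ (s + t) x = φ s (φ t x) := by
  simpa using hφ.eq_flow hK (fun u => (hφ.hasDerivAt x (u + t)).comp_add_const u t) s

lemma map_add_of_periodic (hφ : IsGlobalFlow v φ) (hK : LipschitzWith K v) {a : E}
    (ha : Function.Periodic v a) (t : ℝ) (x : E) : φ t (x + a) = φ t x + a := by
  have hshift (u : ℝ) : HasDerivAt (fun u => φ u x + a) (v (φ u x + a)) u := by
    rw [ha]
    exact (hφ.hasDerivAt x u).add_const a
  simpa [hφ.map_zero] using (hφ.eq_flow hK hshift t).symm

lemma norm_sub_le (hφ : IsGlobalFlow v φ) (hK : LipschitzWith K v) (x y : E) {t T : ℝ}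
    (ht : t ∈ Set.Icc 0 T) : ‖φ t x - φ t y‖ ≤ Real.exp (K * T) * ‖x - y‖ := by
  have hcont (x : E) : ContinuousOn (fun t => φ t x) (Set.Icc 0 T) := fun t _ =>
    (hφ.hasDerivAt x t).continuousAt.continuousWithinAt
  have hdist := dist_le_of_trajectories_ODE (v := fun _ => v) (δ := ‖x - y‖) (fun _ => hK)
    (hcont x) (fun t _ => (hφ.hasDerivAt x t).hasDerivWithinAt) (hcont y)
    (fun t _ => (hφ.hasDerivAt y t).hasDerivWithinAt) (by simp [hφ.map_zero, dist_eq_norm]) t ht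
  rw [dist_eq_norm, sub_zero, mul_comm] at hdist
  exact hdist.trans (by gcongr; exact ht.2)

theorem norm_sub_sub_variational_le (hφ : IsGlobalFlow v φ) (hK : LipschitzWith K v)
    {v' : E → E →L[ℝ] E} {Λ : ℝ≥0} (hv : ∀ x, HasFDerivAt v (v' x) x) (hΛ : LipschitzWith Λ v')
    {x u u' : E} {w : ℝ → E} (hw0 : w 0 = u - u')
    (hw : ∀ t, HasDerivAt w (v' (φ t x) (w t)) t)
    {ρ T : ℝ} (hT : 0 ≤ T) (hu : ‖u‖ ≤ ρ) (hu' : ‖u'‖ ≤ ρ) :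
    ‖φ T (x + u) - φ T (x + u') - w T‖
      ≤ Λ * Real.exp (K * T) ^ 2 * gronwallBound 0 K 1 T * ρ * ‖u - u'‖ := by
  have hρ : 0 ≤ ρ := (norm_nonneg _).trans hu
  set e := Real.exp (K * T)
  set d : ℝ → E := fun t => φ t (x + u) - φ t (x + u') - w t with hd
  have hderiv (t : ℝ) : HasDerivAt d
      (v (φ t (x + u)) - v (φ t (x + u')) - v' (φ t x) (w t)) t :=
    ((hφ.hasDerivAt _ t).sub (hφ.hasDerivAt _ t)).sub (hw t)
  have hbound (t : ℝ) (ht : t ∈ Set.Ico 0 T) :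
      ‖v (φ t (x + u)) - v (φ t (x + u')) - v' (φ t x) (w t)‖
        ≤ K * ‖d t‖ + Λ * e ^ 2 * ρ * ‖u - u'‖ * 1 := by
    have hlip (y y' : E) := hφ.norm_sub_le hK y y' (Set.Ico_subset_Icc_self ht)
    have hnear (u : E) (hu : ‖u‖ ≤ ρ) : ‖φ t (x + u) - φ t x‖ ≤ e * ρ :=
      (hlip _ _).trans (by rw [add_sub_cancel_left]; gcongr)
    have htaylor := norm_sub_sub_le_of_lipschitz_fderiv hv hΛ (hnear u hu) (hnear u' hu')
    have hdiff := hlip (x + u) (x + u')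
    rw [add_sub_add_left_eq_sub] at hdiff
    calc _ = ‖v' (φ t x) (d t) + (v (φ t (x + u)) - v (φ t (x + u'))
          - v' (φ t x) (φ t (x + u) - φ t (x + u')))‖ := by
          simp only [hd, map_sub]; congr 1; abel
      _ ≤ K * ‖d t‖ + Λ * (e * ρ) * (e * ‖u - u'‖) := (norm_add_le _ _).trans <| add_le_add
          ((v' _).le_of_opNorm_le ((hv _).le_of_lipschitz hK) _)
          (htaylor.trans (by gcongr))
      _ = _ := by ring
  have hgronwall := norm_le_gronwallBound_of_norm_deriv_right_le (f := d)
    (fun t _ => (hderiv t).continuousAt.continuousWithinAt)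
    (fun t _ => (hderiv t).hasDerivWithinAt) (δ := 0) (by simp [hd, hφ.map_zero, hw0]) hbound T
    (Set.right_mem_Icc.2 hT)
  rw [sub_zero, gronwallBound_zero_mul] at hgronwall
  exact hgronwall.trans (le_of_eq (by ring))

end IsGlobalFlow

end Flow

/-! ### The unperturbed flow and its separatrix -/

/-- The universal cover of `𝔸²`, with coordinates ordered as `((θ₁, I₁), (θ₂, I₂))`. -/
abbrev Phase := (ℝ × ℝ) × (ℝ × ℝ)

section UnperturbedFlow

open scoped NNReal

/-- The Hamiltonian vector field of `½(I₁² + I₂²) + cos (2πθ₁)`. -/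
def starField (z : Phase) : Phase := ((z.1.2, 2 * π * sin (2 * π * z.1.1)), (z.2.2, 0))

/-- The differential of `starField`. -/
def starFieldDeriv (z : Phase) : Phase →L[ℝ] Phase :=
  let pr₁ := ContinuousLinearMap.fst ℝ (ℝ × ℝ) (ℝ × ℝ)
  let pr₂ := ContinuousLinearMap.snd ℝ (ℝ × ℝ) (ℝ × ℝ)
  let fst := ContinuousLinearMap.fst ℝ ℝ ℝ
  let snd := ContinuousLinearMap.snd ℝ ℝ ℝ
  ((snd.comp pr₁).prod ((4 * π ^ 2 * cos (2 * π * z.1.1)) • fst.comp pr₁)).prod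
    ((snd.comp pr₂).prod 0)

lemma starFieldDeriv_apply (z w : Phase) : starFieldDeriv z w =
    ((w.1.2, 4 * π ^ 2 * cos (2 * π * z.1.1) * w.1.1), (w.2.2, 0)) := rfl

lemma contDiff_starField : ContDiff ℝ 1 starField := by
  unfold starField
  fun_prop

lemma hasFDerivAt_starField (z : Phase) : HasFDerivAt starField (starFieldDeriv z) z := by
  have hsin : HasFDerivAt (fun z : Phase => 2 * π * sin (2 * π * z.1.1)) _ z :=
    ((((hasFDerivAt_fst (𝕜 := ℝ) (p := z)).fst).const_mul (2 * π)).sin).const_mul (2 * π)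
  refine (((hasFDerivAt_fst.snd).prodMk hsin).prodMk
    ((hasFDerivAt_snd.snd).prodMk (hasFDerivAt_const 0 z))).congr_fderiv ?_
  ext <;> simp [starFieldDeriv]
  ring

lemma abs_fst_fst_le (z : Phase) : |z.1.1| ≤ ‖z‖ := (norm_fst_le z.1).trans (norm_fst_le z)
lemma abs_fst_snd_le (z : Phase) : |z.1.2| ≤ ‖z‖ := (norm_snd_le z.1).trans (norm_fst_le z)
lemma abs_snd_fst_le (z : Phase) : |z.2.1| ≤ ‖z‖ := (norm_fst_le z.2).trans (norm_snd_le z)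
lemma abs_snd_snd_le (z : Phase) : |z.2.2| ≤ ‖z‖ := (norm_snd_le z.2).trans (norm_snd_le z)

lemma phase_norm_le_iff {z : Phase} {r : ℝ} :
    ‖z‖ ≤ r ↔ (|z.1.1| ≤ r ∧ |z.1.2| ≤ r) ∧ |z.2.1| ≤ r ∧ |z.2.2| ≤ r := by
  simp only [norm_prod_le_iff, norm_eq_abs]

lemma norm_starFieldDeriv_le (z : Phase) : ‖starFieldDeriv z‖ ≤ 40 := by
  refine ContinuousLinearMap.opNorm_le_bound _ (by norm_num) fun w => ?_
  have hcoef : |4 * π ^ 2 * cos (2 * π * z.1.1)| ≤ 40 := by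
    rw [abs_mul, abs_of_pos (by positivity)]
    nlinarith [abs_cos_le_one (2 * π * z.1.1), pi_lt_d2, pi_pos]
  rw [starFieldDeriv_apply, phase_norm_le_iff]
  simp only [abs_mul, abs_zero] at hcoef ⊢
  refine ⟨⟨?_, mul_le_mul hcoef (abs_fst_fst_le w) (abs_nonneg _) (by norm_num)⟩, ?_, by positivity⟩
  · linarith [abs_fst_snd_le w, norm_nonneg w]
  · linarith [abs_snd_snd_le w, norm_nonneg w]

lemma lipschitzWith_starField : LipschitzWith 40 starField :=
  lipschitzWith_of_nnnorm_fderiv_le (𝕜 := ℝ) (fun z => (hasFDerivAt_starField z).differentiableAt)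
    fun z => by
      rw [(hasFDerivAt_starField z).fderiv]
      exact norm_starFieldDeriv_le z

lemma lipschitzWith_starFieldDeriv : LipschitzWith 320 starFieldDeriv := by
  refine LipschitzWith.of_dist_le_mul fun z z' => ?_
  rw [dist_eq_norm, dist_eq_norm]
  refine ContinuousLinearMap.opNorm_le_bound _ (by positivity) fun w => ?_
  have hcos : |4 * π ^ 2 * cos (2 * π * z.1.1) - 4 * π ^ 2 * cos (2 * π * z'.1.1)|
      ≤ 320 * ‖z - z'‖ := by
    have hx : |z.1.1 - z'.1.1| ≤ ‖z - z'‖ := abs_fst_fst_le (z - z')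
    have hπ : 4 * π ^ 2 * (2 * π) ≤ 320 := by nlinarith [pi_lt_d2, pi_pos]
    calc _ = 4 * π ^ 2 * |cos (2 * π * z.1.1) - cos (2 * π * z'.1.1)| := by
          rw [← mul_sub, abs_mul, abs_of_pos (by positivity)]
      _ ≤ 4 * π ^ 2 * |2 * π * z.1.1 - 2 * π * z'.1.1| :=
        mul_le_mul_of_nonneg_left (abs_cos_sub_cos_le _ _) (by positivity)
      _ = 4 * π ^ 2 * (2 * π) * |z.1.1 - z'.1.1| := by
          rw [← mul_sub, abs_mul, abs_of_pos (by positivity), ← mul_assoc]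
      _ ≤ 320 * ‖z - z'‖ := by gcongr
  rw [_root_.sub_apply, starFieldDeriv_apply, starFieldDeriv_apply,
    phase_norm_le_iff]
  simp only [Prod.fst_sub, Prod.snd_sub, sub_self, abs_zero, ← sub_mul, abs_mul]
  have h0 : 0 ≤ 320 * ‖z - z'‖ * ‖w‖ := by positivity
  exact ⟨⟨by simpa using h0, mul_le_mul hcos (abs_fst_fst_le w) (abs_nonneg _) (by positivity)⟩,
    by simpa using h0, by simpa using h0⟩

/-- The flow of `starField`, whose time-one map lifts `𝓕_*`. -/
def starFlow : ℝ → Phase → Phase :=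
  (exists_isGlobalFlow contDiff_starField lipschitzWith_starField).choose

lemma isGlobalFlow_starFlow : IsGlobalFlow starField starFlow :=
  (exists_isGlobalFlow contDiff_starField lipschitzWith_starField).choose_spec

lemma periodic_starField (m n : ℤ) :
    Function.Periodic starField (((m : ℝ), 0), ((n : ℝ), 0)) := by
  intro z
  have h : 2 * π * (z.1.1 + m) = 2 * π * z.1.1 + m * (2 * π) := by ring
  simp [starField, h, sin_add_int_mul_two_pi]

end UnperturbedFlow

section Separatrix

/-- The angle of the pendulum on its upper separatrix, from `0` at `-∞` to `1` at `+∞`. -/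
def sepAngle (t : ℝ) : ℝ := 2 / π * arctan (exp (2 * π * t))

/-- Half the momentum on the separatrix; it solves the variational equation and decays. -/
def decayMode (t : ℝ) : ℝ := (cosh (2 * π * t))⁻¹

/-- The derivative of `decayMode`. -/
def decayModeDeriv (t : ℝ) : ℝ := -(2 * π) * tanh (2 * π * t) * decayMode t

/-- The odd solution of the variational equation along the separatrix; it grows. -/
def growthMode (t : ℝ) : ℝ := sinh (2 * π * t) + 2 * π * t * decayMode t

/-- The derivative of `growthMode`. -/
def growthModeDeriv (t : ℝ) : ℝ :=
  2 * π * (cosh (2 * π * t) + decayMode t) + 2 * π * t * decayModeDeriv t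

/-- The upper separatrix of the pendulum, in the coordinates `(θ₁, I₁)`. -/
def separatrix (t : ℝ) : ℝ × ℝ := (sepAngle t, 2 * decayMode t)

/-- The general solution of the variational equation along the separatrix. -/
def variationalSol (a b t : ℝ) : ℝ × ℝ :=
  (a * decayMode t + b * growthMode t, a * decayModeDeriv t + b * growthModeDeriv t)

lemma decayMode_pos (t : ℝ) : 0 < decayMode t := inv_pos.2 (cosh_pos _)

lemma decayMode_le_one (t : ℝ) : decayMode t ≤ 1 := inv_le_one_of_one_le₀ (one_le_cosh _)

lemma pi_mul_sepAngle (t : ℝ) : π * sepAngle t = 2 * arctan (exp (2 * π * t)) := by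
  rw [sepAngle]
  field_simp

lemma sin_pi_mul_sepAngle (t : ℝ) : sin (π * sepAngle t) = decayMode t := by
  have hsqrt : √(1 + exp (2 * π * t) ^ 2) ^ 2 = 1 + exp (2 * π * t) ^ 2 :=
    sq_sqrt (by positivity)
  rw [pi_mul_sepAngle, sin_two_mul, sin_arctan, cos_arctan, decayMode, cosh_eq, exp_neg]
  field_simp
  rw [hsqrt]
  ring

lemma cos_pi_mul_sepAngle (t : ℝ) : cos (π * sepAngle t) = -tanh (2 * π * t) := by
  rw [pi_mul_sepAngle, cos_two_mul, cos_sq_arctan, tanh_eq_sinh_div_cosh, cosh_eq, sinh_eq,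
    exp_neg]
  field_simp
  ring

lemma cos_two_pi_mul_sepAngle (t : ℝ) : cos (2 * π * sepAngle t) = 1 - 2 * decayMode t ^ 2 := by
  rw [mul_assoc, cos_two_mul, cos_sq', sin_pi_mul_sepAngle]
  ring

lemma two_pi_mul_sin_sepAngle (t : ℝ) :
    2 * π * sin (2 * π * sepAngle t) = 2 * decayModeDeriv t := by
  rw [mul_assoc 2 π (sepAngle t), sin_two_mul, cos_pi_mul_sepAngle, sin_pi_mul_sepAngle,
    decayModeDeriv]
  ring

lemma hasDerivAt_two_pi_mul (t : ℝ) : HasDerivAt (fun t => 2 * π * t) (2 * π) t := by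
  simpa using (hasDerivAt_id t).const_mul (2 * π)

lemma hasDerivAt_sepAngle (t : ℝ) : HasDerivAt sepAngle (2 * decayMode t) t := by
  refine (((hasDerivAt_two_pi_mul t).exp.arctan).const_mul (2 / π)).congr_deriv ?_
  rw [decayMode, cosh_eq, exp_neg]
  field_simp
  ring

lemma hasDerivAt_decayMode (t : ℝ) : HasDerivAt decayMode (decayModeDeriv t) t := by
  have hc := cosh_pos (2 * π * t)
  refine ((hasDerivAt_two_pi_mul t).cosh.inv hc.ne').congr_deriv ?_
  rw [decayModeDeriv, tanh_eq_sinh_div_cosh, decayMode]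
  field_simp

lemma hasDerivAt_decayModeDeriv (t : ℝ) : HasDerivAt decayModeDeriv
    (4 * π ^ 2 * cos (2 * π * sepAngle t) * decayMode t) t := by
  have htanh : decayModeDeriv = fun t => -(2 * π) * (sinh (2 * π * t) * decayMode t ^ 2) := by
    funext t
    rw [decayModeDeriv, tanh_eq_sinh_div_cosh, decayMode]
    ring
  rw [htanh]
  refine (((hasDerivAt_two_pi_mul t).sinh.fun_mul
    ((hasDerivAt_decayMode t).fun_pow 2)).const_mul (-(2 * π))).congr_deriv ?_
  have hsq := cosh_sq (2 * π * t)
  rw [cos_two_pi_mul_sepAngle, decayModeDeriv, tanh_eq_sinh_div_cosh, decayMode]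
  norm_num
  field_simp
  linear_combination (-8) * hsq

lemma hasDerivAt_growthMode (t : ℝ) : HasDerivAt growthMode (growthModeDeriv t) t := by
  refine ((hasDerivAt_two_pi_mul t).sinh.fun_add
    ((hasDerivAt_two_pi_mul t).fun_mul (hasDerivAt_decayMode t))).congr_deriv ?_
  rw [growthModeDeriv]
  ring

lemma hasDerivAt_growthModeDeriv (t : ℝ) : HasDerivAt growthModeDeriv
    (4 * π ^ 2 * cos (2 * π * sepAngle t) * growthMode t) t := by
  refine ((((hasDerivAt_two_pi_mul t).cosh.fun_add (hasDerivAt_decayMode t)).const_mul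
    (2 * π)).fun_add ((hasDerivAt_two_pi_mul t).fun_mul
      (hasDerivAt_decayModeDeriv t))).congr_deriv ?_
  rw [cos_two_pi_mul_sepAngle, growthMode, decayModeDeriv, tanh_eq_sinh_div_cosh, decayMode]
  field_simp
  ring

lemma hasDerivAt_separatrix (t : ℝ) : HasDerivAt separatrix
    (2 * decayMode t, 2 * π * sin (2 * π * sepAngle t)) t := by
  rw [two_pi_mul_sin_sepAngle]
  exact (hasDerivAt_sepAngle t).prodMk ((hasDerivAt_decayMode t).const_mul 2)

lemma hasDerivAt_variationalSol (a b t : ℝ) : HasDerivAt (variationalSol a b)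
    ((variationalSol a b t).2,
      4 * π ^ 2 * cos (2 * π * sepAngle t) * (variationalSol a b t).1) t := by
  refine ((((hasDerivAt_decayMode t).const_mul a).fun_add
    ((hasDerivAt_growthMode t).const_mul b)).prodMk
    (((hasDerivAt_decayModeDeriv t).const_mul a).fun_add
      ((hasDerivAt_growthModeDeriv t).const_mul b))).congr_deriv ?_
  simp only [variationalSol, Prod.mk.injEq, true_and]
  ring

lemma wronskian_modes (t : ℝ) :
    decayMode t * growthModeDeriv t - growthMode t * decayModeDeriv t = 4 * π := by
  have hsq := cosh_sq (2 * π * t)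
  rw [growthMode, growthModeDeriv, decayModeDeriv, tanh_eq_sinh_div_cosh, decayMode]
  field_simp
  linear_combination (-2 * cosh (2 * π * t)) * hsq

lemma decayMode_neg (t : ℝ) : decayMode (-t) = decayMode t := by simp [decayMode]

lemma decayModeDeriv_neg (t : ℝ) : decayModeDeriv (-t) = -decayModeDeriv t := by
  simp [decayModeDeriv, decayMode_neg]

lemma growthMode_neg (t : ℝ) : growthMode (-t) = -growthMode t := by
  simp only [growthMode, decayMode_neg, mul_neg, sinh_neg]
  ring

lemma growthModeDeriv_neg (t : ℝ) : growthModeDeriv (-t) = growthModeDeriv t := by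
  simp [growthModeDeriv, decayMode_neg, decayModeDeriv_neg]

lemma separatrix_zero : separatrix 0 = (1 / 2, 2) := by
  simp only [separatrix, sepAngle, decayMode, mul_zero, exp_zero, arctan_one, cosh_zero]
  ext
  · field_simp
    norm_num
  · norm_num

lemma sepAngle_add_sepAngle_neg (t : ℝ) : sepAngle t + sepAngle (-t) = 1 := by
  rw [sepAngle, sepAngle, mul_neg, exp_neg, arctan_inv_of_pos (exp_pos _)]
  field_simp
  ring

lemma sepAngle_nonneg (t : ℝ) : 0 ≤ sepAngle t := by
  have := arctan_nonneg.2 (exp_pos (2 * π * t)).le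
  rw [sepAngle]
  positivity

lemma sepAngle_le_exp (t : ℝ) : sepAngle t ≤ exp (2 * π * t) := by
  have harctan := arctan_nonneg.2 (exp_pos (2 * π * t)).le
  have htan : arctan (exp (2 * π * t)) ≤ exp (2 * π * t) := by
    simpa [tan_arctan] using le_tan harctan (arctan_lt_pi_div_two _)
  have hπ : 2 / π ≤ 1 := by rw [div_le_one pi_pos]; linarith [pi_gt_three]
  exact (mul_le_of_le_one_left harctan hπ).trans htan

section Asymptotics

lemma abs_two_pi_mul (t : ℝ) : |2 * π * t| = 2 * π * |t| := by
  rw [abs_mul, abs_of_pos two_pi_pos]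

lemma decayMode_le (t : ℝ) : decayMode t ≤ 2 * exp (-(2 * π * |t|)) := by
  have hx := exp_pos (2 * π * |t|)
  rw [decayMode, ← cosh_abs, abs_two_pi_mul, cosh_eq, exp_neg, ← div_eq_mul_inv, inv_eq_one_div,
    div_le_div_iff₀ (by positivity) hx]
  linarith [inv_pos.2 hx]

lemma norm_variationalSol_one_zero_le (t : ℝ) :
    ‖variationalSol 1 0 t‖ ≤ 14 * exp (-(2 * π * |t|)) := by
  have hS := decayMode_le t
  have hpos := decayMode_pos t
  have hy := exp_pos (-(2 * π * |t|))
  simp only [variationalSol, one_mul, zero_mul, add_zero, norm_prod_le_iff, norm_eq_abs]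
  refine ⟨by rw [abs_of_pos hpos]; linarith, ?_⟩
  rw [decayModeDeriv, abs_mul, abs_mul, abs_neg, abs_of_pos two_pi_pos, abs_of_pos hpos]
  calc 2 * π * |tanh (2 * π * t)| * decayMode t
      ≤ 2 * π * 1 * (2 * exp (-(2 * π * |t|))) := by gcongr; exact (abs_tanh_lt_one _).le
    _ ≤ 14 * exp (-(2 * π * |t|)) := by nlinarith [pi_lt_d2]

lemma norm_variationalSol_zero_one_le (t : ℝ) :
    ‖variationalSol 0 1 t‖ ≤ 20 * exp (2 * π * |t|) := by
  have hS := decayMode_pos t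
  have hx1 : 1 ≤ exp (2 * π * |t|) := one_le_exp (by positivity)
  have htx : |2 * π * t| ≤ exp (2 * π * |t|) := by
    linarith [add_one_le_exp (2 * π * |t|), abs_two_pi_mul t]
  have hcosh : cosh (2 * π * t) ≤ exp (2 * π * |t|) := by
    rw [← abs_two_pi_mul, ← cosh_abs, cosh_eq]
    linarith [exp_le_exp.2 (neg_le_self (abs_nonneg (2 * π * t)))]
  have hsinh : |sinh (2 * π * t)| ≤ exp (2 * π * |t|) := by
    rw [abs_sinh, ← cosh_abs] at *
    exact (sinh_lt_cosh _).le.trans hcosh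
  simp only [variationalSol, one_mul, zero_mul, zero_add, norm_prod_le_iff, norm_eq_abs]
  constructor
  · have htS : |2 * π * t * decayMode t| ≤ exp (2 * π * |t|) := by
      rw [abs_mul, abs_of_pos hS]
      exact (mul_le_of_le_one_right (abs_nonneg _) (decayMode_le_one t)).trans htx
    rw [growthMode]
    linarith [abs_add_le (sinh (2 * π * t)) (2 * π * t * decayMode t)]
  · have hS' : |decayModeDeriv t| ≤ 2 * π := by
      rw [decayModeDeriv, abs_mul, abs_mul, abs_neg, abs_of_pos two_pi_pos, abs_of_pos hS]
      calc 2 * π * |tanh (2 * π * t)| * decayMode t ≤ 2 * π * 1 * 1 := by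
            gcongr
            exacts [(abs_tanh_lt_one _).le, decayMode_le_one t]
        _ = 2 * π := by ring
    have hcS : |cosh (2 * π * t) + decayMode t| ≤ 2 * exp (2 * π * |t|) := by
      rw [abs_of_pos (add_pos (cosh_pos _) hS)]
      linarith [decayMode_le_one t]
    calc |growthModeDeriv t|
        ≤ 2 * π * |cosh (2 * π * t) + decayMode t| + |2 * π * t| * |decayModeDeriv t| := by
          rw [growthModeDeriv, ← abs_mul (2 * π * t), ← abs_of_pos two_pi_pos, ← abs_mul,
            abs_of_pos two_pi_pos]
          exact abs_add_le _ _
      _ ≤ 2 * π * (2 * exp (2 * π * |t|)) + exp (2 * π * |t|) * (2 * π) := by gcongr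
      _ ≤ 20 * exp (2 * π * |t|) := by nlinarith [pi_lt_d2]

variable {t : ℝ}

lemma abs_exp_mul_decayMode_sub_le (ht : 0 ≤ t) :
    |exp (2 * π * t) * decayMode t - 2| ≤ exp (-(2 * π * t)) := by
  have hx := exp_pos (2 * π * t)
  have hx1 : 1 ≤ exp (2 * π * t) := one_le_exp (by positivity)
  have hid : exp (2 * π * t) * decayMode t - 2 = -(2 / (exp (2 * π * t) ^ 2 + 1)) := by
    rw [decayMode, cosh_eq, exp_neg]
    field_simp
    ring
  rw [hid, abs_neg, abs_of_pos (by positivity), exp_neg, inv_eq_one_div,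
    div_le_div_iff₀ (by positivity) hx]
  nlinarith

lemma abs_tanh_sub_one_le (ht : 0 ≤ t) : |tanh t - 1| ≤ exp (-t) := by
  have hx := exp_pos t
  have hx1 : 1 ≤ exp t := one_le_exp ht
  have hid : tanh t - 1 = -(2 / (exp t ^ 2 + 1)) := by
    rw [tanh_eq_sinh_div_cosh, cosh_eq, sinh_eq, exp_neg]
    field_simp
    ring
  rw [hid, abs_neg, abs_of_pos (by positivity), exp_neg, inv_eq_one_div,
    div_le_div_iff₀ (by positivity) hx]
  nlinarith

lemma norm_exp_smul_variationalSol_sub_le (ht : 0 ≤ t) :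
    ‖exp (2 * π * t) • variationalSol 1 0 t - (2, -(4 * π))‖ ≤ 30 * exp (-(2 * π * t)) := by
  have hS := abs_exp_mul_decayMode_sub_le ht
  have hT := abs_tanh_sub_one_le (mul_nonneg two_pi_pos.le ht)
  have hy := exp_pos (-(2 * π * t))
  simp only [variationalSol, one_mul, zero_mul, add_zero, norm_prod_le_iff, norm_eq_abs,
    Prod.fst_sub, Prod.snd_sub, Prod.smul_fst, Prod.smul_snd, smul_eq_mul]
  refine ⟨by linarith, ?_⟩
  have hid : exp (2 * π * t) * decayModeDeriv t - -(4 * π) = -(2 * π) *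
      (tanh (2 * π * t) * (exp (2 * π * t) * decayMode t - 2) + 2 * (tanh (2 * π * t) - 1)) := by
    rw [decayModeDeriv]
    ring
  rw [hid, abs_mul, abs_neg, abs_of_pos two_pi_pos]
  calc _ ≤ 2 * π * (|tanh (2 * π * t)| * |exp (2 * π * t) * decayMode t - 2|
        + 2 * |tanh (2 * π * t) - 1|) := by
        gcongr
        refine (abs_add_le _ _).trans (le_of_eq ?_)
        rw [abs_mul, abs_mul, abs_two]
    _ ≤ 2 * π * (1 * exp (-(2 * π * t)) + 2 * exp (-(2 * π * t))) := by
        gcongr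
        exact (abs_tanh_lt_one _).le
    _ ≤ 30 * exp (-(2 * π * t)) := by nlinarith [pi_lt_d2]

lemma exp_neg_mul_self_le_one (x : ℝ) : exp (-x) * x ≤ 1 := by
  rw [mul_comm]
  exact (mul_exp_neg_le_exp_neg_one x).trans (exp_le_one_iff.2 (by norm_num))

lemma abs_exp_neg_mul_growthMode_sub_le (ht : 0 ≤ t) :
    |exp (-(2 * π * t)) * growthMode t - 1 / 2| ≤ 30 * exp (-(2 * π * t)) := by
  have hS := decayMode_le t
  have hSpos := decayMode_pos t
  rw [abs_of_nonneg ht] at hS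
  have hτy := exp_neg_mul_self_le_one (2 * π * t)
  have hxy : exp (2 * π * t) * exp (-(2 * π * t)) = 1 := by simp [← exp_add]
  have hy1 : exp (-(2 * π * t)) ≤ 1 := exp_le_one_iff.2 (by linarith [mul_nonneg two_pi_pos.le ht])
  have hy := exp_pos (-(2 * π * t))
  rw [growthMode, sinh_eq]
  set x := exp (2 * π * t)
  set y := exp (-(2 * π * t))
  have hyy : y * y ≤ y := mul_le_of_le_one_left hy.le hy1
  have hid : y * ((x - y) / 2 + 2 * π * t * decayMode t) - 1 / 2
      = -(y * y / 2) + y * (2 * π * t) * decayMode t := by linear_combination (1 / 2) * hxy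
  have hτS : y * (2 * π * t) * decayMode t ≤ 1 * (2 * y) := by gcongr
  have hτS0 : 0 ≤ y * (2 * π * t) * decayMode t := by positivity
  rw [hid, abs_le]
  constructor <;> nlinarith

lemma abs_exp_neg_mul_growthModeDeriv_sub_le (ht : 0 ≤ t) :
    |exp (-(2 * π * t)) * growthModeDeriv t - π| ≤ 30 * exp (-(2 * π * t)) := by
  have hS' : |decayModeDeriv t| ≤ 14 * exp (-(2 * π * |t|)) := by
    simpa [variationalSol] using
      (norm_snd_le (variationalSol 1 0 t)).trans (norm_variationalSol_one_zero_le t)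
  rw [abs_of_nonneg ht] at hS'
  have hSpos := decayMode_pos t
  have hτy := exp_neg_mul_self_le_one (2 * π * t)
  have hxy : exp (2 * π * t) * exp (-(2 * π * t)) = 1 := by simp [← exp_add]
  have hy1 : exp (-(2 * π * t)) ≤ 1 := exp_le_one_iff.2 (by linarith [mul_nonneg two_pi_pos.le ht])
  have hy := exp_pos (-(2 * π * t))
  rw [growthModeDeriv, cosh_eq]
  set x := exp (2 * π * t)
  set y := exp (-(2 * π * t))
  have hyy : y * y ≤ y := mul_le_of_le_one_left hy.le hy1
  have hid : y * (2 * π * ((x + y) / 2 + decayMode t) + 2 * π * t * decayModeDeriv t) - π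
      = π * (y * y) + 2 * π * (y * decayMode t) + y * (2 * π * t) * decayModeDeriv t := by
    linear_combination π * hxy
  have hyS : y * decayMode t ≤ y := mul_le_of_le_one_right hy.le (decayMode_le_one t)
  have hτS' : |y * (2 * π * t) * decayModeDeriv t| ≤ 1 * (14 * y) := by
    rw [abs_mul, abs_of_nonneg (by positivity)]
    gcongr
  have hmain : |π * (y * y) + 2 * π * (y * decayMode t)| ≤ 3 * π * y := by
    rw [abs_of_pos (by positivity)]
    nlinarith [pi_pos]
  rw [hid]
  refine (abs_add_le _ _).trans ?_
  nlinarith [pi_lt_d2]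

lemma norm_exp_neg_smul_variationalSol_sub_le (ht : 0 ≤ t) :
    ‖exp (-(2 * π * t)) • variationalSol 0 1 t - (1 / 2, π)‖ ≤ 30 * exp (-(2 * π * t)) := by
  simpa only [variationalSol, one_mul, zero_mul, zero_add] using norm_prod_le_iff.2
    ⟨abs_exp_neg_mul_growthMode_sub_le ht, abs_exp_neg_mul_growthModeDeriv_sub_le ht⟩

end Asymptotics

end Separatrix

/-! ### The kick -/

section Kick

open scoped NNReal

lemma abs_sub_le_of_abs_deriv_le {f f' : ℝ → ℝ} {C : ℝ} (hf : ∀ x, HasDerivAt f (f' x) x)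
    (hC : ∀ x, |f' x| ≤ C) (x y : ℝ) : |f x - f y| ≤ C * |x - y| :=
  convex_univ.norm_image_sub_le_of_norm_hasDerivWithin_le
    (fun x _ => (hf x).hasDerivWithinAt) (fun x _ => hC x) (Set.mem_univ y) (Set.mem_univ x)

lemma abs_mul_le {a b A B : ℝ} (ha : |a| ≤ A) (hb : |b| ≤ B) : |a * b| ≤ A * B := by
  rw [abs_mul]
  exact mul_le_mul ha hb (abs_nonneg _) ((abs_nonneg _).trans ha)

lemma abs_mul_sub_mul_le {a b a' b' A B α β : ℝ} (ha : |a| ≤ A) (hb : |b'| ≤ B)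
    (hα : |a - a'| ≤ α) (hβ : |b - b'| ≤ β) : |a * b - a' * b'| ≤ A * β + α * B := by
  rw [show a * b - a' * b' = a * (b - b') + (a - a') * b' by ring]
  exact (abs_add_le _ _).trans (add_le_add (abs_mul_le ha hβ) (abs_mul_le hα hb))

lemma pi_sq_lt_ten : π ^ 2 < 10 := by nlinarith [pi_lt_d2, pi_pos]

/-- The monomial `sin^m cos^n` in the angle `πx`. -/
def trigMonomial (m n : ℕ) (x : ℝ) : ℝ := sin (π * x) ^ m * cos (π * x) ^ n

lemma hasDerivAt_trigMonomial (m n : ℕ) (x : ℝ) : HasDerivAt (trigMonomial m n)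
    (π * (m * trigMonomial (m - 1) (n + 1) x - n * trigMonomial (m + 1) (n - 1) x)) x := by
  have hangle : HasDerivAt (fun x => π * x) π x := by simpa using (hasDerivAt_id x).const_mul π
  refine ((hangle.sin.fun_pow m).fun_mul (hangle.cos.fun_pow n)).congr_deriv ?_
  simp only [trigMonomial, pow_succ]
  ring

lemma abs_trigMonomial_le_one (m n : ℕ) (x : ℝ) : |trigMonomial m n x| ≤ 1 := by
  rw [trigMonomial, abs_mul, abs_pow, abs_pow]
  exact mul_le_one₀ (pow_le_one₀ (abs_nonneg _) (abs_sin_le_one _)) (by positivity)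
    (pow_le_one₀ (abs_nonneg _) (abs_cos_le_one _))

lemma abs_trigMonomial_sub_le (m n : ℕ) (x y : ℝ) :
    |trigMonomial m n x - trigMonomial m n y| ≤ π * (m + n) * |x - y| := by
  refine abs_sub_le_of_abs_deriv_le (hasDerivAt_trigMonomial m n) (fun x => ?_) x y
  rw [abs_mul, abs_of_pos pi_pos]
  gcongr
  refine (abs_sub _ _).trans (add_le_add ?_ ?_) <;> rw [abs_mul, Nat.abs_cast] <;>
    exact mul_le_of_le_one_right (Nat.cast_nonneg _) (abs_trigMonomial_le_one _ _ x)

lemma abs_trigMonomial_le_of_abs_sin_le {ν m : ℕ} (n : ℕ) {x : ℝ} (hν : 3 ≤ ν) (hm : ν - 2 ≤ m)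
    (hx : |sin (π * x)| ≤ 1 / 8) : |trigMonomial m n x| ≤ (2 ^ ν)⁻¹ := by
  obtain ⟨l, rfl⟩ := Nat.exists_eq_add_of_le' hν
  rw [trigMonomial, abs_mul, abs_pow, abs_pow]
  calc |sin (π * x)| ^ m * |cos (π * x)| ^ n
      ≤ |sin (π * x)| ^ m * 1 := by
        gcongr
        exact pow_le_one₀ (abs_nonneg _) (abs_cos_le_one _)
    _ ≤ |sin (π * x)| ^ (l + 1) := by
        rw [mul_one]
        exact pow_le_pow_of_le_one (abs_nonneg _) (by linarith) (by omega)
    _ ≤ (1 / 8) ^ (l + 1) := by gcongr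
    _ = ((2 ^ 3) ^ (l + 1))⁻¹ := by rw [one_div, inv_pow]; norm_num
    _ ≤ (2 ^ (l + 3))⁻¹ := by
        rw [← pow_mul]
        gcongr
        · norm_num
        · omega

/-- The first derivative of `sin^ν`, divided by `π`. -/
def bumpDeriv (ν : ℕ) (x : ℝ) : ℝ := ν * trigMonomial (ν - 1) 1 x

/-- The second derivative of `sin^ν`, divided by `π`. -/
def bumpDeriv₂ (ν : ℕ) (x : ℝ) : ℝ :=
  π * ν * ((ν - 1 : ℕ) * trigMonomial (ν - 2) 2 x - trigMonomial ν 0 x)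

/-- The dependence of the coupling on the second angle. -/
def wave (y : ℝ) : ℝ := 2 + sin (2 * π * (y + 6⁻¹))

/-- The derivative of `wave`. -/
def waveDeriv (y : ℝ) : ℝ := 2 * π * cos (2 * π * (y + 6⁻¹))

/-- The second derivative of `wave`. -/
def waveDeriv₂ (y : ℝ) : ℝ := -(4 * π ^ 2) * sin (2 * π * (y + 6⁻¹))

variable {ν : ℕ}

lemma hasDerivAt_bump (ν : ℕ) (x : ℝ) :
    HasDerivAt (trigMonomial ν 0) (π * bumpDeriv ν x) x := by
  simpa [bumpDeriv] using hasDerivAt_trigMonomial ν 0 x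

lemma hasDerivAt_bumpDeriv (hν : 1 ≤ ν) (x : ℝ) :
    HasDerivAt (bumpDeriv ν) (bumpDeriv₂ ν x) x := by
  refine ((hasDerivAt_trigMonomial (ν - 1) 1 x).const_mul (ν : ℝ)).congr_deriv ?_
  rw [bumpDeriv₂, Nat.sub_add_cancel hν, Nat.sub_sub]
  push_cast
  ring

lemma abs_bumpDeriv_le (ν : ℕ) (x : ℝ) : |bumpDeriv ν x| ≤ ν := by
  rw [bumpDeriv, abs_mul, Nat.abs_cast]
  exact mul_le_of_le_one_right (Nat.cast_nonneg _) (abs_trigMonomial_le_one _ _ x)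

lemma abs_bumpDeriv₂_le {a x : ℝ} (hν : 1 ≤ ν) (h₁ : |trigMonomial (ν - 2) 2 x| ≤ a)
    (h₂ : |trigMonomial ν 0 x| ≤ a) : |bumpDeriv₂ ν x| ≤ π * ν ^ 2 * a := by
  rw [bumpDeriv₂, abs_mul, abs_of_nonneg (by positivity), Nat.cast_sub hν, Nat.cast_one]
  have hν' : (1 : ℝ) ≤ ν := by exact_mod_cast hν
  calc _ ≤ π * ν * ((ν - 1) * a + a) := by
        gcongr
        refine (abs_sub _ _).trans (add_le_add ?_ h₂)
        rw [abs_mul, abs_of_nonneg (by linarith)]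
        exact mul_le_mul_of_nonneg_left h₁ (by linarith)
    _ = π * ν ^ 2 * a := by ring

lemma abs_bumpDeriv_sub_le (hν : 1 ≤ ν) (x y : ℝ) :
    |bumpDeriv ν x - bumpDeriv ν y| ≤ π * ν ^ 2 * |x - y| := by
  refine abs_sub_le_of_abs_deriv_le (hasDerivAt_bumpDeriv hν) (fun x => ?_) x y
  simpa using abs_bumpDeriv₂_le hν (abs_trigMonomial_le_one _ _ x) (abs_trigMonomial_le_one _ _ x)

lemma abs_bumpDeriv₂_sub_le (hν : 2 ≤ ν) (x y : ℝ) :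
    |bumpDeriv₂ ν x - bumpDeriv₂ ν y| ≤ π ^ 2 * ν ^ 3 * |x - y| := by
  have h₁ := abs_trigMonomial_sub_le (ν - 2) 2 x y
  have h₂ := abs_trigMonomial_sub_le ν 0 x y
  have hν' : (1 : ℝ) ≤ ν := by exact_mod_cast (by omega : 1 ≤ ν)
  rw [Nat.cast_sub hν, Nat.cast_two, sub_add_cancel] at h₁
  rw [Nat.cast_zero, add_zero] at h₂
  have hfactor : bumpDeriv₂ ν x - bumpDeriv₂ ν y =
      π * ν * ((ν - 1) * (trigMonomial (ν - 2) 2 x - trigMonomial (ν - 2) 2 y)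
        - (trigMonomial ν 0 x - trigMonomial ν 0 y)) := by
    rw [bumpDeriv₂, bumpDeriv₂, Nat.cast_sub (by omega), Nat.cast_one]
    ring
  rw [hfactor, abs_mul, abs_of_nonneg (by positivity)]
  calc _
      ≤ π * ν * ((ν - 1) * (π * ν * |x - y|) + π * ν * |x - y|) := by
        gcongr
        refine (abs_sub _ _).trans (add_le_add ?_ h₂)
        rw [abs_mul, abs_of_nonneg (by linarith)]
        exact mul_le_mul_of_nonneg_left h₁ (by linarith)
    _ = π ^ 2 * ν ^ 3 * |x - y| := by ring

lemma hasDerivAt_waveAngle (y : ℝ) : HasDerivAt (fun y => 2 * π * (y + 6⁻¹)) (2 * π) y := by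
  simpa using ((hasDerivAt_id y).add_const (6⁻¹ : ℝ)).const_mul (2 * π)

lemma hasDerivAt_wave (y : ℝ) : HasDerivAt wave (waveDeriv y) y :=
  ((hasDerivAt_waveAngle y).sin.const_add 2).congr_deriv (by rw [waveDeriv]; ring)

lemma hasDerivAt_waveDeriv (y : ℝ) : HasDerivAt waveDeriv (waveDeriv₂ y) y :=
  ((hasDerivAt_waveAngle y).cos.const_mul (2 * π)).congr_deriv (by rw [waveDeriv₂]; ring)

lemma hasDerivAt_waveDeriv₂ (y : ℝ) :
    HasDerivAt waveDeriv₂ (-(8 * π ^ 3) * cos (2 * π * (y + 6⁻¹))) y :=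
  ((hasDerivAt_waveAngle y).sin.const_mul (-(4 * π ^ 2))).congr_deriv (by ring)

lemma abs_wave_le (y : ℝ) : |wave y| ≤ 3 := by
  rw [wave, abs_le]
  constructor <;> linarith [sin_le_one (2 * π * (y + 6⁻¹)), neg_one_le_sin (2 * π * (y + 6⁻¹))]

lemma abs_waveDeriv_le (y : ℝ) : |waveDeriv y| ≤ 2 * π := by
  rw [waveDeriv, abs_mul, abs_of_pos two_pi_pos]
  exact mul_le_of_le_one_right two_pi_pos.le (abs_cos_le_one _)

lemma abs_waveDeriv₂_le (y : ℝ) : |waveDeriv₂ y| ≤ 4 * π ^ 2 := by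
  rw [waveDeriv₂, abs_mul, abs_neg, abs_of_pos (by positivity)]
  exact mul_le_of_le_one_right (by positivity) (abs_sin_le_one _)

lemma abs_waveDeriv₂_sub_le (x y : ℝ) :
    |waveDeriv₂ x - waveDeriv₂ y| ≤ 8 * π ^ 3 * |x - y| := by
  refine abs_sub_le_of_abs_deriv_le hasDerivAt_waveDeriv₂ (fun x => ?_) x y
  rw [abs_mul, abs_neg, abs_of_pos (by positivity)]
  exact mul_le_of_le_one_right (by positivity) (abs_cos_le_one _)

/-- The Hamiltonian vector field of `(sin πθ₁)^ν · (-π⁻¹) · wave θ₂`; its flow is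
`z ↦ z + t • kickField ν z`. -/
def kickField (ν : ℕ) (z : Phase) : Phase :=
  ((0, bumpDeriv ν z.1.1 * wave z.2.1), (0, π⁻¹ * (trigMonomial ν 0 z.1.1 * waveDeriv z.2.1)))

/-- The linear map whose nonzero entries form the symmetric matrix `(a, b; b, c)` sending
`(θ₁, θ₂)` to `(I₁, I₂)`. -/
def hessianMap (a b c : ℝ) : Phase →L[ℝ] Phase :=
  let angle₁ := (ContinuousLinearMap.fst ℝ ℝ ℝ).comp (ContinuousLinearMap.fst ℝ (ℝ × ℝ) (ℝ × ℝ))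
  let angle₂ := (ContinuousLinearMap.fst ℝ ℝ ℝ).comp (ContinuousLinearMap.snd ℝ (ℝ × ℝ) (ℝ × ℝ))
  ContinuousLinearMap.prod (.prod 0 (a • angle₁ + b • angle₂)) (.prod 0 (b • angle₁ + c • angle₂))

lemma hessianMap_apply (a b c : ℝ) (w : Phase) :
    hessianMap a b c w = ((0, a * w.1.1 + b * w.2.1), (0, b * w.1.1 + c * w.2.1)) := rfl

lemma norm_hessianMap_le {a b c A B C : ℝ} (ha : |a| ≤ A) (hb : |b| ≤ B) (hc : |c| ≤ C) :
    ‖hessianMap a b c‖ ≤ max (A + B) (B + C) := by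
  have hB := (abs_nonneg _).trans hb
  have hpos : 0 ≤ max (A + B) (B + C) :=
    le_max_of_le_left (add_nonneg ((abs_nonneg _).trans ha) hB)
  refine ContinuousLinearMap.opNorm_le_bound _ hpos fun w => ?_
  have hrow {a b A B : ℝ} (ha : |a| ≤ A) (hb : |b| ≤ B) :
      |a * w.1.1 + b * w.2.1| ≤ (A + B) * ‖w‖ := by
    rw [add_mul]
    exact (abs_add_le _ _).trans
      (add_le_add (abs_mul_le ha (abs_fst_fst_le w)) (abs_mul_le hb (abs_snd_fst_le w)))
  rw [hessianMap_apply, phase_norm_le_iff]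
  have h0 : |(0 : ℝ)| ≤ max (A + B) (B + C) * ‖w‖ := by
    rw [abs_zero]
    positivity
  refine ⟨⟨h0, (hrow ha hb).trans ?_⟩, h0, (hrow hb hc).trans ?_⟩
  · gcongr; exact le_max_left _ _
  · gcongr; exact le_max_right _ _

lemma hessianMap_sub (a b c a' b' c' : ℝ) :
    hessianMap a b c - hessianMap a' b' c' = hessianMap (a - a') (b - b') (c - c') := by
  ext <;> simp [hessianMap_apply]

/-- The differential of `kickField`. -/
def kickFieldDeriv (ν : ℕ) (z : Phase) : Phase →L[ℝ] Phase :=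
  hessianMap (bumpDeriv₂ ν z.1.1 * wave z.2.1) (bumpDeriv ν z.1.1 * waveDeriv z.2.1)
    (π⁻¹ * (trigMonomial ν 0 z.1.1 * waveDeriv₂ z.2.1))

lemma hasFDerivAt_kickField (hν : 1 ≤ ν) (z : Phase) :
    HasFDerivAt (kickField ν) (kickFieldDeriv ν z) z := by
  have hx : HasFDerivAt (fun z : Phase => z.1.1) _ z := (hasFDerivAt_fst (𝕜 := ℝ) (p := z)).fst
  have hy : HasFDerivAt (fun z : Phase => z.2.1) _ z := (hasFDerivAt_snd (𝕜 := ℝ) (p := z)).fst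
  have h₁ := ((hasDerivAt_bumpDeriv hν z.1.1).comp_hasFDerivAt z hx).mul
    ((hasDerivAt_wave z.2.1).comp_hasFDerivAt z hy)
  have h₂ := (((hasDerivAt_bump ν z.1.1).comp_hasFDerivAt z hx).mul
    ((hasDerivAt_waveDeriv z.2.1).comp_hasFDerivAt z hy)).const_mul π⁻¹
  refine (((hasFDerivAt_const 0 z).prodMk h₁).prodMk
    ((hasFDerivAt_const 0 z).prodMk h₂)).congr_fderiv ?_
  ext <;> simp [kickFieldDeriv, hessianMap_apply]
  · ring
  · field_simp

lemma lipschitzWith_kickFieldDeriv (hν : 2 ≤ ν) :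
    LipschitzWith (200 * ν ^ 3) (kickFieldDeriv ν) := by
  refine LipschitzWith.of_dist_le_mul fun z z' => ?_
  rw [dist_eq_norm, dist_eq_norm, kickFieldDeriv, kickFieldDeriv, hessianMap_sub, ← mul_sub]
  have hx : |z.1.1 - z'.1.1| ≤ ‖z - z'‖ := abs_fst_fst_le (z - z')
  have hy : |z.2.1 - z'.2.1| ≤ ‖z - z'‖ := abs_snd_fst_le (z - z')
  have hν₁ : 1 ≤ ν := by omega
  have ha := abs_mul_sub_mul_le
    (abs_bumpDeriv₂_le hν₁ (abs_trigMonomial_le_one _ _ z.1.1) (abs_trigMonomial_le_one _ _ _))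
    (abs_wave_le z'.2.1) (abs_bumpDeriv₂_sub_le hν z.1.1 z'.1.1)
    (abs_sub_le_of_abs_deriv_le hasDerivAt_wave abs_waveDeriv_le z.2.1 z'.2.1)
  have hb := abs_mul_sub_mul_le (abs_bumpDeriv_le ν z.1.1) (abs_waveDeriv_le z'.2.1)
    (abs_bumpDeriv_sub_le hν₁ z.1.1 z'.1.1)
    (abs_sub_le_of_abs_deriv_le hasDerivAt_waveDeriv abs_waveDeriv₂_le z.2.1 z'.2.1)
  have hc := abs_mul_le (abs_of_pos (inv_pos.2 pi_pos)).le
    (abs_mul_sub_mul_le (abs_trigMonomial_le_one ν 0 z.1.1) (abs_waveDeriv₂_le z'.2.1)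
    (abs_trigMonomial_sub_le ν 0 z.1.1 z'.1.1) (abs_waveDeriv₂_sub_le z.2.1 z'.2.1))
  refine (norm_hessianMap_le ha hb hc).trans ?_
  have hν' : (1 : ℝ) ≤ ν := by exact_mod_cast hν₁
  set d := ‖z - z'‖
  have hd : 0 ≤ d := norm_nonneg _
  have hν₂ : (ν : ℝ) ^ 2 ≤ ν ^ 3 := pow_le_pow_right₀ hν' (by norm_num)
  have hν₁' : (ν : ℝ) ≤ ν ^ 3 := le_self_pow₀ hν' (by norm_num)
  have hπ := pi_sq_lt_ten.le
  have hπd : π ^ 2 * d ≤ 10 * d := by gcongr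
  simp only [Nat.cast_zero, add_zero, mul_one, NNReal.coe_mul, NNReal.coe_pow,
    NNReal.coe_natCast, NNReal.coe_ofNat]
  apply max_le
  · calc _ ≤ π * ν ^ 2 * (2 * π * d) + π ^ 2 * ν ^ 3 * d * 3
          + (ν * (4 * π ^ 2 * d) + π * ν ^ 2 * d * (2 * π)) := by gcongr
      _ = (3 * ν ^ 3 + 4 * ν ^ 2 + 4 * ν) * (π ^ 2 * d) := by ring
      _ ≤ (3 * ν ^ 3 + 4 * ν ^ 3 + 4 * ν ^ 3) * (10 * d) := by gcongr
      _ ≤ 200 * ν ^ 3 * d := by nlinarith [mul_nonneg (by positivity : (0 : ℝ) ≤ ν ^ 3) hd]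
  · calc _ ≤ (ν * (4 * π ^ 2 * d) + π * ν ^ 2 * d * (2 * π))
          + π⁻¹ * (1 * (8 * π ^ 3 * d) + π * ν * d * (4 * π ^ 2)) := by gcongr
      _ = (2 * ν ^ 2 + 8 * ν + 8) * (π ^ 2 * d) := by field_simp; ring
      _ ≤ (2 * ν ^ 3 + 8 * ν ^ 3 + 8 * ν ^ 3) * (10 * d) := by
          gcongr
          nlinarith [one_le_pow₀ hν' (n := 3)]
      _ ≤ 200 * ν ^ 3 * d := by nlinarith [mul_nonneg (by positivity : (0 : ℝ) ≤ ν ^ 3) hd]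

lemma norm_kickField_le (hν : 3 ≤ ν) {z : Phase} (hz : |sin (π * z.1.1)| ≤ 1 / 8) :
    ‖kickField ν z‖ ≤ 3 * ν * (2 ^ ν)⁻¹ := by
  have hT {m n : ℕ} (hm : ν - 2 ≤ m) : |trigMonomial m n z.1.1| ≤ (2 ^ ν)⁻¹ :=
    abs_trigMonomial_le_of_abs_sin_le n hν hm hz
  have hν' : (1 : ℝ) ≤ ν := by exact_mod_cast (by omega : 1 ≤ ν)
  have h0 : |(0 : ℝ)| ≤ 3 * ν * (2 ^ ν)⁻¹ := by
    rw [abs_zero]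
    positivity
  refine phase_norm_le_iff.2 ⟨⟨h0, ?_⟩, h0, ?_⟩
  · calc |(kickField ν z).1.2| ≤ ν * (2 ^ ν)⁻¹ * 3 := abs_mul_le
          (abs_mul_le (Nat.abs_cast ν).le (hT (by omega))) (abs_wave_le _)
      _ = 3 * ν * (2 ^ ν)⁻¹ := by ring
  · calc |(kickField ν z).2.2| ≤ π⁻¹ * ((2 ^ ν)⁻¹ * (2 * π)) :=
          abs_mul_le (abs_of_pos (inv_pos.2 pi_pos)).le
            (abs_mul_le (hT (by omega)) (abs_waveDeriv_le _))
      _ = 2 * 1 * (2 ^ ν)⁻¹ := by field_simp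
      _ ≤ 3 * ν * (2 ^ ν)⁻¹ := by gcongr; norm_num

lemma norm_kickFieldDeriv_le (hν : 1 ≤ ν) {z : Phase} {a : ℝ}
    (hT : ∀ m n, ν - 2 ≤ m → |trigMonomial m n z.1.1| ≤ a) :
    ‖kickFieldDeriv ν z‖ ≤ 20 * ν ^ 2 * a := by
  have ha₀ : 0 ≤ a := (abs_nonneg _).trans (hT ν 0 (Nat.sub_le ν 2))
  have ha := abs_mul_le (abs_bumpDeriv₂_le hν (hT _ 2 le_rfl) (hT ν 0 (by omega)))
    (abs_wave_le z.2.1)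
  have hb := abs_mul_le (abs_mul_le (Nat.abs_cast ν).le (hT (ν - 1) 1 (by omega)))
    (abs_waveDeriv_le z.2.1)
  have hc := abs_mul_le (abs_of_pos (inv_pos.2 pi_pos)).le
    (abs_mul_le (hT ν 0 (by omega)) (abs_waveDeriv₂_le z.2.1))
  have hν' : (1 : ℝ) ≤ ν := by exact_mod_cast hν
  refine (norm_hessianMap_le ha hb hc).trans (max_le ?_ ?_)
  · calc _ = π * (3 * ν ^ 2 + 2 * ν) * a := by ring
      _ ≤ 4 * (5 * ν ^ 2) * a := by
          gcongr
          exacts [pi_le_four, by nlinarith]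
      _ = 20 * ν ^ 2 * a := by ring
  · calc _ = π * (2 * ν + 4) * a := by field_simp
      _ ≤ 3.15 * (6 * ν ^ 2) * a := by
          gcongr
          exacts [pi_lt_d2.le, by nlinarith]
      _ ≤ 20 * ν ^ 2 * a := by
          rw [← mul_assoc]
          gcongr
          norm_num

lemma norm_kickFieldDeriv_le_of_abs_sin_le (hν : 3 ≤ ν) {z : Phase}
    (hz : |sin (π * z.1.1)| ≤ 1 / 8) : ‖kickFieldDeriv ν z‖ ≤ 20 * ν ^ 2 * (2 ^ ν)⁻¹ :=
  norm_kickFieldDeriv_le (by omega) fun _ n hm => abs_trigMonomial_le_of_abs_sin_le n hν hm hz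

lemma lipschitzWith_kickField (hν : 1 ≤ ν) : LipschitzWith (20 * ν ^ 2) (kickField ν) :=
  lipschitzWith_of_nnnorm_fderiv_le (𝕜 := ℝ)
    (fun z => (hasFDerivAt_kickField hν z).differentiableAt) fun z => by
      rw [(hasFDerivAt_kickField hν z).fderiv, ← NNReal.coe_le_coe, coe_nnnorm]
      push_cast
      simpa using norm_kickFieldDeriv_le hν fun m n _ => abs_trigMonomial_le_one m n z.1.1

section Centre

lemma trigMonomial_half_add_int_of_pos (m : ℕ) {n : ℕ} (hn : n ≠ 0) (k : ℤ) :
    trigMonomial m n (1 / 2 + k) = 0 := by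
  have hcos : cos (π * (1 / 2 + k)) = 0 := by
    rw [show π * (1 / 2 + k) = π / 2 + k * π by ring, cos_add_int_mul_pi, cos_pi_div_two, mul_zero]
  rw [trigMonomial, hcos, zero_pow hn, mul_zero]

lemma trigMonomial_half_add_int_zero (hν : Even ν) (k : ℤ) :
    trigMonomial ν 0 (1 / 2 + k) = 1 := by
  obtain ⟨m, rfl⟩ := hν
  have hsin : sin (π * (1 / 2 + k)) ^ 2 = 1 := by
    rw [show π * (1 / 2 + k) = π / 2 + k * π by ring, sin_add_int_mul_pi, sin_pi_div_two, mul_one,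
      ← zpow_natCast, ← zpow_mul, mul_comm, zpow_mul]
    simp
  rw [trigMonomial, pow_zero, mul_one, ← two_mul, pow_mul, hsin, one_pow]

lemma waveAngle_int (j : ℤ) : 2 * π * ((j : ℝ) + 6⁻¹) = π / 3 + j * (2 * π) := by ring

lemma wave_int (j : ℤ) : wave j = 2 + √3 / 2 := by
  rw [wave, waveAngle_int, sin_add_int_mul_two_pi, sin_pi_div_three]

lemma waveDeriv_int (j : ℤ) : waveDeriv j = π := by
  rw [waveDeriv, waveAngle_int, cos_add_int_mul_two_pi, cos_pi_div_three]
  ring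

lemma waveDeriv₂_int (j : ℤ) : waveDeriv₂ j = -(2 * √3 * π ^ 2) := by
  rw [waveDeriv₂, waveAngle_int, sin_add_int_mul_two_pi, sin_pi_div_three]
  ring

lemma kickField_centre (hν : Even ν) (k j : ℤ) (I J : ℝ) :
    kickField ν ((1 / 2 + k, I), (j, J)) = ((0, 0), (0, 1)) := by
  simp [kickField, bumpDeriv, trigMonomial_half_add_int_of_pos, -one_div,
    trigMonomial_half_add_int_zero hν, waveDeriv_int]

lemma kickFieldDeriv_centre (hν : Even ν) (k j : ℤ) (I J : ℝ) :
    kickFieldDeriv ν ((1 / 2 + k, I), (j, J)) =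
      hessianMap (-(π * ν * (2 + √3 / 2))) 0 (-(2 * √3 * π)) := by
  simp only [kickFieldDeriv, bumpDeriv, bumpDeriv₂, trigMonomial_half_add_int_of_pos _ two_ne_zero,
    trigMonomial_half_add_int_of_pos _ one_ne_zero, trigMonomial_half_add_int_zero hν, wave_int,
    waveDeriv₂_int]
  congr 1
  · ring
  · ring
  · field_simp

end Centre

end Kick

/-! ### Planar frames and linearised steps -/

section Frames

/-- The determinant of the matrix with columns `v` and `w`. -/
def cross (v w : ℝ × ℝ) : ℝ := v.1 * w.2 - v.2 * w.1

lemma cross_smul_smul (a b : ℝ) (v w : ℝ × ℝ) : cross (a • v) (b • w) = a * b * cross v w := by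
  simp only [cross, Prod.smul_fst, Prod.smul_snd, smul_eq_mul]
  ring

lemma abs_cross_le (v w : ℝ × ℝ) : |cross v w| ≤ 2 * ‖v‖ * ‖w‖ := by
  have h₁ := mul_le_mul (norm_fst_le v) (norm_snd_le w) (norm_nonneg _) (norm_nonneg _)
  have h₂ := mul_le_mul (norm_snd_le v) (norm_fst_le w) (norm_nonneg _) (norm_nonneg _)
  rw [← norm_mul] at h₁ h₂
  exact (norm_sub_le (v.1 * w.2) (v.2 * w.1)).trans (by linarith)

/-- The linear map `z ↦ z.1 • v + z.2 • w` with columns `v` and `w`. -/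
def columnsMap (v w : ℝ × ℝ) : (ℝ × ℝ) →L[ℝ] (ℝ × ℝ) :=
  (ContinuousLinearMap.toSpanSingleton ℝ v).coprod (ContinuousLinearMap.toSpanSingleton ℝ w)

/-- The coordinates in the basis `(v, w)`, by Cramer's rule. -/
def cramer (v w : ℝ × ℝ) : (ℝ × ℝ) →L[ℝ] (ℝ × ℝ) :=
  (cross v w)⁻¹ • columnsMap (w.2, -v.2) (-w.1, v.1)

lemma columnsMap_apply (v w z : ℝ × ℝ) : columnsMap v w z = z.1 • v + z.2 • w := rfl

lemma cramer_apply (v w x : ℝ × ℝ) :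
    cramer v w x = (cross v w)⁻¹ • (cross x w, cross v x) := by
  simp only [cramer, cross, smul_apply, columnsMap_apply]
  congr 1
  ext <;> simp <;> ring

/-- A basis of the plane as a continuous linear equivalence. -/
def columns (v w : ℝ × ℝ) (h : cross v w ≠ 0) : (ℝ × ℝ) ≃L[ℝ] (ℝ × ℝ) :=
  ContinuousLinearEquiv.equivOfInverse (columnsMap v w) (cramer v w)
    (fun z => by
      rw [cramer_apply, columnsMap_apply]
      have h' := h
      simp only [cross] at h'
      ext <;> simp [cross] <;> field_simp <;> ring)
    (fun z => by
      rw [cramer_apply, columnsMap_apply]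
      have h' := h
      simp only [cross] at h'
      ext <;> simp [cross] <;> field_simp <;> ring)

variable {v w v' w' : ℝ × ℝ} {A D : ℝ}

lemma norm_smul_add_smul_le (v w z : ℝ × ℝ) : ‖z.1 • v + z.2 • w‖ ≤ (‖v‖ + ‖w‖) * ‖z‖ := by
  refine (norm_add_le _ _).trans ?_
  rw [norm_smul, norm_smul, add_mul, mul_comm, mul_comm ‖z.2‖]
  gcongr
  · exact norm_fst_le z
  · exact norm_snd_le z

lemma norm_columns_symm_le (h : cross v w ≠ 0) (hv : ‖v‖ ≤ A) (hw : ‖w‖ ≤ A) (hD : 0 < D)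
    (hvw : D ≤ |cross v w|) (x : ℝ × ℝ) : ‖(columns v w h).symm x‖ ≤ 2 * A / D * ‖x‖ := by
  have hcross : ‖(cross x w, cross v x)‖ ≤ 2 * A * ‖x‖ := by
    rw [norm_prod_le_iff]
    constructor
    · exact (abs_cross_le x w).trans (by nlinarith [norm_nonneg x])
    · exact (abs_cross_le v x).trans (by nlinarith [norm_nonneg x])
  calc ‖(columns v w h).symm x‖ = |cross v w|⁻¹ * ‖(cross x w, cross v x)‖ := by
        rw [← abs_inv, ← norm_eq_abs, ← norm_smul, ← cramer_apply]; rfl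
    _ ≤ D⁻¹ * (2 * A * ‖x‖) := by gcongr
    _ = 2 * A / D * ‖x‖ := by ring

/-- The frame of `Phase` with stable columns `v`, `v'` and unstable columns `w`, `w'`, the first
of each pair spanning the pendulum block and the second the rotator block. -/
def frame (v w v' w' : ℝ × ℝ) (h : cross v w ≠ 0) (h' : cross v' w' ≠ 0) :
    ((ℝ × ℝ) × (ℝ × ℝ)) ≃L[ℝ] Phase :=
  (ContinuousLinearEquiv.prodProdProdComm ℝ ℝ ℝ ℝ ℝ).trans
    ((columns v w h).prodCongr (columns v' w' h'))

lemma frame_apply (h : cross v w ≠ 0) (h' : cross v' w' ≠ 0) (z : (ℝ × ℝ) × (ℝ × ℝ)) :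
    frame v w v' w' h h' z = (z.1.1 • v + z.2.1 • w, z.1.2 • v' + z.2.2 • w') := rfl

lemma norm_frame_le (h : cross v w ≠ 0) (h' : cross v' w' ≠ 0) (hv : ‖v‖ ≤ A) (hw : ‖w‖ ≤ A)
    (hv' : ‖v'‖ ≤ A) (hw' : ‖w'‖ ≤ A) (z : (ℝ × ℝ) × (ℝ × ℝ)) :
    ‖frame v w v' w' h h' z‖ ≤ 2 * A * ‖z‖ := by
  have hz₁ : ‖(z.1.1, z.2.1)‖ ≤ ‖z‖ := norm_prod_le_iff.2
    ⟨(norm_fst_le z.1).trans (norm_fst_le z), (norm_fst_le z.2).trans (norm_snd_le z)⟩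
  have hz₂ : ‖(z.1.2, z.2.2)‖ ≤ ‖z‖ := norm_prod_le_iff.2
    ⟨(norm_snd_le z.1).trans (norm_fst_le z), (norm_snd_le z.2).trans (norm_snd_le z)⟩
  rw [frame_apply, norm_prod_le_iff]
  constructor
  · exact (norm_smul_add_smul_le v w (z.1.1, z.2.1)).trans
      (mul_le_mul (by linarith) hz₁ (norm_nonneg _) (by linarith [norm_nonneg v]))
  · exact (norm_smul_add_smul_le v' w' (z.1.2, z.2.2)).trans
      (mul_le_mul (by linarith) hz₂ (norm_nonneg _) (by linarith [norm_nonneg v]))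

lemma norm_frame_symm_le (h : cross v w ≠ 0) (h' : cross v' w' ≠ 0) (hv : ‖v‖ ≤ A)
    (hw : ‖w‖ ≤ A) (hv' : ‖v'‖ ≤ A) (hw' : ‖w'‖ ≤ A) (hD : 0 < D) (hvw : D ≤ |cross v w|)
    (hvw' : D ≤ |cross v' w'|) (x : Phase) :
    ‖(frame v w v' w' h h').symm x‖ ≤ 2 * A / D * ‖x‖ := by
  have hA : 0 ≤ 2 * A / D := by have := (norm_nonneg v).trans hv; positivity
  have h₁ := (norm_columns_symm_le h hv hw hD hvw x.1).trans
    (mul_le_mul_of_nonneg_left (norm_fst_le x) hA)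
  have h₂ := (norm_columns_symm_le h' hv' hw' hD hvw' x.2).trans
    (mul_le_mul_of_nonneg_left (norm_snd_le x) hA)
  rw [norm_prod_le_iff] at h₁ h₂
  exact norm_prod_le_iff.2 ⟨norm_prod_le_iff.2 ⟨h₁.1, h₂.1⟩, norm_prod_le_iff.2 ⟨h₁.2, h₂.2⟩⟩

/-- The diagonal map of the plane with entries `a` and `b`. -/
def diag (a b : ℝ) : (ℝ × ℝ) →L[ℝ] (ℝ × ℝ) :=
  (ContinuousLinearMap.toSpanSingleton ℝ a).prodMap (ContinuousLinearMap.toSpanSingleton ℝ b)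

lemma diag_apply (a b : ℝ) (z : ℝ × ℝ) : diag a b z = (z.1 * a, z.2 * b) := rfl

lemma norm_diag_le {a b θ : ℝ} (ha : |a| ≤ θ) (hb : |b| ≤ θ) : ‖diag a b‖ ≤ θ := by
  have hθ : 0 ≤ θ := (abs_nonneg a).trans ha
  refine ContinuousLinearMap.opNorm_le_bound _ hθ fun z => ?_
  rw [diag_apply, norm_prod_le_iff, norm_mul, norm_mul, mul_comm, mul_comm ‖z.2‖]
  exact ⟨mul_le_mul ha (norm_fst_le z) (norm_nonneg _) hθ,
    mul_le_mul hb (norm_snd_le z) (norm_nonneg _) hθ⟩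

lemma diag_inv_diag {a b : ℝ} (ha : a ≠ 0) (hb : b ≠ 0) (z : ℝ × ℝ) :
    diag a⁻¹ b⁻¹ (diag a b z) = z := by
  simp only [diag_apply, mul_inv_cancel_right₀ ha, mul_inv_cancel_right₀ hb]

lemma norm_map_columns_sub_le (T : (ℝ × ℝ) →L[ℝ] (ℝ × ℝ)) (v w v' w' : ℝ × ℝ) (a b s u : ℝ) :
    ‖T (s • v + u • w) - ((s * a) • v' + (u * b) • w')‖
      ≤ (‖T v - a • v'‖ + ‖T w - b • w'‖) * ‖(s, u)‖ := by
  have hsplit : T (s • v + u • w) - ((s * a) • v' + (u * b) • w')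
      = (s, u).1 • (T v - a • v') + (s, u).2 • (T w - b • w') := by
    rw [map_add, map_smul, map_smul]
    module
  rw [hsplit]
  exact norm_smul_add_smul_le _ _ _

end Frames

section LinearSteps

/-- The shear `(θ, I) ↦ (θ, I + sθ)`, the linear part of a kick. -/
def impulse (s : ℝ) : (ℝ × ℝ) →L[ℝ] (ℝ × ℝ) := columnsMap (1, s) (0, 1)

lemma impulse_apply (s : ℝ) (z : ℝ × ℝ) : impulse s z = (z.1, z.2 + s * z.1) := by
  ext <;> simp [impulse, columnsMap_apply, mul_comm, add_comm]

lemma impulse_zero_apply (z : ℝ × ℝ) : impulse 0 z = z := by simp [impulse_apply]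

lemma norm_impulse_le (s : ℝ) : ‖impulse s‖ ≤ 1 + |s| := by
  refine ContinuousLinearMap.opNorm_le_bound _ (by positivity) fun z => ?_
  have h₁ := norm_fst_le z
  have h₂ := norm_snd_le z
  rw [impulse_apply, norm_prod_le_iff]
  constructor
  · nlinarith [mul_nonneg (abs_nonneg s) (norm_nonneg z)]
  · refine (norm_add_le _ _).trans ?_
    rw [norm_mul, norm_eq_abs s, add_mul, one_mul]
    gcongr

/-- The free rotator `(θ, I) ↦ (θ + I, I)`. -/
def drift : (ℝ × ℝ) →L[ℝ] (ℝ × ℝ) := columnsMap (1, 0) (1, 1)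

lemma drift_apply (z : ℝ × ℝ) : drift z = (z.1 + z.2, z.2) := by
  ext <;> simp [drift, columnsMap_apply]

section Pendulum

lemma variationalSol_eq_add (a b t : ℝ) :
    variationalSol a b t = a • variationalSol 1 0 t + b • variationalSol 0 1 t := by
  ext <;> simp [variationalSol]

lemma variationalSol_zero (a b : ℝ) : variationalSol a b 0 = (a, 4 * π * b) := by
  simp only [variationalSol, decayMode, growthMode, decayModeDeriv, growthModeDeriv, mul_zero,
    cosh_zero, sinh_zero, tanh_zero]
  ext
  · simp
  · simp
    ring

/-- The time-reversing reflection `(θ, I) ↦ (θ, -I)`. -/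
def reflect : (ℝ × ℝ) →L[ℝ] (ℝ × ℝ) :=
  (ContinuousLinearMap.fst ℝ ℝ ℝ).prod (-ContinuousLinearMap.snd ℝ ℝ ℝ)

lemma reflect_apply (z : ℝ × ℝ) : reflect z = (z.1, -z.2) := rfl

lemma norm_reflect (z : ℝ × ℝ) : ‖reflect z‖ = ‖z‖ := by simp [reflect_apply, Prod.norm_def]

lemma variationalSol_neg (a b t : ℝ) :
    variationalSol a b (-t) = reflect (variationalSol a (-b) t) := by
  simp only [variationalSol, reflect_apply, decayMode_neg, decayModeDeriv_neg, growthMode_neg,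
    growthModeDeriv_neg]
  ext
  · ring
  · ring

lemma cross_variationalSol (a b a' b' t : ℝ) :
    cross (variationalSol a b t) (variationalSol a' b' t) = 4 * π * (a * b' - b * a') := by
  simp only [cross, variationalSol]
  linear_combination (a * b' - b * a') * wronskian_modes t

/-- The time-one transition matrix, from time `t`, of the variational equation along the
separatrix. -/
def transition (t : ℝ) : (ℝ × ℝ) →L[ℝ] (ℝ × ℝ) :=
  (columnsMap (variationalSol 1 0 (t + 1)) (variationalSol 0 1 (t + 1))).comp
    (cramer (variationalSol 1 0 t) (variationalSol 0 1 t))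

lemma transition_variationalSol (a b t : ℝ) :
    transition t (variationalSol a b t) = variationalSol a b (t + 1) := by
  have hcoord : cramer (variationalSol 1 0 t) (variationalSol 0 1 t) (variationalSol a b t)
      = (a, b) := by
    have hπ := pi_ne_zero
    simp only [cramer_apply, cross_variationalSol]
    ext <;> simp <;> field_simp
  rw [transition, ContinuousLinearMap.comp_apply, hcoord, columnsMap_apply,
    ← variationalSol_eq_add]

/-- The variational equation from time `i` to `i + 1` along the separatrix, followed by the kick
of strength `κ` if time `0` has been reached. -/
def pendulumStep (κ : ℝ) (i : ℤ) : (ℝ × ℝ) →L[ℝ] (ℝ × ℝ) :=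
  (impulse (if i + 1 = 0 then -(4 * π * κ) else 0)).comp (transition i)

/-- The solution of the kicked variational equation which decays forward in time, rescaled by its
growth rate. -/
def stableVec (κ t : ℝ) : ℝ × ℝ :=
  exp (2 * π * t) • variationalSol 1 (if 0 ≤ t then 0 else κ) t

/-- The solution of the kicked variational equation which decays backward in time, rescaled by its
growth rate. -/
def unstableVec (κ t : ℝ) : ℝ × ℝ :=
  exp (-(2 * π * t)) • variationalSol 1 (if 0 ≤ t then -κ else 0) t

lemma pendulumStep_variationalSol (κ a b : ℝ) (i : ℤ) :
    pendulumStep κ i (variationalSol a b i)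
      = variationalSol a (if i + 1 = 0 then b - κ * a else b) (i + 1) := by
  rw [pendulumStep, ContinuousLinearMap.comp_apply, transition_variationalSol]
  split_ifs with hi
  · have hi' : (i : ℝ) + 1 = 0 := by exact_mod_cast hi
    rw [hi', variationalSol_zero, variationalSol_zero, impulse_apply]
    ext
    · simp
    · simp
      ring
  · exact impulse_zero_apply _

lemma ite_nonneg_add_one {α : Type*} (i : ℤ) {a b : α} {g : α → α} (hg : g b = a) :
    (if i + 1 = 0 then g (if (0 : ℝ) ≤ i then a else b) else if (0 : ℝ) ≤ i then a else b)
      = if (0 : ℝ) ≤ i + 1 then a else b := by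
  rcases lt_trichotomy (i + 1) 0 with hi | hi | hi
  · have h₁ : ¬ (0 : ℝ) ≤ i := by exact_mod_cast (by omega : ¬ 0 ≤ i)
    have h₂ : ¬ (0 : ℝ) ≤ i + 1 := by exact_mod_cast hi.not_ge
    rw [if_neg hi.ne, if_neg h₁, if_neg h₂]
  · have h₁ : ¬ (0 : ℝ) ≤ i := by exact_mod_cast (by omega : ¬ 0 ≤ i)
    have h₂ : (0 : ℝ) ≤ i + 1 := by exact_mod_cast hi.ge
    rw [if_pos hi, if_neg h₁, if_pos h₂, hg]
  · have h₁ : (0 : ℝ) ≤ i := by exact_mod_cast (by omega : 0 ≤ i)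
    have h₂ : (0 : ℝ) ≤ i + 1 := by exact_mod_cast hi.le
    rw [if_neg hi.ne', if_pos h₁, if_pos h₂]

lemma pendulumStep_stableVec (κ : ℝ) (i : ℤ) :
    pendulumStep κ i (stableVec κ i) = exp (-(2 * π)) • stableVec κ (i + 1) := by
  rw [stableVec, stableVec, map_smul, pendulumStep_variationalSol, smul_smul, ← exp_add]
  congr 2
  · ring
  · exact ite_nonneg_add_one i (g := fun b => b - κ * 1) (by ring)

lemma pendulumStep_unstableVec (κ : ℝ) (i : ℤ) :
    pendulumStep κ i (unstableVec κ i) = exp (2 * π) • unstableVec κ (i + 1) := by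
  rw [unstableVec, unstableVec, map_smul, pendulumStep_variationalSol, smul_smul, ← exp_add]
  congr 2
  · ring
  · exact ite_nonneg_add_one i (g := fun b => b - κ * 1) (by ring)

lemma cross_stableVec_unstableVec (κ t : ℝ) :
    cross (stableVec κ t) (unstableVec κ t) = -(4 * π * κ) := by
  rw [stableVec, unstableVec, cross_smul_smul, ← exp_add, add_neg_cancel, exp_zero,
    cross_variationalSol]
  split_ifs <;> ring

variable {κ t T N : ℝ}

lemma norm_exp_smul_variationalSol_le {b : ℝ} (hb : |b| ≤ 1) (hbt : b = 0 ∨ t ≤ 0) :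
    ‖exp (2 * π * t) • variationalSol 1 b t‖ ≤ 34 := by
  have h₁ := norm_variationalSol_one_zero_le t
  have h₂ := norm_variationalSol_zero_one_le t
  have hxy : exp (2 * π * t) * exp (-(2 * π * t)) = 1 := by simp [← exp_add]
  rw [norm_smul, norm_eq_abs, abs_exp]
  rcases hbt with rfl | ht
  · have h₃ : exp (-(2 * π * |t|)) ≤ exp (-(2 * π * t)) := by
      gcongr
      exact le_abs_self t
    calc _ ≤ exp (2 * π * t) * (14 * exp (-(2 * π * t))) := by gcongr; linarith
      _ = 14 := by linear_combination 14 * hxy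
      _ ≤ 34 := by norm_num
  · rw [abs_of_nonpos ht, mul_neg, neg_neg] at h₁
    rw [abs_of_nonpos ht, mul_neg] at h₂
    have hx : exp (2 * π * t) ≤ 1 := exp_le_one_iff.2 (by nlinarith [pi_pos])
    rw [variationalSol_eq_add, one_smul]
    calc _ ≤ exp (2 * π * t) * (14 * exp (2 * π * t) + 1 * (20 * exp (-(2 * π * t)))) := by
          gcongr
          refine (norm_add_le _ _).trans (add_le_add h₁ ?_)
          rw [norm_smul]
          exact mul_le_mul hb h₂ (norm_nonneg _) zero_le_one
      _ = 14 * (exp (2 * π * t) * exp (2 * π * t)) + 20 := by linear_combination 20 * hxy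
      _ ≤ 14 * (1 * 1) + 20 := by gcongr
      _ = 34 := by norm_num

lemma norm_stableVec_le (hκ : |κ| ≤ 1) : ‖stableVec κ t‖ ≤ 34 := by
  rw [stableVec]
  split_ifs with ht
  · exact norm_exp_smul_variationalSol_le (by simp) (.inl rfl)
  · exact norm_exp_smul_variationalSol_le hκ (.inr (not_le.1 ht).le)

lemma norm_unstableVec_le (hκ : |κ| ≤ 1) : ‖unstableVec κ t‖ ≤ 34 := by
  rw [unstableVec, ← norm_reflect, map_smul, ← neg_neg (if 0 ≤ t then -κ else 0),
    ← variationalSol_neg, ← mul_neg]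
  split_ifs with ht
  · exact norm_exp_smul_variationalSol_le (by simpa using hκ) (.inr (neg_nonpos.2 ht))
  · exact norm_exp_smul_variationalSol_le (by simp) (.inl neg_zero)

/-- The factor by which the passage from one cycle to the next multiplies the stable vector; its
inverse is the factor for the unstable vector. -/
def cycleFactor (κ : ℝ) : ℝ := -(4 / κ)

lemma norm_stableVec_sub_le (hκ : 0 < κ) (hT : 0 ≤ T) (hN : 0 < N) :
    ‖stableVec κ T - cycleFactor κ • stableVec κ (-N)‖
      ≤ 30 * exp (-(2 * π * T)) + (56 / κ + 120) * exp (-(2 * π * N)) := by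
  have hT' := norm_exp_smul_variationalSol_sub_le hT
  have hN' := norm_exp_neg_smul_variationalSol_sub_le hN.le
  have hN₀ := norm_variationalSol_one_zero_le N
  rw [abs_of_pos hN] at hN₀
  have hy : exp (-(2 * π * N)) ≤ 1 := exp_le_one_iff.2 (by nlinarith [pi_pos])
  have hsplit : stableVec κ T - cycleFactor κ • stableVec κ (-N)
      = (exp (2 * π * T) • variationalSol 1 0 T - (2, -(4 * π)))
        + ((4 / κ * exp (-(2 * π * N))) • reflect (variationalSol 1 0 N)
          - (4 : ℝ) • reflect (exp (-(2 * π * N)) • variationalSol 0 1 N - (1 / 2, π))) := by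
    rw [stableVec, stableVec, if_pos hT, if_neg (by linarith), variationalSol_neg,
      variationalSol_eq_add 1 (-κ), cycleFactor]
    simp only [map_add, map_sub, map_smul, reflect_apply, mul_neg]
    ext <;> simp <;> field_simp <;> ring
  rw [hsplit]
  refine (norm_add_le _ _).trans (add_le_add hT' ((norm_sub_le _ _).trans ?_))
  rw [norm_smul, norm_smul, norm_reflect, norm_reflect, norm_of_nonneg (by positivity),
    norm_of_nonneg (by positivity)]
  calc _ ≤ 4 / κ * 1 * (14 * exp (-(2 * π * N))) + 4 * (30 * exp (-(2 * π * N))) := by gcongr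
    _ = _ := by ring

lemma norm_unstableVec_sub_le (hκ₀ : 0 < κ) (hκ₁ : κ ≤ 1) (hT : 0 ≤ T) (hN : 0 < N) :
    ‖unstableVec κ T - (cycleFactor κ)⁻¹ • unstableVec κ (-N)‖
      ≤ 44 * exp (-(2 * π * T)) + 8 * exp (-(2 * π * N)) := by
  have hT' := norm_exp_neg_smul_variationalSol_sub_le hT
  have hN' := norm_exp_smul_variationalSol_sub_le hN.le
  have hT₀ := norm_variationalSol_one_zero_le T
  rw [abs_of_nonneg hT] at hT₀
  have hy : exp (-(2 * π * T)) ≤ 1 := exp_le_one_iff.2 (by nlinarith [pi_pos])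
  have hsplit : unstableVec κ T - (cycleFactor κ)⁻¹ • unstableVec κ (-N)
      = (exp (-(2 * π * T)) • variationalSol 1 0 T
          - κ • (exp (-(2 * π * T)) • variationalSol 0 1 T - (1 / 2, π)))
        + (κ / 4) • reflect (exp (2 * π * N) • variationalSol 1 0 N - (2, -(4 * π))) := by
    rw [unstableVec, unstableVec, if_pos hT, if_neg (by linarith), variationalSol_neg,
      variationalSol_eq_add 1 (-κ), cycleFactor, neg_zero]
    simp only [map_sub, map_smul, reflect_apply, mul_neg]
    ext <;> simp <;> field_simp <;> ring
  rw [hsplit]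
  refine (norm_add_le _ _).trans (add_le_add ((norm_sub_le _ _).trans ?_) ?_)
  · rw [norm_smul, norm_smul, norm_of_nonneg (exp_pos _).le, norm_of_nonneg hκ₀.le]
    calc _ ≤ 1 * (14 * exp (-(2 * π * T))) + 1 * (30 * exp (-(2 * π * T))) := by gcongr
      _ = _ := by ring
  · rw [norm_smul, norm_reflect, norm_of_nonneg (by positivity)]
    calc _ ≤ 1 / 4 * (30 * exp (-(2 * π * N))) := by gcongr
      _ ≤ _ := by linarith [exp_pos (-(2 * π * N))]

end Pendulum

section Rotator

/-- The free rotator from time `i` to `i + 1`, followed by the kick `c` if time `0` has been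
reached. -/
def rotatorStep (c : ℝ) (i : ℤ) : (ℝ × ℝ) →L[ℝ] (ℝ × ℝ) :=
  (impulse (if i + 1 = 0 then c else 0)).comp drift

/-- The orbit under `rotatorStep (c / q)` which is multiplied by `μ` after one cycle of `q` steps,
when `μ ^ 2 - (2 + c) * μ + 1 = 0`. -/
def rotatorVec (q c μ t : ℝ) : ℝ × ℝ :=
  let ρ := (if 0 ≤ t then μ - 1 else μ - 1 - c) / q
  (1 + t * ρ, ρ)

variable {q c μ : ℝ}

lemma rotatorStep_rotatorVec (q c μ : ℝ) (i : ℤ) :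
    rotatorStep (c / q) i (rotatorVec q c μ i) = rotatorVec q c μ (i + 1) := by
  simp only [rotatorStep, rotatorVec, ContinuousLinearMap.comp_apply, drift_apply, impulse_apply]
  rcases lt_trichotomy (i + 1) 0 with hi | hi | hi
  · have h₁ : ¬ (0 : ℝ) ≤ i := by exact_mod_cast (by omega : ¬ 0 ≤ i)
    have h₂ : ¬ (0 : ℝ) ≤ i + 1 := by exact_mod_cast hi.not_ge
    rw [if_neg hi.ne, if_neg h₁, if_neg h₂]
    ext <;> simp only <;> ring
  · have h₁ : ¬ (0 : ℝ) ≤ i := by exact_mod_cast (by omega : ¬ 0 ≤ i)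
    have h₂ : (0 : ℝ) ≤ i + 1 := by exact_mod_cast hi.ge
    have hi' : (i : ℝ) = -1 := by exact_mod_cast (by omega : i = -1)
    rw [if_pos hi, if_neg h₁, if_pos h₂, hi']
    ext <;> simp only <;> ring
  · have h₁ : (0 : ℝ) ≤ i := by exact_mod_cast (by omega : 0 ≤ i)
    have h₂ : (0 : ℝ) ≤ i + 1 := by exact_mod_cast hi.le
    rw [if_neg hi.ne', if_pos h₁, if_pos h₂]
    ext <;> simp only <;> ring

lemma rotatorVec_eq_smul (hq : q ≠ 0) (hμ : μ ^ 2 - (2 + c) * μ + 1 = 0) {t : ℝ} (ht : 0 ≤ t)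
    (ht' : t - q < 0) : rotatorVec q c μ t = μ • rotatorVec q c μ (t - q) := by
  simp only [rotatorVec, if_pos ht, if_neg ht'.not_ge]
  ext <;> simp only [Prod.smul_mk, smul_eq_mul] <;> field_simp
  · linear_combination (q - t) * hμ
  · linear_combination -hμ

lemma cross_rotatorVec (q c μ μ' t : ℝ) :
    cross (rotatorVec q c μ t) (rotatorVec q c μ' t) = (μ' - μ) / q := by
  simp only [cross, rotatorVec]
  split_ifs <;> ring

lemma norm_rotatorVec_le (hq : 1 ≤ q) (hc : |c| ≤ 11) (hμ : |μ| ≤ 10) {t : ℝ} (ht : |t| ≤ q) :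
    ‖rotatorVec q c μ t‖ ≤ 23 := by
  have hq₀ : 0 < q := by linarith
  have hslope : |if 0 ≤ t then μ - 1 else μ - 1 - c| ≤ 22 := by
    rw [abs_le] at hc hμ ⊢
    split_ifs <;> constructor <;> linarith
  simp only [rotatorVec, norm_prod_le_iff, norm_eq_abs]
  constructor
  · calc _ ≤ |1| + |t| * (|if 0 ≤ t then μ - 1 else μ - 1 - c| / q) := by
          rw [← abs_of_pos hq₀, ← abs_div, ← abs_mul, abs_of_pos hq₀]
          exact abs_add_le _ _
      _ ≤ 1 + q * (22 / q) := by rw [abs_one]; gcongr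
      _ = 23 := by field_simp; norm_num
  · rw [abs_div, abs_of_pos hq₀, div_le_iff₀ hq₀]
    linarith

lemma exists_rotator_multiplier (hc : c ∈ Set.Icc (-11 : ℝ) (-10)) :
    ∃ μ : ℝ, μ ^ 2 - (2 + c) * μ + 1 = 0 ∧ μ ≠ 0 ∧ |μ| ≤ 1 / 4 ∧ |μ⁻¹| ≤ 10 := by
  obtain ⟨hc₁, hc₂⟩ := hc
  obtain ⟨μ, ⟨hμ₁, hμ₂⟩, hroot⟩ : (0 : ℝ) ∈ (fun μ : ℝ => μ ^ 2 - (2 + c) * μ + 1) ''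
      Set.Icc (-(1 / 4)) 0 :=
    intermediate_value_Icc (by norm_num) (by fun_prop) ⟨by linarith, by norm_num⟩
  have hμ₀ : μ ≠ 0 := by rintro rfl; norm_num at hroot
  have hinv : μ⁻¹ = 2 + c - μ := by
    field_simp
    linear_combination hroot
  refine ⟨μ, hroot, hμ₀, abs_le.2 ⟨hμ₁, by linarith⟩, ?_⟩
  rw [hinv, abs_le]
  constructor <;> linarith

end Rotator

end LinearSteps

/-! ### Frames adapted to a cycle -/

section Cycles

/-- The first position of a cycle of `q` steps; the kick at the middle of the cycle acts at
position `0`. -/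
def cycleStart (q : ℕ) : ℤ := -(q / 2)

/-- The last position of a cycle of `q` steps. -/
def cycleEnd (q : ℕ) : ℤ := cycleStart q + q - 1

/-- The number of the cycle containing time `n`; cycle `k` is centred at time `k * q`. -/
def cycleIndex (q : ℕ) (n : ℤ) : ℤ := (n - cycleStart q) / q

/-- The position of time `n` in its cycle. -/
def cyclePos (q : ℕ) (n : ℤ) : ℤ := (n - cycleStart q) % q + cycleStart q

/-- The position following `i`, cyclically. -/
def succPos (q : ℕ) (i : ℤ) : ℤ := if i = cycleEnd q then cycleStart q else i + 1

variable {q : ℕ} {n i : ℤ}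

lemma cycleStart_neg (hq : 2 ≤ q) : cycleStart q < 0 := by
  rw [cycleStart]
  omega

lemma cycleEnd_nonneg (hq : 1 ≤ q) : 0 ≤ cycleEnd q := by
  rw [cycleEnd, cycleStart]
  omega

lemma cyclePos_mem_Icc (hq : 1 ≤ q) (n : ℤ) :
    cyclePos q n ∈ Set.Icc (cycleStart q) (cycleEnd q) := by
  have h₀ := Int.emod_nonneg (n - cycleStart q) (by omega : (q : ℤ) ≠ 0)
  have h₁ := Int.emod_lt_of_pos (n - cycleStart q) (by omega : (0 : ℤ) < q)
  rw [Set.mem_Icc, cyclePos, cycleEnd]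
  omega

lemma cycleIndex_mul_add_cyclePos (q : ℕ) (n : ℤ) : cycleIndex q n * q + cyclePos q n = n := by
  have := Int.emod_add_mul_ediv (n - cycleStart q) q
  rw [cycleIndex, cyclePos]
  linarith

lemma cycle_eq_of_mem_Icc (hi : i ∈ Set.Icc (cycleStart q) (cycleEnd q)) (k : ℤ) :
    cycleIndex q (k * q + i) = k ∧ cyclePos q (k * q + i) = i := by
  obtain ⟨hi₀, hi₁⟩ := hi
  rw [cycleEnd] at hi₁
  have hq : (q : ℤ) ≠ 0 := by omega
  have hsplit : k * q + i - cycleStart q = (i - cycleStart q) + q * k := by ring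
  rw [cycleIndex, cyclePos, hsplit, Int.add_mul_ediv_left _ _ hq, Int.add_mul_emod_self_left,
    Int.ediv_eq_zero_of_lt (by omega) (by omega), Int.emod_eq_of_lt (by omega) (by omega)]
  omega

lemma succPos_mem_Icc (hi : i ∈ Set.Icc (cycleStart q) (cycleEnd q)) :
    succPos q i ∈ Set.Icc (cycleStart q) (cycleEnd q) := by
  rw [Set.mem_Icc] at hi ⊢
  rw [succPos]
  split_ifs <;> omega

lemma cycle_add_one (hq : 1 ≤ q) (n : ℤ) :
    cycleIndex q (n + 1) = (if cyclePos q n = cycleEnd q then cycleIndex q n + 1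
      else cycleIndex q n) ∧ cyclePos q (n + 1) = succPos q (cyclePos q n) := by
  have hn := cycleIndex_mul_add_cyclePos q n
  have hsucc : n + 1 = (if cyclePos q n = cycleEnd q then cycleIndex q n + 1
      else cycleIndex q n) * q + succPos q (cyclePos q n) := by
    rw [succPos]
    split_ifs with h
    · rw [h, cycleEnd] at hn
      linear_combination -hn
    · linear_combination -hn
  rw [hsucc]
  exact cycle_eq_of_mem_Icc (succPos_mem_Icc (cyclePos_mem_Icc hq n)) _

end Cycles

section AdaptedColumns

/-- The stable vector of the pendulum block, weighted so that the cycle factor is spread over the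
whole cycle. -/
def stableColumn (q : ℕ) (κ : ℝ) (i : ℤ) : ℝ × ℝ := (cycleEnd q - i + 1 : ℝ) • stableVec κ i

/-- The weighted unstable vector of the pendulum block. -/
def unstableColumn (q : ℕ) (κ : ℝ) (i : ℤ) : ℝ × ℝ :=
  (i - cycleStart q + 1 : ℝ) • unstableVec κ i

/-- The weighted stable vector of the rotator block, for a multiplier `|μ| < 1`. -/
def stableRotatorColumn (q : ℕ) (c μ : ℝ) (i : ℤ) : ℝ × ℝ :=
  (1 + (i - cycleStart q) / q : ℝ) • rotatorVec q c μ i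

/-- The weighted unstable vector of the rotator block, for a multiplier `|μ| < 1`. -/
def unstableRotatorColumn (q : ℕ) (c μ : ℝ) (i : ℤ) : ℝ × ℝ :=
  (1 + (cycleEnd q - i) / q : ℝ) • rotatorVec q c μ⁻¹ i

/-- The contraction rate at position `i` of a weighted pendulum column at distance `d` from its
lightest position. -/
def pendulumRate (q : ℕ) (κ : ℝ) (i : ℤ) (d : ℝ) : ℝ :=
  exp (-(2 * π)) * if i = cycleEnd q then cycleFactor κ / q else (d + 1) / d

/-- The contraction rate at position `i` of a weighted rotator column at distance `d` from its
lightest position. -/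
def rotatorRate (q : ℕ) (μ : ℝ) (i : ℤ) (d : ℝ) : ℝ :=
  if i = cycleEnd q then μ * (2 - 1 / q) else (q + d - 1) / (q + d)

variable {q : ℕ} {κ c μ d ε : ℝ} {i : ℤ}

lemma pendulumRate_ne_zero (hq : 1 ≤ q) (hκ : 0 < κ) (hd : i = cycleEnd q ∨ 1 ≤ d) :
    pendulumRate q κ i d ≠ 0 := by
  have hq₀ : (0 : ℝ) < q := by exact_mod_cast hq
  refine mul_ne_zero (exp_pos _).ne' ?_
  rw [cycleFactor]
  split_ifs with hi
  · exact div_ne_zero (neg_ne_zero.2 (by positivity)) hq₀.ne'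
  · have hd : 1 ≤ d := hd.resolve_left hi
    positivity

lemma abs_pendulumRate_le (hκ : 0 < κ) (hκq : 4 ≤ κ * q) (hd : i = cycleEnd q ∨ 1 ≤ d) :
    |pendulumRate q κ i d| ≤ 1 / 2 := by
  have hq : (0 : ℝ) < q := pos_of_mul_pos_right (by linarith) hκ.le
  have hexp : exp (-(2 * π)) ≤ 1 / 4 := by
    rw [exp_neg, ← one_div]
    gcongr
    linarith [add_one_le_exp (2 * π), pi_gt_three]
  have hlast : |cycleFactor κ / q| ≤ 2 := by
    rw [cycleFactor, neg_div, abs_neg, abs_of_pos (by positivity), div_div, div_le_iff₀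
      (by positivity)]
    linarith
  have hfactor : |if i = cycleEnd q then cycleFactor κ / q else (d + 1) / d| ≤ 2 := by
    split_ifs with hi
    · exact hlast
    · have hd : 1 ≤ d := hd.resolve_left hi
      rw [abs_of_pos (by positivity), div_le_iff₀ (by positivity)]
      linarith
  rw [pendulumRate, abs_mul, abs_exp]
  calc _ ≤ 1 / 4 * (2 : ℝ) := by gcongr
    _ = 1 / 2 := by norm_num

lemma rotatorRate_ne_zero (hq : 1 ≤ q) (hμ : μ ≠ 0) (hd : i = cycleEnd q ∨ 1 ≤ d) :
    rotatorRate q μ i d ≠ 0 := by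
  have hq₁ : (1 : ℝ) ≤ q := by exact_mod_cast hq
  have hinv : 1 / (q : ℝ) ≤ 1 := by rw [div_le_one (by positivity)]; exact hq₁
  rw [rotatorRate]
  split_ifs with hi
  · exact mul_ne_zero hμ (by linarith)
  · have hd : 1 ≤ d := hd.resolve_left hi
    exact (div_pos (by linarith) (by linarith)).ne'

lemma abs_rotatorRate_le (hq : 1 ≤ q) (hμ : |μ| ≤ 1 / 4) (hd : i = cycleEnd q ∨ 1 ≤ d)
    (hdq : d ≤ q) : |rotatorRate q μ i d| ≤ 1 - 1 / (2 * q) := by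
  have hq₁ : (1 : ℝ) ≤ q := by exact_mod_cast hq
  have hinv₀ : 0 < 1 / (q : ℝ) := by positivity
  have hinv : 1 / (q : ℝ) ≤ 1 := by rw [div_le_one (by positivity)]; exact hq₁
  have hhalf : 1 / (2 * q : ℝ) = 1 / 2 * (1 / q) := by ring
  rw [rotatorRate]
  split_ifs with hi
  · have hpos : 0 < 2 - 1 / (q : ℝ) := by linarith
    rw [abs_mul, abs_of_pos hpos, hhalf]
    calc |μ| * (2 - 1 / q) ≤ 1 / 4 * 2 := by gcongr; linarith
      _ ≤ 1 - 1 / 2 * (1 / q) := by linarith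
  · have hd : 1 ≤ d := hd.resolve_left hi
    have hle : 1 / (2 * q : ℝ) ≤ 1 / (q + d) := by gcongr; linarith
    rw [abs_of_pos (div_pos (by linarith) (by linarith)), sub_div, div_self (by linarith)]
    linarith

lemma cast_cycleEnd (q : ℕ) : (cycleEnd q : ℝ) = cycleStart q + q - 1 := by
  rw [cycleEnd]
  push_cast
  rfl

lemma pendulumStep_stableColumn_sub_le (hq : 2 ≤ q) (hκ : 0 < κ) (hκq : 4 ≤ κ * q)
    (hi : i ∈ Set.Icc (cycleStart q) (cycleEnd q))
    (hεT : exp (-(2 * π * (cycleEnd q + 1))) ≤ ε) (hεN : exp (2 * π * cycleStart q) ≤ ε) :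
    ‖pendulumStep κ i (stableColumn q κ i)
      - pendulumRate q κ i (cycleEnd q - i) • stableColumn q κ (succPos q i)‖ ≤ 200 * q * ε := by
  have hq₁ : (1 : ℝ) ≤ q := by exact_mod_cast one_le_two.trans hq
  have hε : 0 < ε := (exp_pos _).trans_le hεT
  rw [stableColumn, stableColumn, map_smul, pendulumStep_stableVec, pendulumRate, succPos]
  split_ifs with hend
  · have hT : (0 : ℝ) ≤ cycleEnd q + 1 := by
      exact_mod_cast add_nonneg (cycleEnd_nonneg (one_le_two.trans hq)) zero_le_one
    have hN : (0 : ℝ) < -cycleStart q := by exact_mod_cast neg_pos.2 (cycleStart_neg hq)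
    have hsub := norm_stableVec_sub_le hκ hT hN
    rw [neg_neg, mul_neg, neg_neg] at hsub
    have hκinv : 56 / κ ≤ 14 * q := by rw [div_le_iff₀ hκ]; linarith
    have hsplit : (cycleEnd q - i + 1 : ℝ) • exp (-(2 * π)) • stableVec κ (i + 1)
        - (exp (-(2 * π)) * (cycleFactor κ / q)) • (cycleEnd q - cycleStart q + 1 : ℝ)
          • stableVec κ (cycleStart q)
        = exp (-(2 * π)) • (stableVec κ (cycleEnd q + 1)
          - cycleFactor κ • stableVec κ (cycleStart q)) := by
      rw [hend, cast_cycleEnd]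
      match_scalars <;> field_simp <;> ring
    rw [hsplit, norm_smul, norm_eq_abs, abs_exp]
    calc _ ≤ 1 * (30 * ε + (14 * q + 120) * ε) := by
          gcongr
          · exact exp_le_one_iff.2 (by linarith [pi_pos])
          · exact hsub.trans (by gcongr)
      _ ≤ 200 * q * ε := by nlinarith
  · have hlt : (i : ℝ) < cycleEnd q := by exact_mod_cast lt_of_le_of_ne hi.2 hend
    have hd : (cycleEnd q - i : ℝ) ≠ 0 := by linarith
    rw [Int.cast_add, Int.cast_one]
    refine (norm_le_zero_iff.2 (sub_eq_zero.2 ?_)).trans (by positivity)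
    match_scalars
    field_simp
    ring

lemma pendulumStep_unstableColumn_sub_le (hq : 2 ≤ q) (hκ : 0 < κ) (hκ₁ : κ ≤ 1)
    (hi : i ∈ Set.Icc (cycleStart q) (cycleEnd q))
    (hεT : exp (-(2 * π * (cycleEnd q + 1))) ≤ ε) (hεN : exp (2 * π * cycleStart q) ≤ ε) :
    ‖pendulumStep κ i (unstableColumn q κ i)
      - (pendulumRate q κ i (i - cycleStart q + 1))⁻¹ • unstableColumn q κ (succPos q i)‖
      ≤ 52 * exp (2 * π) * q * ε := by
  have hε : 0 < ε := (exp_pos _).trans_le hεT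
  rw [unstableColumn, unstableColumn, map_smul, pendulumStep_unstableVec, pendulumRate, succPos,
    mul_inv, ← exp_neg, neg_neg]
  split_ifs with hend
  · have hT : (0 : ℝ) ≤ cycleEnd q + 1 := by
      exact_mod_cast add_nonneg (cycleEnd_nonneg (one_le_two.trans hq)) zero_le_one
    have hN : (0 : ℝ) < -cycleStart q := by exact_mod_cast neg_pos.2 (cycleStart_neg hq)
    have hsub := norm_unstableVec_sub_le hκ hκ₁ hT hN
    rw [neg_neg, mul_neg, neg_neg] at hsub
    have hsplit : (i - cycleStart q + 1 : ℝ) • exp (2 * π) • unstableVec κ (i + 1)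
        - (exp (2 * π) * (cycleFactor κ / q)⁻¹) • (cycleStart q - cycleStart q + 1 : ℝ)
          • unstableVec κ (cycleStart q)
        = (exp (2 * π) * q) • (unstableVec κ (cycleEnd q + 1)
          - (cycleFactor κ)⁻¹ • unstableVec κ (cycleStart q)) := by
      rw [hend, cast_cycleEnd, inv_div]
      match_scalars <;> ring
    rw [hsplit, norm_smul, norm_of_nonneg (by positivity)]
    calc _ ≤ exp (2 * π) * q * (44 * ε + 8 * ε) := by
          gcongr
          exact hsub.trans (by gcongr)
      _ = 52 * exp (2 * π) * q * ε := by ring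
  · have hle : (cycleStart q : ℝ) ≤ i := by exact_mod_cast hi.1
    have hd₁ : (i - cycleStart q + 1 : ℝ) ≠ 0 := by linarith
    have hd₂ : (i - cycleStart q + 1 + 1 : ℝ) ≠ 0 := by linarith
    rw [Int.cast_add, Int.cast_one]
    refine (norm_le_zero_iff.2 (sub_eq_zero.2 ?_)).trans (by positivity)
    match_scalars
    field_simp
    ring

lemma rotatorVec_cycleEnd_add_one (hq : 2 ≤ q) (hμ : μ ^ 2 - (2 + c) * μ + 1 = 0) :
    rotatorVec q c μ (cycleEnd q + 1) = μ • rotatorVec q c μ (cycleStart q) := by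
  have hstart : (cycleStart q : ℝ) = cycleEnd q + 1 - q := by rw [cast_cycleEnd]; ring
  rw [hstart]
  refine rotatorVec_eq_smul (by positivity) hμ ?_ ?_
  · exact_mod_cast add_nonneg (cycleEnd_nonneg (one_le_two.trans hq)) zero_le_one
  · rw [← hstart]
    exact_mod_cast cycleStart_neg hq

lemma rotatorStep_stableRotatorColumn (hq : 2 ≤ q) (hμ : μ ^ 2 - (2 + c) * μ + 1 = 0)
    (hi : i ∈ Set.Icc (cycleStart q) (cycleEnd q)) :
    rotatorStep (c / q) i (stableRotatorColumn q c μ i)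
      = rotatorRate q μ i (i - cycleStart q + 1) • stableRotatorColumn q c μ (succPos q i) := by
  have hq₀ : (0 : ℝ) < q := by positivity
  rw [stableRotatorColumn, stableRotatorColumn, map_smul, rotatorStep_rotatorVec, rotatorRate,
    succPos]
  split_ifs with hend
  · rw [hend, rotatorVec_cycleEnd_add_one hq hμ, cast_cycleEnd]
    match_scalars
    field_simp
    ring
  · have hle : (cycleStart q : ℝ) ≤ i := by exact_mod_cast hi.1
    have hd : (q + (i - cycleStart q + 1) : ℝ) ≠ 0 := by linarith
    rw [Int.cast_add, Int.cast_one]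
    match_scalars
    field_simp
    ring

lemma rotatorStep_unstableRotatorColumn (hq : 2 ≤ q) (hμ : μ ^ 2 - (2 + c) * μ + 1 = 0)
    (hμ₀ : μ ≠ 0) (hi : i ∈ Set.Icc (cycleStart q) (cycleEnd q)) :
    rotatorStep (c / q) i (unstableRotatorColumn q c μ i)
      = (rotatorRate q μ i (cycleEnd q - i))⁻¹ • unstableRotatorColumn q c μ (succPos q i) := by
  have hq₂ : (2 : ℝ) ≤ q := by exact_mod_cast hq
  rw [unstableRotatorColumn, unstableRotatorColumn, map_smul, rotatorStep_rotatorVec, rotatorRate,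
    succPos]
  split_ifs with hend
  · have hμ' : μ⁻¹ ^ 2 - (2 + c) * μ⁻¹ + 1 = 0 := by
      field_simp
      linear_combination hμ
    have hq₁ : (q * 2 - 1 : ℝ) ≠ 0 := by linarith
    rw [hend, rotatorVec_cycleEnd_add_one hq hμ', cast_cycleEnd]
    match_scalars
    field_simp
    ring
  · have hlt : (i + 1 : ℝ) ≤ cycleEnd q := by exact_mod_cast lt_of_le_of_ne hi.2 hend
    have hd₁ : (q + (cycleEnd q - i) : ℝ) ≠ 0 := by linarith
    have hd₂ : (q + (cycleEnd q - i) - 1 : ℝ) ≠ 0 := by linarith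
    rw [Int.cast_add, Int.cast_one]
    match_scalars
    field_simp
    ring

end AdaptedColumns

section AdaptedFrames

variable {q : ℕ} {κ c μ ε : ℝ} {i : ℤ}

lemma toEnd_add_one_mem_Icc (hi : i ∈ Set.Icc (cycleStart q) (cycleEnd q)) :
    (cycleEnd q - i + 1 : ℝ) ∈ Set.Icc (1 : ℝ) q := by
  have h₀ : (cycleStart q : ℝ) ≤ i := by exact_mod_cast hi.1
  have h₁ : (i : ℝ) ≤ cycleEnd q := by exact_mod_cast hi.2
  have hend := cast_cycleEnd q
  exact ⟨by linarith, by linarith⟩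

lemma fromStart_add_one_mem_Icc (hi : i ∈ Set.Icc (cycleStart q) (cycleEnd q)) :
    (i - cycleStart q + 1 : ℝ) ∈ Set.Icc (1 : ℝ) q := by
  have h₀ : (cycleStart q : ℝ) ≤ i := by exact_mod_cast hi.1
  have h₁ : (i : ℝ) ≤ cycleEnd q := by exact_mod_cast hi.2
  have hend := cast_cycleEnd q
  exact ⟨by linarith, by linarith⟩

lemma one_add_div_mem_Icc {x : ℝ} (hx : x + 1 ∈ Set.Icc (1 : ℝ) q) :
    1 + x / q ∈ Set.Icc (1 : ℝ) 2 := by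
  have hx₀ : 0 ≤ x := by linarith [hx.1]
  have hxq : x / q ≤ 1 := div_le_one_of_le₀ (by linarith [hx.2]) (Nat.cast_nonneg q)
  exact ⟨le_add_of_nonneg_right (by positivity), by linarith⟩

lemma norm_smul_le_of_mem_Icc {a b B : ℝ} {v : ℝ × ℝ} (ha : a ∈ Set.Icc 1 b) (hv : ‖v‖ ≤ B) :
    ‖a • v‖ ≤ b * B := by
  have ha₀ : 0 ≤ a := zero_le_one.trans ha.1
  rw [norm_smul, norm_of_nonneg ha₀]
  exact mul_le_mul ha.2 hv (norm_nonneg _) (ha₀.trans ha.2)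

lemma norm_stableColumn_le (hκ : |κ| ≤ 1) (hi : i ∈ Set.Icc (cycleStart q) (cycleEnd q)) :
    ‖stableColumn q κ i‖ ≤ 50 * q :=
  (norm_smul_le_of_mem_Icc (toEnd_add_one_mem_Icc hi) (norm_stableVec_le hκ)).trans
    (by linarith [Nat.cast_nonneg (α := ℝ) q])

lemma norm_unstableColumn_le (hκ : |κ| ≤ 1) (hi : i ∈ Set.Icc (cycleStart q) (cycleEnd q)) :
    ‖unstableColumn q κ i‖ ≤ 50 * q :=
  (norm_smul_le_of_mem_Icc (fromStart_add_one_mem_Icc hi) (norm_unstableVec_le hκ)).trans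
    (by linarith [Nat.cast_nonneg (α := ℝ) q])

lemma abs_cast_le_of_mem_Icc (hi : i ∈ Set.Icc (cycleStart q) (cycleEnd q)) : |(i : ℝ)| ≤ q := by
  have hi' : |i| ≤ q := by
    rw [Set.mem_Icc, cycleEnd, cycleStart] at hi
    rw [abs_le]
    omega
  exact_mod_cast hi'

lemma norm_stableRotatorColumn_le (hq : 1 ≤ q) (hc : |c| ≤ 11) (hμ : |μ| ≤ 10)
    (hi : i ∈ Set.Icc (cycleStart q) (cycleEnd q)) :
    ‖stableRotatorColumn q c μ i‖ ≤ 50 * q := by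
  have hq₁ : (1 : ℝ) ≤ q := by exact_mod_cast hq
  refine (norm_smul_le_of_mem_Icc (one_add_div_mem_Icc (fromStart_add_one_mem_Icc hi))
    (norm_rotatorVec_le hq₁ hc hμ (abs_cast_le_of_mem_Icc hi))).trans ?_
  linarith

lemma norm_unstableRotatorColumn_le (hq : 1 ≤ q) (hc : |c| ≤ 11) (hμ : |μ⁻¹| ≤ 10)
    (hi : i ∈ Set.Icc (cycleStart q) (cycleEnd q)) :
    ‖unstableRotatorColumn q c μ i‖ ≤ 50 * q := by
  have hq₁ : (1 : ℝ) ≤ q := by exact_mod_cast hq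
  refine (norm_smul_le_of_mem_Icc (one_add_div_mem_Icc (toEnd_add_one_mem_Icc hi))
    (norm_rotatorVec_le hq₁ hc hμ (abs_cast_le_of_mem_Icc hi))).trans ?_
  linarith

lemma le_abs_cross_smul_smul {a b D : ℝ} {v w : ℝ × ℝ} (ha : 1 ≤ a) (hb : 1 ≤ b)
    (hD : D ≤ |cross v w|) : D ≤ |cross (a • v) (b • w)| := by
  rw [cross_smul_smul, abs_mul, abs_of_nonneg (by positivity)]
  exact hD.trans (le_mul_of_one_le_left (abs_nonneg _) (one_le_mul_of_one_le_of_one_le ha hb))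

lemma cast_pos_of_four_le_mul (hκq : 4 ≤ κ * q) : (0 : ℝ) < q :=
  (Nat.cast_nonneg q).lt_of_ne fun h => by
    rw [← h, mul_zero] at hκq
    linarith

lemma inv_le_abs_cross_column (hκq : 4 ≤ κ * q)
    (hi : i ∈ Set.Icc (cycleStart q) (cycleEnd q)) :
    1 / (q : ℝ) ≤ |cross (stableColumn q κ i) (unstableColumn q κ i)| := by
  have hq : (0 : ℝ) < q := cast_pos_of_four_le_mul hκq
  have hκ : 0 ≤ κ := (pos_of_mul_pos_left (by linarith) hq.le).le
  refine le_abs_cross_smul_smul (toEnd_add_one_mem_Icc hi).1 (fromStart_add_one_mem_Icc hi).1 ?_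
  rw [cross_stableVec_unstableVec, abs_neg, abs_of_nonneg (by positivity), div_le_iff₀ hq]
  nlinarith [pi_gt_three]

lemma inv_le_abs_cross_rotatorColumn (hμ₀ : μ ≠ 0) (hμ : |μ| ≤ 1 / 4)
    (hi : i ∈ Set.Icc (cycleStart q) (cycleEnd q)) :
    1 / (q : ℝ) ≤ |cross (stableRotatorColumn q c μ i) (unstableRotatorColumn q c μ i)| := by
  refine le_abs_cross_smul_smul (one_add_div_mem_Icc (fromStart_add_one_mem_Icc hi)).1
    (one_add_div_mem_Icc (toEnd_add_one_mem_Icc hi)).1 ?_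
  have hinv : 4 ≤ |μ⁻¹| := by
    rw [abs_inv, le_inv_comm₀ (by norm_num) (abs_pos.2 hμ₀)]
    linarith
  rw [cross_rotatorVec, abs_div, Nat.abs_cast]
  gcongr
  linarith [abs_sub_abs_le_abs_sub μ⁻¹ μ]

lemma cross_column_ne_zero (hκq : 4 ≤ κ * q) (hi : i ∈ Set.Icc (cycleStart q) (cycleEnd q)) :
    cross (stableColumn q κ i) (unstableColumn q κ i) ≠ 0 := by
  have hq : (0 : ℝ) < q := cast_pos_of_four_le_mul hκq
  exact abs_pos.1 ((by positivity : (0 : ℝ) < 1 / q).trans_le (inv_le_abs_cross_column hκq hi))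

lemma cross_rotatorColumn_ne_zero (hq : (0 : ℝ) < q) (hμ₀ : μ ≠ 0) (hμ : |μ| ≤ 1 / 4)
    (hi : i ∈ Set.Icc (cycleStart q) (cycleEnd q)) :
    cross (stableRotatorColumn q c μ i) (unstableRotatorColumn q c μ i) ≠ 0 :=
  abs_pos.1 ((by positivity : (0 : ℝ) < 1 / q).trans_le
    (inv_le_abs_cross_rotatorColumn hμ₀ hμ hi))

lemma exp_two_pi_le : exp (2 * π) ≤ 1100 := by
  calc exp (2 * π) ≤ exp ((7 : ℕ) * 1) := exp_le_exp.2 (by norm_num; linarith [pi_lt_d2])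
    _ = exp 1 ^ 7 := exp_nat_mul 1 7
    _ ≤ 2.7182818286 ^ 7 := by gcongr; exact exp_one_lt_d9.le
    _ ≤ 1100 := by norm_num

/-- The contracting part of the linearised dynamics at position `i`, in the adapted columns. -/
def stableBlock (q : ℕ) (κ μ : ℝ) (i : ℤ) : (ℝ × ℝ) →L[ℝ] (ℝ × ℝ) :=
  diag (pendulumRate q κ i (cycleEnd q - i)) (rotatorRate q μ i (i - cycleStart q + 1))

/-- The inverse of the expanding part of the linearised dynamics at position `i`, in the adapted
columns. -/
def unstableBlockInv (q : ℕ) (κ μ : ℝ) (i : ℤ) : (ℝ × ℝ) →L[ℝ] (ℝ × ℝ) :=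
  diag (pendulumRate q κ i (i - cycleStart q + 1)) (rotatorRate q μ i (cycleEnd q - i))

/-- The expanding part of the linearised dynamics at position `i`, in the adapted columns. -/
def unstableBlock (q : ℕ) (κ μ : ℝ) (i : ℤ) : (ℝ × ℝ) →L[ℝ] (ℝ × ℝ) :=
  diag (pendulumRate q κ i (i - cycleStart q + 1))⁻¹ (rotatorRate q μ i (cycleEnd q - i))⁻¹

lemma eq_cycleEnd_or_one_le_sub (hi : i ∈ Set.Icc (cycleStart q) (cycleEnd q)) :
    i = cycleEnd q ∨ (1 : ℝ) ≤ cycleEnd q - i := by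
  refine hi.2.eq_or_lt.imp_right fun h => ?_
  have : (i : ℝ) + 1 ≤ cycleEnd q := by exact_mod_cast h
  linarith

lemma unstableBlock_unstableBlockInv (hq : 1 ≤ q) (hκ : 0 < κ) (hμ : μ ≠ 0)
    (hi : i ∈ Set.Icc (cycleStart q) (cycleEnd q)) (u : ℝ × ℝ) :
    unstableBlock q κ μ i (unstableBlockInv q κ μ i u) = u :=
  diag_inv_diag (pendulumRate_ne_zero hq hκ (.inr (fromStart_add_one_mem_Icc hi).1))
    (rotatorRate_ne_zero hq hμ (eq_cycleEnd_or_one_le_sub hi)) u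

lemma half_le_one_sub_inv (hq : 1 ≤ q) : (1 / 2 : ℝ) ≤ 1 - 1 / (2 * q) := by
  have hq₁ : (1 : ℝ) ≤ q := by exact_mod_cast hq
  have : 1 / (2 * q : ℝ) ≤ 1 / 2 := by gcongr; linarith
  linarith

lemma norm_stableBlock_le (hq : 1 ≤ q) (hκ : 0 < κ) (hκq : 4 ≤ κ * q) (hμ : |μ| ≤ 1 / 4)
    (hi : i ∈ Set.Icc (cycleStart q) (cycleEnd q)) :
    ‖stableBlock q κ μ i‖ ≤ 1 - 1 / (2 * q) :=
  norm_diag_le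
    ((abs_pendulumRate_le hκ hκq (eq_cycleEnd_or_one_le_sub hi)).trans (half_le_one_sub_inv hq))
    (abs_rotatorRate_le hq hμ (.inr (fromStart_add_one_mem_Icc hi).1)
      (fromStart_add_one_mem_Icc hi).2)

lemma norm_unstableBlockInv_le (hq : 1 ≤ q) (hκ : 0 < κ) (hκq : 4 ≤ κ * q) (hμ : |μ| ≤ 1 / 4)
    (hi : i ∈ Set.Icc (cycleStart q) (cycleEnd q)) :
    ‖unstableBlockInv q κ μ i‖ ≤ 1 - 1 / (2 * q) :=
  norm_diag_le
    ((abs_pendulumRate_le hκ hκq (.inr (fromStart_add_one_mem_Icc hi).1)).trans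
      (half_le_one_sub_inv hq))
    (abs_rotatorRate_le hq hμ (eq_cycleEnd_or_one_le_sub hi)
      (by linarith [(toEnd_add_one_mem_Icc hi).2]))

/-- The error is due to the pendulum block alone, since the rotator columns are transported
exactly. -/
lemma norm_step_frame_sub_le (hq : 2 ≤ q) (hκ₀ : 0 < κ) (hκ₁ : κ ≤ 1) (hκq : 4 ≤ κ * q)
    (hμ : μ ^ 2 - (2 + c) * μ + 1 = 0) (hμ₀ : μ ≠ 0)
    (hi : i ∈ Set.Icc (cycleStart q) (cycleEnd q))
    (hεT : exp (-(2 * π * (cycleEnd q + 1))) ≤ ε) (hεN : exp (2 * π * cycleStart q) ≤ ε)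
    (h : cross (stableColumn q κ i) (unstableColumn q κ i) ≠ 0)
    (h' : cross (stableRotatorColumn q c μ i) (unstableRotatorColumn q c μ i) ≠ 0)
    (k : cross (stableColumn q κ (succPos q i)) (unstableColumn q κ (succPos q i)) ≠ 0)
    (k' : cross (stableRotatorColumn q c μ (succPos q i))
      (unstableRotatorColumn q c μ (succPos q i)) ≠ 0) (z : (ℝ × ℝ) × (ℝ × ℝ)) :
    ‖(pendulumStep κ i).prodMap (rotatorStep (c / q) i) (frame _ _ _ _ h h' z)
      - frame _ _ _ _ k k' ((stableBlock q κ μ i).prodMap (unstableBlock q κ μ i) z)‖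
      ≤ 60000 * q * ε * ‖z‖ := by
  have hε : 0 < ε := (exp_pos _).trans_le hεT
  have hz : ‖(z.1.1, z.2.1)‖ ≤ ‖z‖ := norm_prod_le_iff.2
    ⟨(norm_fst_le z.1).trans (norm_fst_le z), (norm_fst_le z.2).trans (norm_snd_le z)⟩
  refine norm_prod_le_iff.2 ⟨?_, ?_⟩
  · refine (norm_map_columns_sub_le (pendulumStep κ i) (stableColumn q κ i) (unstableColumn q κ i)
      (stableColumn q κ (succPos q i)) (unstableColumn q κ (succPos q i)) _ _ z.1.1 z.2.1).trans ?_
    gcongr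
    calc _ ≤ 200 * q * ε + 52 * exp (2 * π) * q * ε := add_le_add
          (pendulumStep_stableColumn_sub_le hq hκ₀ hκq hi hεT hεN)
          (pendulumStep_unstableColumn_sub_le hq hκ₀ hκ₁ hi hεT hεN)
      _ ≤ 200 * q * ε + 52 * 1100 * q * ε := by gcongr; exact exp_two_pi_le
      _ ≤ 60000 * q * ε := by nlinarith [mul_nonneg (Nat.cast_nonneg (α := ℝ) q) hε.le]
  · refine (norm_map_columns_sub_le (rotatorStep (c / q) i) (stableRotatorColumn q c μ i)
      (unstableRotatorColumn q c μ i) (stableRotatorColumn q c μ (succPos q i))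
      (unstableRotatorColumn q c μ (succPos q i)) _ _ z.1.2 z.2.2).trans ?_
    rw [rotatorStep_stableRotatorColumn hq hμ hi, rotatorStep_unstableRotatorColumn hq hμ hμ₀ hi,
      sub_self, sub_self, norm_zero, add_zero, zero_mul]
    positivity

theorem exists_adapted_frames (hq : 2 ≤ q) (hκ₀ : 0 < κ) (hκ₁ : κ ≤ 1) (hκq : 4 ≤ κ * q)
    (hc : c ∈ Set.Icc (-11 : ℝ) (-10)) (hεT : exp (-(2 * π * (cycleEnd q + 1))) ≤ ε)
    (hεN : exp (2 * π * cycleStart q) ≤ ε) :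
    ∃ (M : ℤ → ((ℝ × ℝ) × (ℝ × ℝ)) ≃L[ℝ] Phase) (A B C : ℤ → (ℝ × ℝ) →L[ℝ] (ℝ × ℝ)),
      (∀ n, ‖A n‖ ≤ 1 - 1 / (2 * q)) ∧ (∀ n u, B n (C n u) = u) ∧
      (∀ n, ‖C n‖ ≤ 1 - 1 / (2 * q)) ∧ (∀ n x, ‖(M n).symm x‖ ≤ 100 * q ^ 2 * ‖x‖) ∧
      (∀ n z, ‖M n z‖ ≤ 100 * q * ‖z‖) ∧
      ∀ n z, ‖(pendulumStep κ (cyclePos q n)).prodMap (rotatorStep (c / q) (cyclePos q n)) (M n z)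
        - M (n + 1) ((A n).prodMap (B n) z)‖ ≤ 60000 * q * ε * ‖z‖ := by
  have hq₁ : 1 ≤ q := one_le_two.trans hq
  have hq₀ : (0 : ℝ) < q := by positivity
  have hκabs : |κ| ≤ 1 := by rwa [abs_of_pos hκ₀]
  have hcabs : |c| ≤ 11 := abs_le.2 ⟨hc.1, by linarith [hc.2]⟩
  obtain ⟨μ, hμ, hμ₀, hμ₁, hμinv⟩ := exists_rotator_multiplier hc
  have hpos := cyclePos_mem_Icc hq₁
  refine ⟨fun n => frame _ _ _ _ (cross_column_ne_zero hκq (hpos n))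
      (cross_rotatorColumn_ne_zero (c := c) hq₀ hμ₀ hμ₁ (hpos n)),
    fun n => stableBlock q κ μ (cyclePos q n), fun n => unstableBlock q κ μ (cyclePos q n),
    fun n => unstableBlockInv q κ μ (cyclePos q n),
    fun n => norm_stableBlock_le hq₁ hκ₀ hκq hμ₁ (hpos n),
    fun n => unstableBlock_unstableBlockInv hq₁ hκ₀ hμ₀ (hpos n),
    fun n => norm_unstableBlockInv_le hq₁ hκ₀ hκq hμ₁ (hpos n), fun n x => ?_, fun n z => ?_,
    fun n z => ?_⟩
  · refine (norm_frame_symm_le _ _ (norm_stableColumn_le hκabs (hpos n))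
      (norm_unstableColumn_le hκabs (hpos n))
      (norm_stableRotatorColumn_le hq₁ hcabs (by linarith) (hpos n))
      (norm_unstableRotatorColumn_le hq₁ hcabs hμinv (hpos n)) (by positivity)
      (inv_le_abs_cross_column hκq (hpos n))
      (inv_le_abs_cross_rotatorColumn hμ₀ hμ₁ (hpos n)) x).trans_eq ?_
    field_simp
    ring
  · refine (norm_frame_le _ _ (norm_stableColumn_le hκabs (hpos n))
      (norm_unstableColumn_le hκabs (hpos n))
      (norm_stableRotatorColumn_le hq₁ hcabs (by linarith) (hpos n))
      (norm_unstableRotatorColumn_le hq₁ hcabs hμinv (hpos n)) z).trans_eq ?_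
    ring
  · simp only [(cycle_add_one hq₁ n).2]
    exact norm_step_frame_sub_le hq hκ₀ hκ₁ hκq hμ hμ₀ (hpos n) hεT hεN _ _ _ _ z

end AdaptedFrames

/-! ### The kicked map along the pseudo-orbit -/

section KickedMap

/-- The lift to `Phase` of the time-one map of `q⁻¹ f_q`, for `f_q` of exponent `ν`. -/
def kick (q ν : ℕ) (z : Phase) : Phase := z + (q : ℝ)⁻¹ • kickField ν z

/-- The lift to `Phase` of the map `𝓕_q`. -/
def kickedMap (q ν : ℕ) (z : Phase) : Phase := kick q ν (starFlow 1 z)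

/-- The strength at `θ₁ = 1/2` of the kick on the pendulum, in units of `4π`. -/
def kickStrength (q ν : ℕ) : ℝ := ν * (2 + √3 / 2) / (4 * q)

/-- The linear part of the kick which follows position `i` of a cycle. -/
def kickStep (q ν : ℕ) (i : ℤ) : Phase →L[ℝ] Phase :=
  (impulse (if i + 1 = 0 then -(4 * π * kickStrength q ν) else 0)).prodMap
    (impulse (if i + 1 = 0 then -(2 * √3 * π) / q else 0))

variable {q ν : ℕ} {ε ρ : ℝ}

lemma kickStrength_pos (hν : 1 ≤ ν) (hνq : ν ≤ q) : 0 < kickStrength q ν := by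
  have hq₀ : (0 : ℝ) < q := by exact_mod_cast hν.trans hνq
  rw [kickStrength]
  positivity

lemma sqrt_three_mem_Icc : √3 ∈ Set.Icc (1.73 : ℝ) 1.733 :=
  ⟨le_sqrt_of_sq_le (by norm_num), sqrt_le_iff.2 (by norm_num)⟩

lemma kickStrength_le_one (hν : 1 ≤ ν) (hνq : ν ≤ q) : kickStrength q ν ≤ 1 := by
  have hq₀ : (0 : ℝ) < q := by exact_mod_cast hν.trans hνq
  have hνq' : (ν : ℝ) ≤ q := by exact_mod_cast hνq
  rw [kickStrength, div_le_one (by positivity)]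
  nlinarith [sqrt_three_mem_Icc.2]

lemma four_le_kickStrength_mul (hν : 6 ≤ ν) (hνq : ν ≤ q) : 4 ≤ kickStrength q ν * q := by
  have hq₀ : (0 : ℝ) < q := by exact_mod_cast (by omega : 0 < q)
  have hν' : (6 : ℝ) ≤ ν := by exact_mod_cast hν
  rw [kickStrength, div_mul_eq_mul_div, mul_div_mul_right _ _ hq₀.ne', le_div_iff₀ (by norm_num)]
  nlinarith [sqrt_three_mem_Icc.1]

lemma neg_two_sqrt_three_pi_mem_Icc : -(2 * √3 * π) ∈ Set.Icc (-11 : ℝ) (-10) := by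
  obtain ⟨h₀, h₁⟩ := sqrt_three_mem_Icc
  constructor <;> nlinarith [pi_gt_d2, pi_lt_d2]

lemma norm_kickStep_le (hν : 1 ≤ ν) (hνq : ν ≤ q) (i : ℤ) : ‖kickStep q ν i‖ ≤ 14 := by
  have hq₁ : (1 : ℝ) ≤ q := by exact_mod_cast hν.trans hνq
  have hrot : |-(2 * √3 * π) / q| ≤ 13 := by
    rw [abs_div, Nat.abs_cast, div_le_iff₀ (by positivity), abs_le]
    constructor <;> nlinarith [neg_two_sqrt_three_pi_mem_Icc.1, neg_two_sqrt_three_pi_mem_Icc.2]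
  have hpend : |-(4 * π * kickStrength q ν)| ≤ 13 := by
    have hpos := kickStrength_pos hν hνq
    rw [abs_neg, abs_of_pos (by positivity)]
    nlinarith [kickStrength_le_one hν hνq, pi_lt_d2, pi_pos]
  have himpulse {s : ℝ} (hs : |s| ≤ 13) : ‖impulse (if i + 1 = 0 then s else 0)‖ ≤ 14 := by
    refine (norm_impulse_le _).trans ?_
    split_ifs
    · linarith
    · norm_num
  exact ContinuousLinearMap.opNorm_le_bound _ (by norm_num) fun z => norm_prod_le_iff.2
    ⟨((impulse _).le_of_opNorm_le (himpulse hpend) z.1).trans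
      (mul_le_mul_of_nonneg_left (norm_fst_le z) (by norm_num)),
    ((impulse _).le_of_opNorm_le (himpulse hrot) z.2).trans
      (mul_le_mul_of_nonneg_left (norm_snd_le z) (by norm_num))⟩

lemma kickStep_of_add_one_eq_zero {i : ℤ} (hi : i + 1 = 0) (w : Phase) :
    kickStep q ν i w
      = w + (q : ℝ)⁻¹ • hessianMap (-(π * ν * (2 + √3 / 2))) 0 (-(2 * √3 * π)) w := by
  ext <;> simp [kickStep, hi, impulse_apply, hessianMap_apply, kickStrength] <;> ring

lemma kickStep_of_add_one_ne_zero {i : ℤ} (hi : i + 1 ≠ 0) (w : Phase) :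
    kickStep q ν i w = w := by
  ext <;> simp [kickStep, hi, impulse_apply]

lemma norm_kick_sub_sub_le (hν : 2 ≤ ν) (hνq : ν ≤ q) {z₀ z z' : Phase} (hz : ‖z - z₀‖ ≤ ρ)
    (hz' : ‖z' - z₀‖ ≤ ρ) :
    ‖kick q ν z - kick q ν z' - ((z - z') + (q : ℝ)⁻¹ • kickFieldDeriv ν z₀ (z - z'))‖
      ≤ 200 * q ^ 2 * ρ * ‖z - z'‖ := by
  have hq₀ : (0 : ℝ) < q := by exact_mod_cast (by omega : 0 < q)
  have hνq' : (ν : ℝ) ≤ q := by exact_mod_cast hνq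
  have hρ : 0 ≤ ρ := (norm_nonneg _).trans hz
  have htaylor := norm_sub_sub_le_of_lipschitz_fderiv (hasFDerivAt_kickField (by omega))
    (lipschitzWith_kickFieldDeriv hν) hz hz'
  have hsplit : kick q ν z - kick q ν z' - ((z - z') + (q : ℝ)⁻¹ • kickFieldDeriv ν z₀ (z - z'))
      = (q : ℝ)⁻¹ • (kickField ν z - kickField ν z' - kickFieldDeriv ν z₀ (z - z')) := by
    rw [kick, kick]
    module
  rw [hsplit, norm_smul, norm_inv, Real.norm_natCast]
  calc _ ≤ (q : ℝ)⁻¹ * (200 * q ^ 3 * ρ * ‖z - z'‖) := by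
        gcongr
        refine htaylor.trans ?_
        push_cast
        gcongr
    _ = 200 * q ^ 2 * ρ * ‖z - z'‖ := by field_simp

/-- The orbit of the unperturbed flow which runs along the `k`-th lift of the separatrix, with
action `J` and angle `y` of the rotator at time `0`. -/
def homoclinicOrbit (k : ℤ) (y J t : ℝ) : Phase :=
  (separatrix t + ((k : ℝ), 0), (y + t * J, J))

lemma starFlow_homoclinicOrbit (k : ℤ) (y J s t : ℝ) :
    starFlow t (homoclinicOrbit k y J s) = homoclinicOrbit k y J (s + t) := by
  have hcurve (t : ℝ) : HasDerivAt (fun t => homoclinicOrbit k y J (s + t))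
      (starField (homoclinicOrbit k y J (s + t))) t := by
    have hper := periodic_starField k 0 (separatrix (s + t), (y + (s + t) * J, J))
    simp only [Int.cast_zero, Prod.mk_add_mk, add_zero] at hper
    rw [homoclinicOrbit, hper]
    refine HasDerivAt.comp_const_add s t (f := homoclinicOrbit k y J) ?_
    exact ((hasDerivAt_separatrix (s + t)).add_const _).prodMk
      ((((hasDerivAt_id (s + t)).mul_const J).const_add y).prodMk (hasDerivAt_const (s + t) J)
        |>.congr_deriv (by simp))
  simpa using (isGlobalFlow_starFlow.eq_flow lipschitzWith_starField hcurve t).symm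

lemma exists_variationalSol_eq (t : ℝ) (x : ℝ × ℝ) : ∃ a b, variationalSol a b t = x := by
  have hcross : cross (variationalSol 1 0 t) (variationalSol 0 1 t) ≠ 0 := by
    rw [cross_variationalSol]
    simp [pi_ne_zero]
  have hsolve := (columns _ _ hcross).apply_symm_apply x
  refine ⟨((columns _ _ hcross).symm x).1, ((columns _ _ hcross).symm x).2, ?_⟩
  rw [variationalSol_eq_add]
  exact hsolve

lemma gronwallBound_forty_le : gronwallBound 0 40 1 1 ≤ exp 40 / 40 := by
  rw [gronwallBound_of_K_ne_0 (by norm_num)]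
  norm_num
  linarith

lemma hasDerivAt_linearized_homoclinicOrbit (k : ℤ) (y J a b θ I s t : ℝ) :
    HasDerivAt (fun t => ((variationalSol a b (s + t), (θ + t * I, I)) : Phase))
      (starFieldDeriv (starFlow t (homoclinicOrbit k y J s))
        (variationalSol a b (s + t), (θ + t * I, I))) t := by
  have hcos : 2 * π * (sepAngle (s + t) + k) = 2 * π * sepAngle (s + t) + k * (2 * π) := by ring
  have hval : starFieldDeriv (starFlow t (homoclinicOrbit k y J s))
      (variationalSol a b (s + t), (θ + t * I, I)) = ((((variationalSol a b (s + t)).2,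
      4 * π ^ 2 * cos (2 * π * sepAngle (s + t)) * (variationalSol a b (s + t)).1)), (I, 0)) := by
    rw [starFlow_homoclinicOrbit]
    simp only [homoclinicOrbit, starFieldDeriv_apply, separatrix, Prod.mk_add_mk, hcos,
      cos_add_int_mul_two_pi]
  rw [hval]
  exact ((hasDerivAt_variationalSol a b (s + t)).comp_const_add s t).prodMk
    ((((hasDerivAt_id t).mul_const I).const_add θ).prodMk (hasDerivAt_const t I)
      |>.congr_deriv (by simp))

lemma norm_starFlow_one_sub_sub_le (k : ℤ) (y J s : ℝ) {u u' : Phase} (hu : ‖u‖ ≤ ρ)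
    (hu' : ‖u'‖ ≤ ρ) :
    ‖starFlow 1 (homoclinicOrbit k y J s + u) - starFlow 1 (homoclinicOrbit k y J s + u')
      - (transition s).prodMap drift (u - u')‖ ≤ 8 * exp 40 ^ 3 * ρ * ‖u - u'‖ := by
  obtain ⟨a, b, hab⟩ := exists_variationalSol_eq s (u - u').1
  have hw0 : ((variationalSol a b (s + 0),
      ((u - u').2.1 + 0 * (u - u').2.2, (u - u').2.2)) : Phase) = u - u' := by
    rw [add_zero, hab, zero_mul, add_zero]
  have hw1 : ((variationalSol a b (s + 1),
      ((u - u').2.1 + 1 * (u - u').2.2, (u - u').2.2)) : Phase)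
      = (transition s).prodMap drift (u - u') := by
    change _ = (transition s (u - u').1, drift (u - u').2)
    rw [← hab, transition_variationalSol, drift_apply, one_mul]
  have hflow := isGlobalFlow_starFlow.norm_sub_sub_variational_le lipschitzWith_starField
    hasFDerivAt_starField lipschitzWith_starFieldDeriv hw0
    (hasDerivAt_linearized_homoclinicOrbit k y J a b _ _ s) zero_le_one hu hu'
  rw [hw1] at hflow
  refine hflow.trans ?_
  have hρ : 0 ≤ ρ := (norm_nonneg u).trans hu
  calc _ ≤ 320 * exp 40 ^ 2 * (exp 40 / 40) * ρ * ‖u - u'‖ := by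
        have := gronwallBound_forty_le
        push_cast
        rw [mul_one]
        gcongr
    _ = _ := by ring

end KickedMap

section PseudoOrbit

variable {q ν : ℕ} {ε ρ : ℝ}

lemma homoclinicOrbit_zero (k : ℤ) (y J : ℝ) :
    homoclinicOrbit k y J 0 = ((1 / 2 + (k : ℝ), 2), (y, J)) := by
  rw [homoclinicOrbit, separatrix_zero, zero_mul, add_zero, Prod.mk_add_mk, add_zero]

lemma abs_sin_pi_mul_homoclinicOrbit_le (k : ℤ) (y J : ℝ) {i : ℤ} (hi : i ≠ 0) :
    |sin (π * (homoclinicOrbit k y J i).1.1)| ≤ 1 / 8 := by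
  have hsin : |sin (π * (homoclinicOrbit k y J i).1.1)| = decayMode i := by
    change |sin (π * (sepAngle i + k))| = _
    rw [mul_add, mul_comm π (k : ℝ), sin_add_int_mul_pi, sin_pi_mul_sepAngle, abs_mul, abs_zpow,
      abs_neg, abs_one, one_zpow, one_mul, abs_of_pos (decayMode_pos _)]
  have habs : (1 : ℝ) ≤ |(i : ℝ)| := by exact_mod_cast Int.one_le_abs hi
  have hexp : exp (-(2 * π * |(i : ℝ)|)) ≤ 1 / 16 := by
    rw [exp_neg, inv_le_comm₀ (exp_pos _) (by norm_num)]
    calc (1 / 16 : ℝ)⁻¹ ≤ 2 ^ 6 := by norm_num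
      _ ≤ exp 1 ^ 6 := by gcongr; linarith [add_one_le_exp (1 : ℝ)]
      _ = exp 6 := by rw [← exp_nat_mul]; norm_num
      _ ≤ exp (2 * π * |(i : ℝ)|) := exp_le_exp.2 (by nlinarith [pi_gt_three])
  rw [hsin]
  linarith [decayMode_le i]

lemma norm_kick_sub_sub_kickStep_le (hν : 3 ≤ ν) (hνe : Even ν) (hνq : ν ≤ q)
    (hε : ((2 : ℝ) ^ ν)⁻¹ ≤ ε) (k j i : ℤ) (J : ℝ) {z z' : Phase}
    (hz : ‖z - homoclinicOrbit k j J (i + 1)‖ ≤ ρ)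
    (hz' : ‖z' - homoclinicOrbit k j J (i + 1)‖ ≤ ρ) :
    ‖kick q ν z - kick q ν z' - kickStep q ν i (z - z')‖
      ≤ (200 * q ^ 2 * ρ + 20 * q * ε) * ‖z - z'‖ := by
  have hq₀ : (0 : ℝ) < q := by exact_mod_cast (by omega : 0 < q)
  have hνq' : (ν : ℝ) ≤ q := by exact_mod_cast hνq
  have htaylor := norm_kick_sub_sub_le (by omega) hνq hz hz'
  rw [add_mul]
  by_cases hi : i + 1 = 0
  · have hi' : (i + 1 : ℝ) = 0 := by exact_mod_cast hi
    have hε₀ : 0 ≤ ε := le_trans (by positivity) hε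
    rw [hi', homoclinicOrbit_zero, kickFieldDeriv_centre hνe,
      ← kickStep_of_add_one_eq_zero hi] at htaylor
    exact htaylor.trans (le_add_of_nonneg_right (by positivity))
  · set z₀ := homoclinicOrbit k j J (i + 1)
    have hsin : |sin (π * z₀.1.1)| ≤ 1 / 8 := by
      simpa only [z₀, Int.cast_add, Int.cast_one] using abs_sin_pi_mul_homoclinicOrbit_le k j J hi
    rw [kickStep_of_add_one_ne_zero hi]
    calc _ ≤ _ := norm_sub_le_norm_sub_add_norm_sub _
          ((z - z') + (q : ℝ)⁻¹ • kickFieldDeriv ν z₀ (z - z')) _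
      _ ≤ 200 * q ^ 2 * ρ * ‖z - z'‖ + (q : ℝ)⁻¹ * (20 * q ^ 2 * ε * ‖z - z'‖) := by
          refine add_le_add htaylor ?_
          rw [add_sub_cancel_left, norm_smul, norm_inv, Real.norm_natCast]
          gcongr
          refine (kickFieldDeriv ν z₀).le_of_opNorm_le ?_ _
          exact (norm_kickFieldDeriv_le_of_abs_sin_le hν hsin).trans (by gcongr)
      _ = 200 * q ^ 2 * ρ * ‖z - z'‖ + 20 * q * ε * ‖z - z'‖ := by field_simp

lemma norm_starFlow_one_sub_le (z z' : Phase) :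
    ‖starFlow 1 z - starFlow 1 z'‖ ≤ exp 40 * ‖z - z'‖ := by
  simpa using isGlobalFlow_starFlow.norm_sub_le lipschitzWith_starField z z'
    (Set.right_mem_Icc.2 zero_le_one)

lemma norm_starFlow_one_homoclinicOrbit_add_sub_le (k j i : ℤ) (J : ℝ) {u : Phase}
    (hu : ‖u‖ ≤ ρ) :
    ‖starFlow 1 (homoclinicOrbit k j J i + u) - homoclinicOrbit k j J (i + 1)‖ ≤ exp 40 * ρ := by
  have h := norm_starFlow_one_sub_le (homoclinicOrbit k j J i + u) (homoclinicOrbit k j J i)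
  rw [starFlow_homoclinicOrbit, add_sub_cancel_left] at h
  exact h.trans (by gcongr)

lemma norm_kickedMap_sub_sub_le (hν : 3 ≤ ν) (hνe : Even ν) (hνq : ν ≤ q)
    (hε : ((2 : ℝ) ^ ν)⁻¹ ≤ ε) (k j i : ℤ) (J : ℝ) {u u' : Phase} (hu : ‖u‖ ≤ ρ) (hu' : ‖u'‖ ≤ ρ) :
    ‖kickedMap q ν (homoclinicOrbit k j J i + u) - kickedMap q ν (homoclinicOrbit k j J i + u')
      - (pendulumStep (kickStrength q ν) i).prodMap (rotatorStep (-(2 * √3 * π) / q) i) (u - u')‖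
      ≤ 500 * exp 40 ^ 3 * (q ^ 2 * ρ + q * ε) * ‖u - u'‖ := by
  set x := homoclinicOrbit k j J i
  have hρ : 0 ≤ ρ := (norm_nonneg u).trans hu
  have hε₀ : 0 ≤ ε := le_trans (by positivity) hε
  have hE : 1 ≤ exp 40 := one_le_exp (by norm_num)
  have hq₁ : (1 : ℝ) ≤ q := by exact_mod_cast (by omega : 1 ≤ q)
  have hdist : ‖starFlow 1 (x + u) - starFlow 1 (x + u')‖ ≤ exp 40 * ‖u - u'‖ := by
    simpa using norm_starFlow_one_sub_le (x + u) (x + u')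
  have hkick := norm_kick_sub_sub_kickStep_le hν hνe hνq hε k j i J
    (norm_starFlow_one_homoclinicOrbit_add_sub_le k j i J hu)
    (norm_starFlow_one_homoclinicOrbit_add_sub_le k j i J hu')
  have hflow := norm_starFlow_one_sub_sub_le k j J i hu hu'
  calc _ ≤ _ := norm_sub_le_norm_sub_add_norm_sub _
        (kickStep q ν i (starFlow 1 (x + u) - starFlow 1 (x + u'))) _
    _ ≤ (200 * q ^ 2 * (exp 40 * ρ) + 20 * q * ε) * (exp 40 * ‖u - u'‖)
        + 14 * (8 * exp 40 ^ 3 * ρ * ‖u - u'‖) := by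
        refine add_le_add (hkick.trans (by gcongr)) ?_
        have hcomp : (pendulumStep (kickStrength q ν) i).prodMap
            (rotatorStep (-(2 * √3 * π) / q) i) (u - u')
            = kickStep q ν i ((transition i).prodMap drift (u - u')) := rfl
        rw [hcomp, ← map_sub]
        exact (ContinuousLinearMap.le_of_opNorm_le _ (norm_kickStep_le (by omega) hνq i) _).trans
          (by gcongr)
    _ = (200 * exp 40 ^ 2 * (q ^ 2 * ρ) + 112 * exp 40 ^ 3 * (1 * ρ) + 20 * exp 40 * (q * ε))
        * ‖u - u'‖ := by ring
    _ ≤ (200 * exp 40 ^ 3 * (q ^ 2 * ρ) + 112 * exp 40 ^ 3 * (q ^ 2 * ρ)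
        + 20 * exp 40 ^ 3 * (q * ε)) * ‖u - u'‖ := by
        gcongr
        · norm_num
        · exact one_le_pow₀ hq₁
        · exact le_self_pow₀ hE (by norm_num)
    _ ≤ 500 * exp 40 ^ 3 * (q ^ 2 * ρ + q * ε) * ‖u - u'‖ := by
        gcongr
        have : 0 ≤ exp 40 ^ 3 * (q ^ 2 * ρ) := by positivity
        have : 0 ≤ exp 40 ^ 3 * (q * ε) := by positivity
        linarith

/-- The lift of `θ₂` at the centre of cycle `k`. -/
def driftAngle (k : ℤ) : ℤ := k * (k + 1) / 2

/-- The action `I₂` at position `i` of cycle `k`; the kick at position `0` raises it by `1/q`. -/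
def driftAction (q : ℕ) (k i : ℤ) : ℝ := (k + if 0 ≤ i then 1 else 0) / q

/-- The point at position `i` of cycle `k` of `pseudoOrbit`. -/
def cyclePoint (q : ℕ) (k i : ℤ) : Phase :=
  homoclinicOrbit k (driftAngle k) (driftAction q k i) i

/-- The approximate orbit of `kickedMap` which follows one turn of the separatrix in each cycle. -/
def pseudoOrbit (q : ℕ) (n : ℤ) : Phase := cyclePoint q (cycleIndex q n) (cyclePos q n)

lemma driftAngle_add_one (k : ℤ) : driftAngle (k + 1) = driftAngle k + (k + 1) := by
  rw [driftAngle, driftAngle, ← Int.add_mul_ediv_right _ _ two_ne_zero]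
  congr 1
  ring

lemma starFlow_one_cyclePoint (q : ℕ) (k i : ℤ) : starFlow 1 (cyclePoint q k i)
    = homoclinicOrbit k (driftAngle k) (driftAction q k i) (i + 1) :=
  starFlow_homoclinicOrbit ..

lemma kickedMap_cyclePoint_neg_one (hνe : Even ν) (k : ℤ) :
    kickedMap q ν (cyclePoint q k (-1)) = cyclePoint q k 0 := by
  have hzero : ((-1 : ℤ) : ℝ) + 1 = 0 := by norm_num
  rw [kickedMap, starFlow_one_cyclePoint, hzero, homoclinicOrbit_zero, kick, kickField_centre hνe,
    cyclePoint, Int.cast_zero, homoclinicOrbit_zero]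
  ext <;> simp [driftAction, add_div]

lemma norm_kickedMap_sub_starFlow_le (hν : 3 ≤ ν) (hνq : ν ≤ q) (hε : ((2 : ℝ) ^ ν)⁻¹ ≤ ε)
    {k i : ℤ} (hi : i + 1 ≠ 0) :
    ‖kickedMap q ν (cyclePoint q k i) - starFlow 1 (cyclePoint q k i)‖ ≤ 3 * ε := by
  have hq₀ : (0 : ℝ) < q := by exact_mod_cast (by omega : 0 < q)
  have hνq' : (ν : ℝ) ≤ q := by exact_mod_cast hνq
  have hsin := abs_sin_pi_mul_homoclinicOrbit_le k (driftAngle k) (driftAction q k i) hi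
  push_cast at hsin
  rw [← starFlow_one_cyclePoint] at hsin
  rw [kickedMap, kick, add_sub_cancel_left, norm_smul, norm_inv, Real.norm_natCast]
  calc _ ≤ (q : ℝ)⁻¹ * (3 * q * ε) := by
        gcongr
        exact (norm_kickField_le hν hsin).trans (by gcongr)
    _ = 3 * ε := by field_simp

lemma starFlow_one_cyclePoint_eq {k i : ℤ} (hi : i + 1 ≠ 0) :
    starFlow 1 (cyclePoint q k i) = cyclePoint q k (i + 1) := by
  have hsign : 0 ≤ i ↔ 0 ≤ i + 1 := by omega
  rw [starFlow_one_cyclePoint, cyclePoint, driftAction, driftAction, if_congr hsign rfl rfl]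
  push_cast
  rfl

lemma driftAction_of_nonneg {k i : ℤ} (hi : 0 ≤ i) : driftAction q k i = (k + 1) / q := by
  rw [driftAction, if_pos hi]

lemma driftAction_of_neg {k i : ℤ} (hi : i < 0) : driftAction q k i = k / q := by
  rw [driftAction, if_neg hi.not_ge, add_zero]

lemma norm_starFlow_one_cyclePoint_sub_le (hq : 2 ≤ q)
    (hεT : exp (-(2 * π * (cycleEnd q + 1))) ≤ ε) (hεN : exp (2 * π * cycleStart q) ≤ ε) (k : ℤ) :
    ‖starFlow 1 (cyclePoint q k (cycleEnd q)) - cyclePoint q (k + 1) (cycleStart q)‖ ≤ 4 * ε := by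
  have hε₀ : 0 ≤ ε := (exp_pos _).le.trans hεN
  have hq₀ : (q : ℝ) ≠ 0 := by positivity
  have hend : (0 : ℤ) ≤ cycleEnd q := cycleEnd_nonneg (one_le_two.trans hq)
  have hT : (0 : ℝ) ≤ cycleEnd q + 1 := by exact_mod_cast add_nonneg hend zero_le_one
  have hN : (cycleStart q : ℝ) < 0 := by exact_mod_cast cycleStart_neg hq
  have hdecayT := decayMode_le (cycleEnd q + 1)
  have hdecayN := decayMode_le (cycleStart q)
  rw [abs_of_nonneg hT] at hdecayT
  rw [abs_of_neg hN, mul_neg, neg_neg] at hdecayN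
  rw [starFlow_one_cyclePoint, cyclePoint, driftAction_of_nonneg hend,
    driftAction_of_neg (cycleStart_neg hq), phase_norm_le_iff]
  refine ⟨⟨?_, ?_⟩, ?_, ?_⟩
  · change |sepAngle (cycleEnd q + 1) + k - (sepAngle (cycleStart q) + (k + 1 : ℤ))| ≤ 4 * ε
    have hsum := sepAngle_add_sepAngle_neg (cycleEnd q + 1)
    have hangleT := sepAngle_le_exp (-(cycleEnd q + 1))
    rw [mul_neg] at hangleT
    rw [abs_le]
    push_cast
    constructor <;> linarith [sepAngle_nonneg (-(cycleEnd q + 1)), sepAngle_nonneg (cycleStart q),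
      sepAngle_le_exp (cycleStart q)]
  · change |2 * decayMode (cycleEnd q + 1) + 0 - (2 * decayMode (cycleStart q) + 0)| ≤ 4 * ε
    rw [abs_le]
    constructor <;> linarith [decayMode_pos (cycleEnd q + 1), decayMode_pos (cycleStart q)]
  · change |(driftAngle k : ℝ) + (cycleEnd q + 1) * ((k + 1) / q)
      - (driftAngle (k + 1) + cycleStart q * ((k + 1 : ℤ) / q))| ≤ 4 * ε
    rw [driftAngle_add_one, cast_cycleEnd]
    push_cast
    field_simp
    ring_nf
    simpa using hε₀
  · change |((k + 1) / q : ℝ) - (k + 1 : ℤ) / q| ≤ 4 * ε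
    push_cast
    rw [sub_self, abs_zero]
    positivity

lemma norm_kickedMap_pseudoOrbit_sub_le (hq : 2 ≤ q) (hν : 3 ≤ ν) (hνe : Even ν) (hνq : ν ≤ q)
    (hε : ((2 : ℝ) ^ ν)⁻¹ ≤ ε) (hεT : exp (-(2 * π * (cycleEnd q + 1))) ≤ ε)
    (hεN : exp (2 * π * cycleStart q) ≤ ε) (n : ℤ) :
    ‖kickedMap q ν (pseudoOrbit q n) - pseudoOrbit q (n + 1)‖ ≤ 10 * ε := by
  have hε₀ : 0 ≤ ε := (exp_pos _).le.trans hεN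
  obtain ⟨hindex, hpos⟩ := cycle_add_one (one_le_two.trans hq) n
  rw [pseudoOrbit, pseudoOrbit, hindex, hpos, succPos]
  set k := cycleIndex q n
  set i := cyclePos q n
  have hend : (0 : ℤ) ≤ cycleEnd q := cycleEnd_nonneg (one_le_two.trans hq)
  rcases eq_or_ne (i + 1) 0 with hi | hi
  · have hcentre : i = -1 := by omega
    rw [if_neg (by omega), if_neg (by omega), hi, hcentre, kickedMap_cyclePoint_neg_one hνe,
      sub_self, norm_zero]
    positivity
  · have hkick := norm_kickedMap_sub_starFlow_le hν hνq hε (k := k) hi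
    split_ifs with hlast
    · rw [hlast] at hkick ⊢
      have hjump := norm_starFlow_one_cyclePoint_sub_le hq hεT hεN k
      calc _ ≤ _ := norm_sub_le_norm_sub_add_norm_sub _ _ _
        _ ≤ 3 * ε + 4 * ε := add_le_add hkick hjump
        _ ≤ 10 * ε := by linarith
    · rw [starFlow_one_cyclePoint_eq hi] at hkick
      linarith

end PseudoOrbit

section LiftedOrbit

variable {q ν : ℕ}

lemma shadowing_contraction_le {E x : ℝ} (hE : 1 ≤ E) (hx : 24 * 10 ^ 8 * E ≤ x) :
    100 * x ^ 2 * (500 * E * (x ^ 2 * (100 * x * x⁻¹ ^ 8) + x * x⁻¹ ^ 20) * (100 * x)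
      + 60000 * x * x⁻¹ ^ 20) ≤ x⁻¹ / 4 := by
  have hx₀ : 0 < x := by linarith
  have hu₁ : x⁻¹ ≤ 1 := inv_le_one_of_one_le₀ (by linarith)
  have hEu : 24 * 10 ^ 8 * E * x⁻¹ ≤ 1 := by rwa [← div_eq_mul_inv, div_le_one hx₀]
  have h₁₆ : x⁻¹ ^ 16 ≤ x⁻¹ ^ 2 := pow_le_pow_of_le_one (by positivity) hu₁ (by norm_num)
  have h₁₇ : x⁻¹ ^ 17 ≤ x⁻¹ ^ 2 := pow_le_pow_of_le_one (by positivity) hu₁ (by norm_num)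
  calc _ = 5 * 10 ^ 8 * (E * x⁻¹ ^ 2) + 5 * 10 ^ 6 * (E * x⁻¹ ^ 16)
        + 6 * 10 ^ 6 * (1 * x⁻¹ ^ 17) := by
        field_simp
        ring
    _ ≤ 5 * 10 ^ 8 * (E * x⁻¹ ^ 2) + 5 * 10 ^ 6 * (E * x⁻¹ ^ 2)
        + 6 * 10 ^ 6 * (E * x⁻¹ ^ 2) := by
        gcongr
    _ ≤ 24 * 10 ^ 8 * E * x⁻¹ * (x⁻¹ / 4) := by
        have : 0 ≤ E * x⁻¹ ^ 2 := by positivity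
        linarith
    _ ≤ x⁻¹ / 4 := mul_le_of_le_one_left (by positivity) hEu

lemma shadowing_residual_le {x : ℝ} (hx : 4000 ≤ x) :
    100 * x ^ 2 * (10 * x⁻¹ ^ 20) ≤ x⁻¹ / 4 * x⁻¹ ^ 8 := by
  have hu₁ : x⁻¹ ≤ 1 := inv_le_one_of_one_le₀ (by linarith)
  calc 100 * x ^ 2 * (10 * x⁻¹ ^ 20) = 1000 * (x⁻¹ * (x⁻¹ ^ 9 * x⁻¹ ^ 8)) := by
        field_simp
        norm_num
    _ ≤ 1000 * (4000⁻¹ * (x⁻¹ * x⁻¹ ^ 8)) := by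
        gcongr
        exact pow_le_of_le_one (by positivity) hu₁ (by norm_num)
    _ = x⁻¹ / 4 * x⁻¹ ^ 8 := by ring

theorem exists_orbit_near_pseudoOrbit (hν : 6 ≤ ν) (hνe : Even ν) (hνq : ν ≤ q)
    (hq : 24 * 10 ^ 8 * exp 40 ^ 3 ≤ q) (hε : ((2 : ℝ) ^ ν)⁻¹ ≤ (q : ℝ)⁻¹ ^ 20)
    (hεT : exp (-(2 * π * (cycleEnd q + 1))) ≤ (q : ℝ)⁻¹ ^ 20)
    (hεN : exp (2 * π * cycleStart q) ≤ (q : ℝ)⁻¹ ^ 20) :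
    ∃ Z : ℤ → Phase, (∀ n, kickedMap q ν (Z n) = Z (n + 1)) ∧
      ∀ n, ‖Z n - pseudoOrbit q n‖ ≤ (q : ℝ)⁻¹ / 2 := by
  have hq₂ : 2 ≤ q := by omega
  have hE : 1 ≤ exp 40 ^ 3 := one_le_pow₀ (one_le_exp (by norm_num))
  have hu : 0 < (q : ℝ)⁻¹ := by positivity
  obtain ⟨M, A, B, C, hA, hBC, hC, hMsymm, hM, hstep⟩ := exists_adapted_frames hq₂
    (kickStrength_pos (by omega) hνq) (kickStrength_le_one (by omega) hνq)
    (four_le_kickStrength_mul hν hνq) neg_two_sqrt_three_pi_mem_Icc hεT hεN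
  have hcontr := shadowing_contraction_le hE hq
  have hgap : (q : ℝ)⁻¹ / 4 ≤ 1 - (1 - 1 / (2 * q)) - 100 * q ^ 2 * (500 * exp 40 ^ 3
      * (q ^ 2 * (100 * q * (q : ℝ)⁻¹ ^ 8) + q * (q : ℝ)⁻¹ ^ 20) * (100 * q)
      + 60000 * q * (q : ℝ)⁻¹ ^ 20) := by
    have : 1 / (2 * q : ℝ) = (q : ℝ)⁻¹ / 2 := by field_simp
    linarith
  obtain ⟨z, hz, horbit⟩ := exists_shadowing (F := fun _ => kickedMap q ν) (b := pseudoOrbit q)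
    (r := (q : ℝ)⁻¹ ^ 8) hA hBC hC hMsymm hM (by positivity) (by positivity) (by positivity)
    (by positivity) (by positivity)
    (fun n v v' hv hv' => norm_kickedMap_sub_sub_le (by omega) hνe hνq hε _ _ _ _ hv hv') hstep
    (norm_kickedMap_pseudoOrbit_sub_le hq₂ (by omega) hνe hνq hε hεT hεN) (by linarith)
    ((shadowing_residual_le (by linarith)).trans (by gcongr))
  refine ⟨fun n => pseudoOrbit q n + M n (z n), horbit, fun n => ?_⟩
  calc ‖pseudoOrbit q n + M n (z n) - pseudoOrbit q n‖ = ‖M n (z n)‖ := by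
        rw [add_sub_cancel_left]
    _ ≤ 100 * q * (q : ℝ)⁻¹ ^ 8 := (hM n _).trans (by gcongr; exact hz n)
    _ = 100 * ((q : ℝ)⁻¹ * (q : ℝ)⁻¹ ^ 6) := by field_simp
    _ ≤ 100 * ((q : ℝ)⁻¹ * 200⁻¹) := by
        have : (q : ℝ)⁻¹ ≤ 200⁻¹ := by gcongr; linarith
        gcongr
        exact (pow_le_of_le_one hu.le (by linarith) (by norm_num)).trans this
    _ = (q : ℝ)⁻¹ / 2 := by ring

lemma pseudoOrbit_mul (hq : 2 ≤ q) (k : ℤ) :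
    pseudoOrbit q (k * q)
      = ((1 / 2 + (k : ℝ), 2), ((driftAngle k : ℝ), ((k : ℝ) + 1) / q)) := by
  have hzero : (0 : ℤ) ∈ Set.Icc (cycleStart q) (cycleEnd q) :=
    ⟨(cycleStart_neg hq).le, cycleEnd_nonneg (one_le_two.trans hq)⟩
  obtain ⟨hindex, hpos⟩ := cycle_eq_of_mem_Icc hzero k
  rw [add_zero] at hindex hpos
  rw [pseudoOrbit, hindex, hpos, cyclePoint, Int.cast_zero, homoclinicOrbit_zero,
    driftAction_of_nonneg le_rfl]

lemma eventually_exp_neg_le_inv_pow (n : ℕ) :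
    ∀ᶠ q : ℕ in Filter.atTop, exp (-(q : ℝ)) ≤ (q : ℝ)⁻¹ ^ n := by
  have hlim := (tendsto_pow_mul_exp_neg_atTop_nhds_zero n).comp
    (tendsto_natCast_atTop_atTop (R := ℝ))
  filter_upwards [hlim.eventually_le_const zero_lt_one, Filter.eventually_gt_atTop 0] with q hq hq₀
  rwa [inv_pow, ← one_div, le_div_iff₀' (by positivity)]

theorem eventually_exists_orbit_near_centres : ∀ᶠ q : ℕ in Filter.atTop, ∀ ν, 6 ≤ ν → Even ν →
    ν ≤ q → ((2 : ℝ) ^ ν)⁻¹ ≤ (q : ℝ)⁻¹ ^ 20 →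
    ∃ Z : ℤ → Phase, (∀ n, kickedMap q ν (Z n) = Z (n + 1)) ∧
      ∀ k : ℤ, ‖Z (k * q) - ((1 / 2 + (k : ℝ), 2), ((driftAngle k : ℝ), ((k : ℝ) + 1) / q))‖
        ≤ (q : ℝ)⁻¹ / 2 := by
  filter_upwards [eventually_exp_neg_le_inv_pow 20,
    (tendsto_natCast_atTop_atTop (R := ℝ)).eventually_ge_atTop (24 * 10 ^ 8 * exp 40 ^ 3),
    Filter.eventually_ge_atTop 2] with q hexp hlarge hq ν hν hνe hνq hε
  have hlower : -(q : ℝ) ≤ 2 * cycleStart q := by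
    rw [cycleStart]
    exact_mod_cast (by omega : -(q : ℤ) ≤ 2 * -((q : ℤ) / 2))
  have hupper : (2 * cycleStart q : ℝ) ≤ 1 - q := by
    rw [cycleStart]
    exact_mod_cast (by omega : 2 * -((q : ℤ) / 2) ≤ 1 - q)
  have hq₂ : (2 : ℝ) ≤ q := by exact_mod_cast hq
  have hπ := pi_gt_three
  obtain ⟨Z, horbit, hnear⟩ := exists_orbit_near_pseudoOrbit hν hνe hνq hlarge hε
    ((exp_le_exp.2 (by rw [cast_cycleEnd]; nlinarith)).trans hexp)
    ((exp_le_exp.2 (by nlinarith)).trans hexp)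
  exact ⟨Z, horbit, fun k => pseudoOrbit_mul hq k ▸ hnear (k * q)⟩

end LiftedOrbit

/-! ### Projection to the annulus -/

section Circle

lemma rep_coe (x : ℝ) : rep (x : T1) = x - ⌊x⌋ := by
  rw [Int.self_sub_floor]
  exact (AddCircle.coe_equivIco_mk_apply (p := (1 : ℝ)) x).trans (by rw [div_one, mul_one])

lemma coe_rep (θ : T1) : ((rep θ : ℝ) : T1) = θ := (AddCircle.equivIco 1 0).symm_apply_apply θ

lemma coe_eq_coe_iff {x y : ℝ} : (x : T1) = y ↔ ∃ n : ℤ, x = y + n := by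
  rw [← sub_eq_zero, ← AddCircle.coe_sub, AddCircle.coe_eq_zero_iff]
  simp only [zsmul_eq_mul, mul_one, sub_eq_iff_eq_add', eq_comm]

lemma cosC_coe (x : ℝ) : cosC (x : T1) = cos (2 * π * x) := by
  rw [cosC, rep_coe, mul_sub, mul_comm (2 * π) (⌊x⌋ : ℝ), cos_sub_int_mul_two_pi]

lemma sin2C_coe (x : ℝ) : sin2C (x : T1) = sin (2 * π * x) := by
  rw [sin2C, rep_coe, mul_sub, mul_comm (2 * π) (⌊x⌋ : ℝ), sin_sub_int_mul_two_pi]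

lemma trigMonomial_add_int {m n : ℕ} (h : Even (m + n)) (x : ℝ) (k : ℤ) :
    trigMonomial m n (x + k) = trigMonomial m n x := by
  rw [trigMonomial, mul_add, mul_comm π (k : ℝ), sin_add_int_mul_pi, cos_add_int_mul_pi, mul_pow,
    mul_pow, mul_mul_mul_comm, ← pow_add, ← zpow_natCast, zpow_comm, zpow_natCast, h.neg_one_pow,
    one_zpow, one_mul, trigMonomial]

lemma sinHalf_coe_pow {ν : ℕ} (hν : Even ν) (x : ℝ) :
    sinHalf (x : T1) ^ ν = trigMonomial ν 0 x := by
  have h := trigMonomial_add_int (m := ν) (n := 0) hν (x - ⌊x⌋) ⌊x⌋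
  rw [sub_add_cancel] at h
  rw [sinHalf, rep_coe, h, trigMonomial, pow_zero, mul_one]

lemma dist_coe_le (x y : ℝ) (n : ℤ) : dist (x : T1) (y : T1) ≤ |x - (y + n)| := by
  rw [(coe_eq_coe_iff (x := y + n)).2 ⟨n, rfl⟩ |>.symm, dist_eq_norm, ← AddCircle.coe_sub,
    AddCircle.norm_eq]
  simpa using round_le (x - (y + n)) 0

end Circle

section Lift

open scoped NNReal

/-- The regrouping of the universal cover of `𝔸²` by degrees of freedom,
`((θ₁, I₁), (θ₂, I₂)) ↦ ((θ₁, θ₂), (I₁, I₂))`. -/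
def coverCoords : Phase ≃L[ℝ] (Fin 2 → ℝ) × (Fin 2 → ℝ) :=
  (ContinuousLinearEquiv.prodProdProdComm ℝ ℝ ℝ ℝ ℝ).trans
    ((ContinuousLinearEquiv.finTwoArrow ℝ ℝ).symm.prodCongr
      (ContinuousLinearEquiv.finTwoArrow ℝ ℝ).symm)

/-- The covering map from `Phase` onto `𝔸²`. -/
def toAnn (z : Phase) : Ann 2 := projAnn 2 (coverCoords z)

lemma coverCoords_apply (z : Phase) :
    coverCoords z = (![z.1.1, z.2.1], ![z.1.2, z.2.2]) := rfl

lemma toAnn_surjective : Function.Surjective toAnn := by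
  intro x
  refine ⟨coverCoords.symm (fun i => rep (x.1 i), x.2), ?_⟩
  rw [toAnn, ContinuousLinearEquiv.apply_symm_apply, projAnn]
  simp only [coe_rep]

lemma toAnn_eq_iff {z z' : Phase} :
    toAnn z = toAnn z' ↔ ∃ m n : ℤ, z = z' + (((m : ℝ), 0), ((n : ℝ), 0)) := by
  simp only [toAnn, projAnn, coverCoords_apply, Prod.ext_iff, funext_iff, Fin.forall_fin_two,
    Matrix.cons_val_zero, Matrix.cons_val_one, coe_eq_coe_iff, Prod.fst_add, Prod.snd_add, add_zero]
  constructor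
  · rintro ⟨⟨⟨m, hm⟩, n, hn⟩, h⟩
    exact ⟨m, n, ⟨hm, h.1⟩, hn, h.2⟩
  · rintro ⟨m, n, ⟨hm, h₁⟩, hn, h₂⟩
    exact ⟨⟨⟨m, hm⟩, n, hn⟩, h₁, h₂⟩

/-- `v` is the Hamiltonian vector field on `Phase` of the lift of `H`: pairing with `v` in the
symplectic form gives the differential of `H ∘ toAnn`. -/
def IsHamiltonianField (H : Ann 2 → ℝ) (v : Phase → Phase) : Prop :=
  ∀ z w, fderiv ℝ (H ∘ toAnn) z w =
    (v z).1.1 * w.1.2 - (v z).1.2 * w.1.1 + ((v z).2.1 * w.2.2 - (v z).2.2 * w.2.1)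

variable {H : Ann 2 → ℝ} {v : Phase → Phase} {φ : ℝ → Phase → Phase} {K : ℝ≥0}

lemma IsHamiltonianField.fderiv_comp_projAnn (hH : IsHamiltonianField H v) (z w : Phase) :
    fderiv ℝ (H ∘ projAnn 2) (coverCoords z) (coverCoords w) =
      (v z).1.1 * w.1.2 - (v z).1.2 * w.1.1 + ((v z).2.1 * w.2.2 - (v z).2.2 * w.2.1) := by
  rw [← hH]
  exact congrArg (· w) (coverCoords.comp_right_fderiv (f := H ∘ projAnn 2) (x := z)).symm

lemma hasDerivAt_phase_iff {γ : ℝ → Phase} {γ' : Phase} {t : ℝ} : HasDerivAt γ γ' t ↔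
    (HasDerivAt (fun s => (γ s).1.1) γ'.1.1 t ∧ HasDerivAt (fun s => (γ s).1.2) γ'.1.2 t) ∧
      HasDerivAt (fun s => (γ s).2.1) γ'.2.1 t ∧ HasDerivAt (fun s => (γ s).2.2) γ'.2.2 t := by
  refine ⟨fun h => ?_, fun ⟨⟨h₁, h₂⟩, h₃, h₄⟩ => (h₁.prodMk h₂).prodMk (h₃.prodMk h₄)⟩
  let fst := ContinuousLinearMap.fst ℝ ℝ ℝ
  let snd := ContinuousLinearMap.snd ℝ ℝ ℝ
  have h₁ := (ContinuousLinearMap.fst ℝ (ℝ × ℝ) (ℝ × ℝ)).hasFDerivAt.comp_hasDerivAt t h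
  have h₂ := (ContinuousLinearMap.snd ℝ (ℝ × ℝ) (ℝ × ℝ)).hasFDerivAt.comp_hasDerivAt t h
  exact ⟨⟨fst.hasFDerivAt.comp_hasDerivAt t h₁, snd.hasFDerivAt.comp_hasDerivAt t h₁⟩,
    fst.hasFDerivAt.comp_hasDerivAt t h₂, snd.hasFDerivAt.comp_hasDerivAt t h₂⟩

lemma IsHamiltonianField.hamilton_equations_iff (hH : IsHamiltonianField H v) {γ : ℝ → Phase}
    {t : ℝ} :
    (∀ i : Fin 2,
      HasDerivAt (fun s => (coverCoords (γ s)).1 i)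
        (fderiv ℝ (H ∘ projAnn 2) (coverCoords (γ t)) ((0 : Fin 2 → ℝ), Pi.single i 1)) t ∧
      HasDerivAt (fun s => (coverCoords (γ s)).2 i)
        (-(fderiv ℝ (H ∘ projAnn 2) (coverCoords (γ t)) (Pi.single i 1, (0 : Fin 2 → ℝ)))) t) ↔
      HasDerivAt γ (v (γ t)) t := by
  have hθ₁ : (Pi.single 0 1, 0) = coverCoords ((1, 0), 0) := by
    ext i <;> fin_cases i <;> rfl
  have hI₁ : (0, Pi.single 0 1) = coverCoords ((0, 1), 0) := by
    ext i <;> fin_cases i <;> rfl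
  have hθ₂ : (Pi.single 1 1, 0) = coverCoords (0, (1, 0)) := by
    ext i <;> fin_cases i <;> rfl
  have hI₂ : (0, Pi.single 1 1) = coverCoords (0, (0, 1)) := by
    ext i <;> fin_cases i <;> rfl
  rw [hasDerivAt_phase_iff, Fin.forall_fin_two, hθ₁, hI₁, hθ₂, hI₂]
  simp only [hH.fderiv_comp_projAnn]
  simp [coverCoords_apply]

lemma toAnn_flow_congr (hφ : IsGlobalFlow v φ) (hK : LipschitzWith K v)
    (hv : ∀ m n : ℤ, Function.Periodic v (((m : ℝ), 0), ((n : ℝ), 0))) (t : ℝ) {z z' : Phase}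
    (h : toAnn z = toAnn z') : toAnn (φ t z) = toAnn (φ t z') := by
  obtain ⟨m, n, rfl⟩ := toAnn_eq_iff.1 h
  exact toAnn_eq_iff.2 ⟨m, n, hφ.map_add_of_periodic hK (hv m n) t z'⟩

theorem exists_isHamFlow (hH : IsHamiltonianField H v) (hφ : IsGlobalFlow v φ)
    (hK : LipschitzWith K v)
    (hv : ∀ m n : ℤ, Function.Periodic v (((m : ℝ), 0), ((n : ℝ), 0))) :
    ∃ Φ, IsHamFlow 2 H Φ := by
  let lift := Function.surjInv toAnn_surjective
  have hlift : ∀ x, toAnn (lift x) = x := Function.surjInv_eq toAnn_surjective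
  refine ⟨fun t x => toAnn (φ t (lift x)), fun x => ?_, fun s t x => ?_,
    fun x => ⟨fun t => coverCoords (φ t (lift x)), fun t => rfl, fun t =>
      hH.hamilton_equations_iff.2 (hφ.hasDerivAt (lift x) t)⟩⟩
  · simp only [hφ.map_zero, hlift]
  · simp only [hφ.map_add hK]
    exact toAnn_flow_congr hφ hK hv s (hlift _).symm

theorem isHamFlow_toAnn (hH : IsHamiltonianField H v) (hφ : IsGlobalFlow v φ)
    (hK : LipschitzWith K v)
    (hv : ∀ m n : ℤ, Function.Periodic v (((m : ℝ), 0), ((n : ℝ), 0))) {Φ : ℝ → Ann 2 → Ann 2}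
    (hΦ : IsHamFlow 2 H Φ) (t : ℝ) (z : Phase) : Φ t (toAnn z) = toAnn (φ t z) := by
  obtain ⟨hzero, -, hcurve⟩ := hΦ
  obtain ⟨c, hc, hsol⟩ := hcurve (toAnn z)
  obtain ⟨γ, rfl⟩ : ∃ γ : ℝ → Phase, c = fun s => coverCoords (γ s) :=
    ⟨fun s => coverCoords.symm (c s), by simp⟩
  have hγ : γ t = φ t (γ 0) :=
    hφ.eq_flow hK (fun s => hH.hamilton_equations_iff.1 (hsol s)) t
  calc Φ t (toAnn z) = toAnn (φ t (γ 0)) := by rw [← hγ]; exact (hc t).symm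
    _ = toAnn (φ t z) := toAnn_flow_congr hφ hK hv t ((hc 0).trans (hzero _))

end Lift

section HamiltonianFields

variable {σ : ℝ} {q ν : ℕ}

lemma Hstar_toAnn (z : Phase) :
    Hstar (toAnn z) = 1 / 2 * (z.1.2 ^ 2 + z.2.2 ^ 2) + cos (2 * π * z.1.1) := by
  simp [Hstar, toAnn, projAnn, coverCoords_apply, cosC_coe]

lemma fqFun_toAnn (hν : Even (nuExp σ q)) (z : Phase) :
    fqFun σ q (toAnn z) = trigMonomial (nuExp σ q) 0 z.1.1 * (-π⁻¹ * wave z.2.1) := by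
  rw [fqFun, toAnn, projAnn, coverCoords_apply]
  simp only [Matrix.cons_val_zero, Matrix.cons_val_one, sinHalf_coe_pow hν, ← AddCircle.coe_add,
    sin2C_coe, wave]

lemma isHamiltonianField_starField : IsHamiltonianField Hstar starField := by
  intro z w
  have hθ : HasFDerivAt (fun z : Phase => z.1.1) _ z := (hasFDerivAt_fst (𝕜 := ℝ) (p := z)).fst
  have hI₁ : HasFDerivAt (fun z : Phase => z.1.2) _ z := (hasFDerivAt_fst (𝕜 := ℝ) (p := z)).snd
  have hI₂ : HasFDerivAt (fun z : Phase => z.2.2) _ z := (hasFDerivAt_snd (𝕜 := ℝ) (p := z)).snd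
  have hH : HasFDerivAt (Hstar ∘ toAnn) _ z :=
    ((((hI₁.pow 2).add (hI₂.pow 2)).const_mul (1 / 2)).add
      (hθ.const_mul (2 * π)).cos).congr_of_eventuallyEq (.of_forall Hstar_toAnn)
  rw [hH.fderiv]
  simp [starField]
  ring

lemma isHamiltonianField_smul_kickField (hν : Even (nuExp σ q)) :
    IsHamiltonianField (fun z => (q : ℝ)⁻¹ * fqFun σ q z)
      ((q : ℝ)⁻¹ • kickField (nuExp σ q)) := by
  intro z w
  have hx : HasFDerivAt (fun z : Phase => z.1.1) _ z := (hasFDerivAt_fst (𝕜 := ℝ) (p := z)).fst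
  have hy : HasFDerivAt (fun z : Phase => z.2.1) _ z := (hasFDerivAt_snd (𝕜 := ℝ) (p := z)).fst
  have hH : HasFDerivAt ((fun z => (q : ℝ)⁻¹ * fqFun σ q z) ∘ toAnn) _ z :=
    ((((hasDerivAt_bump (nuExp σ q) z.1.1).comp_hasFDerivAt z hx).mul
      (((hasDerivAt_wave z.2.1).comp_hasFDerivAt z hy).const_mul
        (-π⁻¹))).const_mul (q : ℝ)⁻¹).congr_of_eventuallyEq
          (.of_forall fun z => congrArg ((q : ℝ)⁻¹ * ·) (fqFun_toAnn hν z))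
  rw [hH.fderiv]
  simp [kickField]
  field_simp
  ring

lemma periodic_kickField (hν : Even ν) (hν₁ : 1 ≤ ν) (m n : ℤ) :
    Function.Periodic (kickField ν) (((m : ℝ), 0), ((n : ℝ), 0)) := by
  intro z
  have hangle : 2 * π * (z.2.1 + n + 6⁻¹) = 2 * π * (z.2.1 + 6⁻¹) + n * (2 * π) := by ring
  have hbump := trigMonomial_add_int (m := ν) (n := 0) hν z.1.1 m
  have hbump' := trigMonomial_add_int (m := ν - 1) (n := 1) (by rwa [Nat.sub_add_cancel hν₁])
    z.1.1 m
  simp [kickField, bumpDeriv, wave, waveDeriv, hangle, hbump, hbump', sin_add_int_mul_two_pi,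
    cos_add_int_mul_two_pi]

lemma lipschitzWith_smul_kickField (a : ℝ) (hν₁ : 1 ≤ ν) :
    LipschitzWith (‖a‖₊ * (20 * ν ^ 2)) (a • kickField ν) :=
  (lipschitzWith_smul a).comp (lipschitzWith_kickField hν₁)

lemma isGlobalFlow_smul_kickField (a : ℝ) (ν : ℕ) :
    IsGlobalFlow (a • kickField ν) fun t z => z + t • a • kickField ν z where
  map_zero z := by simp
  hasDerivAt z t := by
    have hangles : kickField ν (z + t • a • kickField ν z) = kickField ν z := by
      simp [kickField]
    simpa [hangles] using ((hasDerivAt_id t).smul_const (a • kickField ν z)).const_add z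

theorem exists_isHamFlow_Hstar : ∃ Φ, IsHamFlow 2 Hstar Φ :=
  exists_isHamFlow isHamiltonianField_starField isGlobalFlow_starFlow lipschitzWith_starField
    periodic_starField

theorem exists_isHamFlow_fqFun (hν : Even (nuExp σ q)) (hν₁ : 1 ≤ nuExp σ q) :
    ∃ Φ, IsHamFlow 2 (fun z => (q : ℝ)⁻¹ * fqFun σ q z) Φ :=
  exists_isHamFlow (isHamiltonianField_smul_kickField hν) (isGlobalFlow_smul_kickField _ _)
    (lipschitzWith_smul_kickField _ hν₁)
    fun m n => (periodic_kickField hν hν₁ m n).smul _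

theorem comp_isHamFlow_toAnn (hν : Even (nuExp σ q)) (hν₁ : 1 ≤ nuExp σ q)
    {Φs Φp : ℝ → Ann 2 → Ann 2} (hs : IsHamFlow 2 Hstar Φs)
    (hp : IsHamFlow 2 (fun z => (q : ℝ)⁻¹ * fqFun σ q z) Φp) (z : Phase) :
    (Φp 1 ∘ Φs 1) (toAnn z) = toAnn (kickedMap q (nuExp σ q) z) := by
  rw [Function.comp_apply, isHamFlow_toAnn isHamiltonianField_starField isGlobalFlow_starFlow
    lipschitzWith_starField periodic_starField hs, isHamFlow_toAnn
    (isHamiltonianField_smul_kickField hν) (isGlobalFlow_smul_kickField _ _)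
    (lipschitzWith_smul_kickField _ hν₁)
    (fun m n => (periodic_kickField hν hν₁ m n).smul _) hp, one_smul,
    kickedMap, kick]

end HamiltonianFields

/-! ### Choice of the width -/

section Parameters

variable {q : ℕ}

/-- The width `σ`, chosen so that `2 ^ ν(q, σ)` is of the order of `q ^ 20`. -/
def width : ℝ := log 2 / (40 * π)

/-- The constant `d`, chosen so that `d ^ ν(q, σ)` is at least half of `q⁻¹`. -/
def ratio : ℝ := exp (-(log 2 / 20))

lemma width_pos : 0 < width := by
  have := log_pos one_lt_two
  rw [width]
  positivity

lemma ratio_pos : 0 < ratio := exp_pos _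

lemma ratio_lt_one : ratio < 1 := exp_lt_one_iff.2 (by linarith [log_pos one_lt_two])

lemma even_nuExp (σ : ℝ) (q : ℕ) : Even (nuExp σ q) := even_two_mul _

lemma nuExp_width (q : ℕ) : nuExp width q = 2 * ⌊10 * (log q / log 2) + 1⌋₊ := by
  have := log_pos one_lt_two
  rw [nuExp, width]
  congr 3
  field_simp
  ring

lemma log_le_nuExp_mul (q : ℕ) : 20 * log q ≤ nuExp width q * log 2 := by
  have hfloor := Nat.lt_floor_add_one (10 * (log q / log 2) + 1)
  rw [nuExp_width, Nat.cast_mul, Nat.cast_two]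
  calc 20 * log q = 2 * (10 * (log q / log 2)) * log 2 := by field_simp; ring
    _ ≤ 2 * ⌊10 * (log q / log 2) + 1⌋₊ * log 2 := by gcongr; linarith

lemma nuExp_mul_le_log (q : ℕ) : nuExp width q * log 2 ≤ 20 * log q + 2 * log 2 := by
  rw [nuExp_width, Nat.cast_mul, Nat.cast_two]
  calc 2 * ⌊10 * (log q / log 2) + 1⌋₊ * log 2 ≤ 2 * (10 * (log q / log 2) + 1) * log 2 := by
        gcongr
        exact Nat.floor_le (by positivity)
    _ = 20 * log q + 2 * log 2 := by field_simp; ring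

lemma six_le_nuExp (hq : 2 ≤ q) : 6 ≤ nuExp width q := by
  have hlog2 := log_pos one_lt_two
  have hlog : log 2 ≤ log q := log_le_log two_pos (by exact_mod_cast hq)
  have hν : (6 : ℝ) ≤ nuExp width q := by nlinarith [log_le_nuExp_mul q]
  exact_mod_cast hν

lemma nuExp_le (hq : 10000 ≤ q) : nuExp width q ≤ q := by
  have hq' : (10000 : ℝ) ≤ q := by exact_mod_cast hq
  have hq₀ : (0 : ℝ) < q := by linarith
  have hlog : log q ≤ 2 * √q := by
    linarith [log_sqrt hq₀.le, log_le_sub_one_of_pos (sqrt_pos.2 hq₀)]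
  have hsqrt : 100 ≤ √(q : ℝ) := le_sqrt_of_sq_le (by linarith)
  have hmul : nuExp width q * log 2 ≤ q * log 2 := by
    nlinarith [nuExp_mul_le_log q, mul_self_sqrt hq₀.le, log_two_gt_d9]
  exact_mod_cast le_of_mul_le_mul_right hmul (log_pos one_lt_two)

lemma inv_two_pow_nuExp_le (hq : 1 ≤ q) : ((2 : ℝ) ^ nuExp width q)⁻¹ ≤ (q : ℝ)⁻¹ ^ 20 := by
  rw [inv_pow]
  refine inv_anti₀ (by positivity) ((log_le_log_iff (by positivity) (by positivity)).1 ?_)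
  rw [log_pow, log_pow]
  exact log_le_nuExp_mul q

lemma inv_half_le_ratio_pow (hq : 1 ≤ q) : (q : ℝ)⁻¹ / 2 ≤ ratio ^ nuExp width q := by
  have hq₀ : (0 : ℝ) < q := by exact_mod_cast hq
  calc (q : ℝ)⁻¹ / 2 = exp (-log q - log 2) := by
        rw [exp_sub, exp_neg, exp_log hq₀, exp_log two_pos]
    _ ≤ exp (nuExp width q * -(log 2 / 20)) :=
        exp_le_exp.2 (by nlinarith [nuExp_mul_le_log q, log_pos one_lt_two])
    _ = ratio ^ nuExp width q := exp_nat_mul _ _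

end Parameters

section ReferencePoints

variable {q : ℕ}

lemma dist_toAnn_xiPt_le {k j : ℤ} {z : Phase} {r : ℝ}
    (hz : ‖z - ((1 / 2 + (k : ℝ), 2), ((j : ℝ), ((k : ℝ) + 1) / q))‖ ≤ r) :
    dist (toAnn z) (xiPt q k) ≤ r := by
  obtain ⟨⟨hθ₁, hI₁⟩, hθ₂, hI₂⟩ := phase_norm_le_iff.1 hz
  replace hI₂ : |z.2.2 - (q : ℝ)⁻¹ * ((k : ℝ) + 1)| ≤ r := by rwa [← div_eq_inv_mul]
  have hr : 0 ≤ r := (norm_nonneg _).trans hz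
  refine max_le ((dist_pi_le_iff hr).2 ?_) ((dist_pi_le_iff hr).2 ?_)
  · exact Fin.forall_fin_two.2 ⟨(dist_coe_le _ (1 / 2) k).trans hθ₁,
      (dist_coe_le _ 0 j).trans ((zero_add (j : ℝ)).symm ▸ hθ₂)⟩
  · exact Fin.forall_fin_two.2 ⟨hI₁, hI₂⟩

lemma three_le_dist_xiPt (hq : 1 ≤ q) : 3 ≤ dist (xiPt q (3 * q)) (xiPt q 0) := by
  have hq₀ : (q : ℝ) ≠ 0 := by exact_mod_cast (by omega : q ≠ 0)
  calc (3 : ℝ) = dist ((xiPt q (3 * q)).2 1) ((xiPt q 0).2 1) := by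
        simp [xiPt, mul_add, mul_left_comm _ (3 : ℝ), hq₀]
    _ ≤ dist (xiPt q (3 * q)) (xiPt q 0) := (dist_le_pi_dist _ _ _).trans (le_max_right _ _)

lemma sub_le_dist_of_dist_le {X : Type*} [PseudoMetricSpace X] {x x' y y' : X} {ε D : ℝ}
    (hx : dist x x' ≤ ε) (hy : dist y y' ≤ ε) (hD : D ≤ dist x' y') : D - 2 * ε ≤ dist x y := by
  have := dist_triangle4 x' x y y'
  rw [dist_comm x' x] at this
  linarith

end ReferencePoints

theorem exists_orbit_shadowing_xiPt : ∀ᶠ q : ℕ in Filter.atTop, ∀ Φs Φp : ℝ → Ann 2 → Ann 2,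
    IsHamFlow 2 Hstar Φs → IsHamFlow 2 (fun z => (q : ℝ)⁻¹ * fqFun width q z) Φp →
    ∃ Z : ℤ → Ann 2, (∀ k, (Φp 1 ∘ Φs 1) (Z k) = Z (k + 1)) ∧
      ∀ k : ℤ, dist (Z (k * q)) (xiPt q k) ≤ (q : ℝ)⁻¹ / 2 := by
  filter_upwards [eventually_exists_orbit_near_centres, Filter.eventually_ge_atTop 10000]
    with q horbit hq Φs Φp hs hp
  have hν : 6 ≤ nuExp width q := six_le_nuExp (by omega)
  obtain ⟨Z, hZ, hnear⟩ := horbit (nuExp width q) hν (even_nuExp _ _) (nuExp_le hq)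
    (inv_two_pow_nuExp_le (by omega))
  refine ⟨fun k => toAnn (Z k), fun k => ?_, fun k => dist_toAnn_xiPt_le (hnear k)⟩
  rw [comp_isHamFlow_toAnn (even_nuExp _ _) (by omega) hs hp, hZ]

end LochakMarco

open LochakMarco

/-- The Lochak–Marco proposition: there are a width `σ > 0`, an integer `q₀` and a
constant `0 < d < 1` such that for all `q ≥ q₀` the map `𝓕_q = Φ^{q⁻¹f_q} ∘ 𝓕_*` has a
point `ζ_q` whose bi-infinite orbit shadows the wandering sequence `(ξ_{q,k})_{k∈ℤ}`:
`|𝓕_q^{kq}(ζ_q) − ξ_{q,k}| ≤ d^{ν(q,σ)}` for all `k ∈ ℤ`.  In particular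
`|𝓕_q^{3q²}(ζ_q) − ζ_q| ≥ 3 − 2d^{ν(q,σ)} ≥ 1`. -/
theorem lochak_marco :
    ∃ σ : ℝ, 0 < σ ∧ ∃ q₀ : ℕ, ∃ d : ℝ, 0 < d ∧ d < 1 ∧
      ∀ q : ℕ, q₀ ≤ q →
        (∃ Φs : ℝ → Ann 2 → Ann 2, IsHamFlow 2 Hstar Φs) ∧
        (∃ Φp : ℝ → Ann 2 → Ann 2,
          IsHamFlow 2 (fun z => (q : ℝ)⁻¹ * fqFun σ q z) Φp) ∧
        ∀ Φs : ℝ → Ann 2 → Ann 2, IsHamFlow 2 Hstar Φs →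
        ∀ Φp : ℝ → Ann 2 → Ann 2, IsHamFlow 2 (fun z => (q : ℝ)⁻¹ * fqFun σ q z) Φp →
          ∃ Z : ℤ → Ann 2,
            (∀ k : ℤ, (Φp 1 ∘ Φs 1) (Z k) = Z (k + 1)) ∧
            (∀ k : ℤ, dist (Z (k * q)) (xiPt q k) ≤ d ^ (nuExp σ q)) ∧
            1 ≤ 3 - 2 * d ^ (nuExp σ q) ∧
            3 - 2 * d ^ (nuExp σ q) ≤ dist (Z (3 * (q : ℤ) * q)) (Z 0) := by
  obtain ⟨Q, hQ⟩ := Filter.eventually_atTop.1 exists_orbit_shadowing_xiPt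
  refine ⟨width, width_pos, max Q 2, ratio, ratio_pos, ratio_lt_one, fun q hq => ?_⟩
  have hq₂ : 2 ≤ q := (le_max_right _ _).trans hq
  refine ⟨exists_isHamFlow_Hstar, exists_isHamFlow_fqFun (even_nuExp _ _)
    (by linarith [six_le_nuExp hq₂]), fun Φs hs Φp hp => ?_⟩
  obtain ⟨Z, horbit, hclose⟩ := hQ q ((le_max_left _ _).trans hq) Φs Φp hs hp
  have hshadow (k : ℤ) : dist (Z (k * q)) (xiPt q k) ≤ ratio ^ nuExp width q :=
    (hclose k).trans (inv_half_le_ratio_pow (by omega))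
  have hpow : ratio ^ nuExp width q ≤ 1 := pow_le_one₀ ratio_pos.le ratio_lt_one.le
  exact ⟨Z, horbit, hshadow, by linarith, sub_le_dist_of_dist_le (hshadow (3 * q))
    (by simpa using hshadow 0) (three_le_dist_xiPt (by omega))⟩
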